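/- arXiv:2407.03099 — 6 statements merged into one kernel-verified Lean document; each statement's English description precedes it below -/
import Mathlib

section
/- (Main result, discretized analog of the RH.) For every ε > 0 there exists a constant C > 0 such that for all integers n ≥ 1, (1/A_n) · Σ_{i=1}^{A_n} |θ_i| ≤ C·n^ε, where A_n := Σ_{k=1}^{n} φ(k), θ'_j := k̂(T^{j−1}(1/n, 1)) − 3 and θ_i := Σ_{j=1}^{i} θ'_j. (Note that (1/n, 1) lies in the Farey triangle Ω, so all iterates T^{j}(1/n,1) are defined.) -/
/-- The BCZ map `T(a,b) = (b, ⌊(1+a)/b⌋·b − a)`. -/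
noncomputable def bczT (p : ℝ × ℝ) : ℝ × ℝ :=
  (p.2, (⌊(1 + p.1) / p.2⌋ : ℝ) * p.2 - p.1)

/-- `k̂(a,b) = (⌊(1+a)/b⌋ + ⌊(1+b)/a⌋)/2`. -/
noncomputable def khat (p : ℝ × ℝ) : ℝ :=
  ((⌊(1 + p.1) / p.2⌋ : ℝ) + (⌊(1 + p.2) / p.1⌋ : ℝ)) / 2

/-- The Farey triangle Ω. -/
def fareyTriangle : Set (ℝ × ℝ) :=
  {p | 0 < p.1 ∧ p.1 ≤ 1 ∧ 0 < p.2 ∧ p.2 ≤ 1 ∧ 1 < p.1 + p.2}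

/-- An excursion of the BCZ map: points `p 0, …, p s` of Ω, consecutive under `T`,
with all intermediate x-coordinates larger than those of both endpoints. -/
def IsExcursion (p : ℕ → ℝ × ℝ) (s : ℕ) : Prop :=
  1 ≤ s ∧ (∀ i ≤ s, p i ∈ fareyTriangle) ∧
  (∀ i < s, p (i + 1) = bczT (p i)) ∧
  (∀ i, 0 < i → i < s → (p 0).1 < (p i).1 ∧ (p s).1 < (p i).1)

/-- The golden ratio area Δ of the moduli space of excursions. -/
noncomputable def goldenArea : Set (ℝ × ℝ) :=
  {p | 0 < p.1 ∧ p.1 ≤ 1 ∧ 0 < p.2 ∧ p.2 ≤ 1 ∧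
    (Real.sqrt 5 - 1) / 2 ≤ p.2 / p.1 ∧ p.2 / p.1 ≤ (Real.sqrt 5 + 1) / 2}

/-- `A_n = Σ_{k=1}^n φ(k)`, the number of Farey fractions in `(0,1]` of order `n`. -/
def fareyLen (n : ℕ) : ℕ := ∑ k ∈ Finset.Icc 1 n, Nat.totient k

/-! ### Sums over the Stern–Brocot tree -/

/-- Sum of `g` over the nodes of the Stern–Brocot subtree rooted at the pair of denominators
`(a,b)`, cut at denominators at most `n`. -/
def tr (n : ℕ) (g : ℕ → ℕ → ℕ) (a b : ℕ) : ℕ :=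
  if _h : 0 < a ∧ 0 < b ∧ a + b ≤ n then g a b + tr n g a (a + b) + tr n g (a + b) b else 0
termination_by n + 1 - (a + b)
decreasing_by all_goals omega

lemma tr_pos {n : ℕ} {g : ℕ → ℕ → ℕ} {a b : ℕ} (ha : 0 < a) (hb : 0 < b) (h : a + b ≤ n) :
    tr n g a b = g a b + tr n g a (a + b) + tr n g (a + b) b := by
  rw [tr, dif_pos ⟨ha, hb, h⟩]

lemma tr_neg {n : ℕ} {g : ℕ → ℕ → ℕ} {a b : ℕ} (h : n < a + b) :
    tr n g a b = 0 := by
  rw [tr, dif_neg (by omega)]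

/-- coprime pairs with sum at most `n` -/
def nodes (n : ℕ) : Finset (ℕ × ℕ) :=
  (Finset.Icc 1 n ×ˢ Finset.Icc 1 n).filter (fun p => Nat.Coprime p.1 p.2 ∧ p.1 + p.2 ≤ n)

lemma mem_nodes {n : ℕ} {p : ℕ × ℕ} :
    p ∈ nodes n ↔ 0 < p.1 ∧ 0 < p.2 ∧ Nat.Coprime p.1 p.2 ∧ p.1 + p.2 ≤ n := by
  simp only [nodes, Finset.mem_filter, Finset.mem_product, Finset.mem_Icc]
  constructor
  · rintro ⟨⟨⟨h1, h2⟩, h3, h4⟩, h5, h6⟩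
    exact ⟨h1, h3, h5, h6⟩
  · rintro ⟨h1, h2, h3, h4⟩
    exact ⟨⟨⟨h1, by omega⟩, h2, by omega⟩, h3, h4⟩

lemma sum_left (n : ℕ) (g : ℕ → ℕ → ℕ) :
    ∑ p ∈ nodes n, tr n g p.1 (p.1 + p.2) =
      ∑ p ∈ (nodes n).filter (fun p => p.1 < p.2), tr n g p.1 p.2 := by
  symm
  apply Finset.sum_bij_ne_zero (fun p _ _ => (p.1, p.2 - p.1))
  · rintro ⟨a, b⟩ h _
    simp only [Finset.mem_filter, mem_nodes] at h ⊢
    obtain ⟨⟨h1, h2, h3, h4⟩, h5⟩ := h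
    refine ⟨h1, by omega, ?_, by omega⟩
    rwa [Nat.coprime_sub_self_right h5.le]
  · rintro ⟨a, b⟩ h _ ⟨c, d⟩ h' _ e
    simp only [Finset.mem_filter, mem_nodes, Prod.mk.injEq] at h h' e ⊢
    omega
  · rintro ⟨a, b⟩ h hne
    rw [mem_nodes] at h
    simp only at h hne
    obtain ⟨h1, h2, h3, h4⟩ := h
    have h6 : a + (a + b) ≤ n := by
      by_contra hc
      exact hne (tr_neg (by omega))
    refine ⟨(a, a + b), ?_, hne, ?_⟩
    · simp only [Finset.mem_filter, mem_nodes]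
      refine ⟨⟨h1, by omega, ?_, h6⟩, by omega⟩
      simpa using h3
    · simp
  · rintro ⟨a, b⟩ h _
    simp only [Finset.mem_filter, mem_nodes] at h ⊢
    congr 1
    omega

lemma sum_right (n : ℕ) (g : ℕ → ℕ → ℕ) :
    ∑ p ∈ nodes n, tr n g (p.1 + p.2) p.2 =
      ∑ p ∈ (nodes n).filter (fun p => p.2 < p.1), tr n g p.1 p.2 := by
  symm
  apply Finset.sum_bij_ne_zero (fun p _ _ => (p.1 - p.2, p.2))
  · rintro ⟨a, b⟩ h _
    simp only [Finset.mem_filter, mem_nodes] at h ⊢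
    obtain ⟨⟨h1, h2, h3, h4⟩, h5⟩ := h
    refine ⟨by omega, h2, ?_, by omega⟩
    rwa [Nat.coprime_sub_self_left h5.le]
  · rintro ⟨a, b⟩ h _ ⟨c, d⟩ h' _ e
    simp only [Finset.mem_filter, mem_nodes, Prod.mk.injEq] at h h' e ⊢
    omega
  · rintro ⟨a, b⟩ h hne
    rw [mem_nodes] at h
    simp only at h hne
    obtain ⟨h1, h2, h3, h4⟩ := h
    have h6 : a + b + b ≤ n := by
      by_contra hc
      exact hne (tr_neg (by omega))
    refine ⟨(a + b, b), ?_, hne, ?_⟩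
    · simp only [Finset.mem_filter, mem_nodes]
      refine ⟨⟨by omega, h2, ?_, h6⟩, by omega⟩
      simpa using h3
    · simp
  · rintro ⟨a, b⟩ h _
    simp only [Finset.mem_filter, mem_nodes] at h ⊢
    congr 1
    omega

/-- The tree rooted at `(1,1)` runs exactly once through the coprime pairs. -/
lemma tr_one_one (n : ℕ) (g : ℕ → ℕ → ℕ) :
    tr n g 1 1 = ∑ p ∈ nodes n, g p.1 p.2 := by
  have h1 : ∑ p ∈ nodes n, tr n g p.1 p.2 = ∑ p ∈ nodes n, g p.1 p.2 +
      ∑ p ∈ nodes n, tr n g p.1 (p.1 + p.2) + ∑ p ∈ nodes n, tr n g (p.1 + p.2) p.2 := by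
    rw [← Finset.sum_add_distrib, ← Finset.sum_add_distrib]
    apply Finset.sum_congr rfl
    intro p hp
    rw [mem_nodes] at hp
    exact tr_pos hp.1 hp.2.1 hp.2.2.2
  have h2 : ∑ p ∈ nodes n, tr n g p.1 p.2 = tr n g 1 1 +
      ∑ p ∈ (nodes n).filter (fun p => p.1 < p.2), tr n g p.1 p.2 +
      ∑ p ∈ (nodes n).filter (fun p => p.2 < p.1), tr n g p.1 p.2 := by
    have e1 : tr n g 1 1 = ∑ p ∈ (nodes n).filter (fun p => p.1 = p.2), tr n g p.1 p.2 := by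
      by_cases hn : 2 ≤ n
      · have : (nodes n).filter (fun p => p.1 = p.2) = {(1, 1)} := by
          ext ⟨a, b⟩
          simp only [Finset.mem_filter, mem_nodes, Finset.mem_singleton, Prod.mk.injEq]
          constructor
          · rintro ⟨⟨h1, h2, h3, h4⟩, rfl⟩
            have := (Nat.coprime_self a).1 h3
            exact ⟨this, this⟩
          · rintro ⟨rfl, rfl⟩
            simpa using hn
        rw [this, Finset.sum_singleton]
      · rw [tr_neg (by omega)]
        symm
        apply Finset.sum_eq_zero
        intro p hp
        simp only [Finset.mem_filter, mem_nodes] at hp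
        omega
    rw [e1, Finset.sum_filter, Finset.sum_filter, Finset.sum_filter, ← Finset.sum_add_distrib,
      ← Finset.sum_add_distrib]
    apply Finset.sum_congr rfl
    intro p _
    rcases lt_trichotomy p.1 p.2 with h | h | h
    · simp [h, h.ne, h.not_gt]
    · simp [h]
    · simp [h, h.ne', h.not_gt]
  rw [sum_left, sum_right] at h1
  omega

/-- size of the subtree -/
def sz (n a b : ℕ) : ℕ := tr n (fun _ _ => 1) a b

lemma card_nodes (n : ℕ) (hn : 1 ≤ n) : (nodes n).card + 1 = fareyLen n := by
  have h1 : (nodes n).card = ∑ k ∈ Finset.Icc 2 n, Nat.totient k := by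
    rw [Finset.card_eq_sum_card_fiberwise (f := fun p : ℕ × ℕ => p.1 + p.2)
      (t := Finset.Icc 2 n)]
    · apply Finset.sum_congr rfl
      intro k hk
      rw [Finset.mem_Icc] at hk
      rw [Nat.totient_eq_card_coprime]
      apply Finset.card_bij (fun p _ => p.1)
      · rintro ⟨a, b⟩ h
        simp only [Finset.mem_filter, mem_nodes, Finset.mem_range] at h ⊢
        obtain ⟨⟨h1, h2, h3, h4⟩, rfl⟩ := h
        refine ⟨by omega, ?_⟩
        rw [Nat.coprime_comm]
        simpa using h3
      · rintro ⟨a, b⟩ h ⟨c, d⟩ h' e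
        simp only [Finset.mem_filter, mem_nodes, Prod.mk.injEq] at h h' e ⊢
        omega
      · intro a h
        simp only [Finset.mem_filter, Finset.mem_range] at h
        have ha : 0 < a := by
          rcases Nat.eq_zero_or_pos a with rfl | h0
          · have := (Nat.coprime_zero_right k).1 h.2
            omega
          · exact h0
        refine ⟨(a, k - a), ?_, rfl⟩
        simp only [Finset.mem_filter, mem_nodes]
        refine ⟨⟨ha, by omega, ?_, by omega⟩, by omega⟩
        rw [Nat.coprime_sub_self_right h.1.le]
        exact h.2.symm
    · intro p hp
      have := mem_nodes.1 (Finset.mem_coe.1 hp)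
      simp only [Finset.coe_Icc, Set.mem_Icc]
      omega
  have h2 : Finset.Icc 1 n = insert 1 (Finset.Icc 2 n) := by
    ext k
    simp only [Finset.mem_Icc, Finset.mem_insert]
    omega
  rw [fareyLen, h2, Finset.sum_insert (by simp), Nat.totient_one, h1, add_comm]

lemma sz_one_one (n : ℕ) (hn : 1 ≤ n) : sz n 1 1 + 1 = fareyLen n := by
  rw [← card_nodes n hn, sz, tr_one_one]
  simp

lemma sz_bound (n : ℕ) : ∀ k a b : ℕ, n + 1 - (a + b) ≤ k → 0 < a → 0 < b → a ≤ n → b ≤ n →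
    (sz n a b : ℝ) + 1 ≤ (n : ℝ) ^ 2 / (a * b) := by
  intro k
  induction k with
  | zero =>
    intro a b hk ha hb han hbn
    have : sz n a b = 0 := tr_neg (by omega)
    rw [this]
    have ha' : (0 : ℝ) < a := by exact_mod_cast ha
    have hb' : (0 : ℝ) < b := by exact_mod_cast hb
    rw [le_div_iff₀ (by positivity)]
    have h1 : (a : ℝ) ≤ n := by exact_mod_cast han
    have h2 : (b : ℝ) ≤ n := by exact_mod_cast hbn
    have := mul_le_mul h1 h2 hb'.le (by positivity)
    push_cast
    nlinarith
  | succ k ih =>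
    intro a b hk ha hb han hbn
    by_cases h : a + b ≤ n
    · have e : sz n a b = 1 + sz n a (a + b) + sz n (a + b) b := tr_pos ha hb h
      have h1 := ih a (a + b) (by omega) ha (by omega) han h
      have h2 := ih (a + b) b (by omega) (by omega) hb h hbn
      have ha' : (0 : ℝ) < a := by exact_mod_cast ha
      have hb' : (0 : ℝ) < b := by exact_mod_cast hb
      have e2 : (n : ℝ) ^ 2 / (a * b) = (n : ℝ) ^ 2 / (a * (a + b)) +
          (n : ℝ) ^ 2 / ((a + b) * b) := by
        field_simp
        ring
      rw [e, e2]
      push_cast at h1 h2 ⊢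
      linarith
    · exact ih a b (by omega) ha hb han hbn

/-- sum of the subtree sizes -/
def tsz (n a b : ℕ) : ℕ := tr n (sz n) a b

lemma tsz_bound (n : ℕ) :
    (tsz n 1 1 : ℝ) ≤ (n : ℝ) ^ 2 * (∑ a ∈ Finset.Icc 1 n, (a : ℝ)⁻¹) ^ 2 := by
  rw [tsz, tr_one_one]
  push_cast
  have e : (n : ℝ) ^ 2 * (∑ a ∈ Finset.Icc 1 n, (a : ℝ)⁻¹) ^ 2 =
      ∑ p ∈ Finset.Icc 1 n ×ˢ Finset.Icc 1 n, (n : ℝ) ^ 2 / (p.1 * p.2) := by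
    rw [Finset.sum_product, sq (∑ a ∈ Finset.Icc 1 n, (a : ℝ)⁻¹), Finset.sum_mul_sum,
      Finset.mul_sum]
    apply Finset.sum_congr rfl
    intro a _
    rw [Finset.mul_sum]
    apply Finset.sum_congr rfl
    intro b _
    rw [div_eq_mul_inv, mul_inv]
  rw [e]
  calc ∑ p ∈ nodes n, (sz n p.1 p.2 : ℝ)
      ≤ ∑ p ∈ nodes n, (n : ℝ) ^ 2 / (p.1 * p.2) := by
        apply Finset.sum_le_sum
        intro p hp
        rw [mem_nodes] at hp
        have := sz_bound n _ p.1 p.2 le_rfl hp.1 hp.2.1 (by omega) (by omega)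
        linarith
    _ ≤ _ := by
        apply Finset.sum_le_sum_of_subset_of_nonneg
        · exact Finset.filter_subset _ _
        · intro p _ _
          positivity

lemma fareyLen_lower (n : ℕ) : (n : ℝ) ^ 2 / 16 ≤ fareyLen n := by
  have h1 : ∑ k ∈ Finset.Ioc 0 n, k = ∑ d ∈ Finset.Ioc 0 n, Nat.totient d * (n / d) := by
    have : ∀ k ∈ Finset.Ioc 0 n,
        k = ∑ d ∈ Finset.Ioc 0 n, if d ∣ k then Nat.totient d else 0 := by
      intro k hk
      rw [Finset.mem_Ioc] at hk
      conv_lhs => rw [← Nat.sum_totient k]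
      rw [← Finset.sum_filter]
      apply Finset.sum_congr _ (fun _ _ => rfl)
      ext d
      simp only [Nat.mem_divisors, Finset.mem_filter, Finset.mem_Ioc]
      constructor
      · rintro ⟨h, _⟩
        exact ⟨⟨Nat.pos_of_dvd_of_pos h hk.1, (Nat.le_of_dvd hk.1 h).trans hk.2⟩, h⟩
      · rintro ⟨_, h⟩
        exact ⟨h, by omega⟩
    rw [Finset.sum_congr rfl this, Finset.sum_comm]
    apply Finset.sum_congr rfl
    intro d _
    rw [← Finset.sum_filter, Finset.sum_const, Nat.Ioc_filter_dvd_card_eq_div, smul_eq_mul,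
      mul_comm]
  have h2 : (n : ℝ) ^ 2 / 2 ≤ ∑ k ∈ Finset.Ioc 0 n, (k : ℝ) := by
    clear h1
    induction n with
    | zero => simp
    | succ m ih =>
      rw [← Finset.insert_Ioc_right_eq_Ioc_add_one (by omega), Finset.sum_insert (by simp)]
      push_cast
      nlinarith
  have hA : (fareyLen n : ℝ) = ∑ d ∈ Finset.Ioc 0 n, (Nat.totient d : ℝ) := by
    rw [fareyLen]
    push_cast
    rfl
  have h3 : (n : ℝ) ^ 2 / 2 ≤ ∑ d ∈ Finset.Ioc 0 n, (Nat.totient d : ℝ) * (n / d) := by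
    have h1' : ∑ k ∈ Finset.Ioc 0 n, (k : ℝ) =
        ∑ d ∈ Finset.Ioc 0 n, (Nat.totient d : ℝ) * ((n / d : ℕ) : ℝ) := by
      have h0 := congrArg (Nat.cast : ℕ → ℝ) h1
      simpa only [Nat.cast_sum, Nat.cast_mul] using h0
    refine h2.trans (h1'.le.trans ?_)
    apply Finset.sum_le_sum
    intro d _
    gcongr
    exact Nat.cast_div_le
  have h4 : ∑ d ∈ Finset.Ioc 0 n, (Nat.totient d : ℝ) * (n / d) ≤
      ∑ d ∈ Finset.Ioc 0 n, (4 * (Nat.totient d : ℝ) + if 4 * d ≤ n then (n : ℝ) else 0) := by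
    apply Finset.sum_le_sum
    intro d hd
    rw [Finset.mem_Ioc] at hd
    have hd' : (0 : ℝ) < d := by exact_mod_cast hd.1
    split_ifs with h
    · have : (Nat.totient d : ℝ) * (n / d) ≤ d * (n / d) := by
        gcongr
        exact Nat.totient_le d
      have e : (d : ℝ) * (n / d) = n := by field_simp
      have : (0 : ℝ) ≤ Nat.totient d := by positivity
      linarith
    · have : (n : ℝ) / d ≤ 4 := by
        rw [div_le_iff₀ hd']
        have : n ≤ 4 * d := by omega
        exact_mod_cast this
      have h0 : (0 : ℝ) ≤ Nat.totient d := by positivity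
      nlinarith
  rw [Finset.sum_add_distrib, ← Finset.mul_sum, ← hA, ← Finset.sum_filter, Finset.sum_const,
    nsmul_eq_mul] at h4
  have h5 : (((Finset.Ioc 0 n).filter (fun d => 4 * d ≤ n)).card : ℝ) ≤ (n : ℝ) / 4 := by
    have : ((Finset.Ioc 0 n).filter (fun d => 4 * d ≤ n)).card ≤ n / 4 := by
      calc _ ≤ (Finset.Ioc 0 (n / 4)).card := by
            apply Finset.card_le_card
            intro d hd
            simp only [Finset.mem_filter, Finset.mem_Ioc] at hd ⊢
            omega
        _ = n / 4 := by simp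
    calc (((Finset.Ioc 0 n).filter (fun d => 4 * d ≤ n)).card : ℝ) ≤ ((n / 4 : ℕ) : ℝ) := by
          exact_mod_cast this
      _ ≤ (n : ℝ) / (4 : ℕ) := Nat.cast_div_le
      _ = _ := by norm_num
  have hn0 : (0 : ℝ) ≤ n := by positivity
  have h6 := mul_le_mul_of_nonneg_right h5 hn0
  nlinarith

/-! ### The integer BCZ map -/

/-- BCZ map in integer coordinates -/
def tau (n : ℕ) (p : ℕ × ℕ) : ℕ × ℕ := (p.2, (n + p.1) / p.2 * p.2 - p.1)

/-- twice `k̂ - 3` in integer coordinates -/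
def ff (n : ℕ) (p : ℕ × ℕ) : ℤ := ((n + p.1) / p.2 : ℕ) + ((n + p.2) / p.1 : ℕ) - 6

/-- successor of `a` in the interval `(a,b)` -/
def fst' (n a b : ℕ) : ℕ := b + a * ((n - b) / a)

/-- partial sums along the orbit -/
def SS (n : ℕ) (p : ℕ × ℕ) (i : ℕ) : ℤ := ∑ j ∈ Finset.range i, ff n ((tau n)^[j] p)

/-- the sum over an interval of the tree -/
def Del (n a b : ℕ) : ℤ :=
  ((n + b) / a : ℕ) - ((n - b) / a : ℕ) + ((n + a) / b : ℕ) - ((n - a) / b : ℕ) - 6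

lemma SS_add (n : ℕ) (p : ℕ × ℕ) (i k : ℕ) :
    SS n p (i + k) = SS n p i + SS n ((tau n)^[i] p) k := by
  simp only [SS, Finset.sum_range_add]
  congr 1
  apply Finset.sum_congr rfl
  intro j _
  rw [← Function.iterate_add_apply, add_comm]

lemma div_sub_aux {n a b : ℕ} (ha : 0 < a) (h : a + b ≤ n) :
    (n - b) / a = (n - (a + b)) / a + 1 := by
  have : n - b = n - (a + b) + a := by omega
  rw [this, Nat.add_div_right _ ha]

lemma fst'_add {n a b : ℕ} (ha : 0 < a) (h : a + b ≤ n) :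
    fst' n a (a + b) = fst' n a b := by
  rw [fst', fst', div_sub_aux ha h]
  ring

lemma tau_mid {n a b : ℕ} (ha : 0 < a) (hb : 0 < b) (h : a + b ≤ n) :
    tau n (fst' n (a + b) a, a + b) = (a + b, fst' n (a + b) b) := by
  simp only [tau, fst', Prod.mk.injEq, true_and]
  have e1 : n + (a + (a + b) * ((n - a) / (a + b))) =
      (n - b) + (a + b) * ((n - a) / (a + b) + 1) := by
    rw [mul_add]; omega
  rw [e1, Nat.add_mul_div_left _ _ (by omega)]
  have e2 : ((n - b) / (a + b) + ((n - a) / (a + b) + 1)) * (a + b) =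
    (b + (a + b) * ((n - b) / (a + b))) + (a + (a + b) * ((n - a) / (a + b))) := by ring
  rw [e2, Nat.add_sub_cancel]

lemma Del_add {n a b : ℕ} (ha : 0 < a) (hb : 0 < b) (h : a + b ≤ n) :
    Del n a b = Del n a (a + b) + Del n (a + b) b := by
  have h1 := div_sub_aux ha h
  have h2 : (n - a) / b = (n - (a + b)) / b + 1 := by
    rw [add_comm a b]; exact div_sub_aux hb (by omega)
  have h3 : (n + (a + b)) / a = (n + b) / a + 1 := by
    rw [← Nat.add_div_right _ ha]; congr 1; omega
  have h4 : (n + (a + b)) / b = (n + a) / b + 1 := by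
    rw [← Nat.add_div_right _ hb]; congr 1; omega
  have h5 : (n + a) / (a + b) = (n - b) / (a + b) + 1 := by
    rw [← Nat.add_div_right _ (by omega)]; congr 1; omega
  have h6 : (n + b) / (a + b) = (n - a) / (a + b) + 1 := by
    rw [← Nat.add_div_right _ (by omega)]; congr 1; omega
  simp only [Del]
  rw [h1, h2, h3, h4, h5, h6]
  push_cast
  ring

lemma div_diff {n m a c : ℕ} (ha : 0 < a) (hm : m ≤ n) (h : 2 * m ≤ c * a) :
    ((n - m) / a : ℕ) ≤ (n + m) / a ∧ (n + m) / a ≤ (n - m) / a + c := by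
  constructor
  · exact Nat.div_le_div_right (by omega)
  · rw [← Nat.add_mul_div_right _ _ ha]
    exact Nat.div_le_div_right (by omega)

lemma Del_comm (n a b : ℕ) : Del n a b = Del n b a := by
  simp only [Del]; ring

lemma Del_bound {n a m : ℕ} (ha : 0 < a) (h1 : a ≤ m) (h2 : m ≤ 2 * a) (h3 : m ≤ n) :
    |Del n a m| ≤ 6 := by
  have e1 := div_diff (n := n) (m := m) (a := a) (c := 4) ha h3 (by omega)
  have e2 := div_diff (n := n) (m := a) (a := m) (c := 2) (by omega) (by omega) (by omega)
  simp only [Del]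
  rw [abs_le]
  omega

lemma main_ind (n : ℕ) : ∀ k a b : ℕ, n + 1 - (a + b) ≤ k → 0 < a → 0 < b → a ≤ n → b ≤ n →
    (tau n)^[sz n a b] (a, fst' n a b) = (fst' n b a, b) ∧
    SS n (a, fst' n a b) (sz n a b + 1) = Del n a b ∧
    ∀ s D : ℤ, |s| ≤ D → |s + Del n a b| ≤ D →
      ∑ i ∈ Finset.range (sz n a b), |s + SS n (a, fst' n a b) (i + 1)| ≤
        D * sz n a b + 6 * tsz n a b := by
  intro k
  induction k with
  | zero =>
    intro a b hk ha hb han hbn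
    have h0 : sz n a b = 0 := tr_neg (by omega)
    have h0' : tsz n a b = 0 := tr_neg (by omega)
    have e1 : (n - b) / a = 0 := Nat.div_eq_of_lt (by omega)
    have e2 : (n - a) / b = 0 := Nat.div_eq_of_lt (by omega)
    have e3 : fst' n a b = b := by rw [fst', e1]; simp
    have e4 : fst' n b a = a := by rw [fst', e2]; simp
    rw [h0, h0', e3, e4]
    refine ⟨rfl, ?_, ?_⟩
    · simp only [SS, Del, e1, e2, ff, zero_add, Finset.range_one, Finset.sum_singleton,
        Function.iterate_zero, id]
      push_cast
      ring
    · intro s D _ _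
      simp
  | succ k ih =>
    intro a b hk ha hb han hbn
    by_cases h : a + b ≤ n
    · have e : sz n a b = sz n a (a + b) + 1 + sz n (a + b) b := by
        have : sz n a b = 1 + sz n a (a + b) + sz n (a + b) b := tr_pos ha hb h
        omega
      have e' : tsz n a b = sz n a b + tsz n a (a + b) + tsz n (a + b) b := tr_pos ha hb h
      obtain ⟨A1, A2, A3⟩ := ih a (a + b) (by omega) ha (by omega) han h
      obtain ⟨B1, B2, B3⟩ := ih (a + b) b (by omega) (by omega) hb h hbn
      rw [fst'_add ha h] at A1 A2 A3
      have e3 : fst' n b (a + b) = fst' n b a := by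
        rw [add_comm]; exact fst'_add hb (by omega)
      rw [e3] at B1
      have hstep : (tau n)^[sz n a (a + b) + 1] (a, fst' n a b) = (a + b, fst' n (a + b) b) := by
        rw [Function.iterate_succ_apply', A1, tau_mid ha hb h]
      have hD := Del_add ha hb h
      refine ⟨?_, ?_, ?_⟩
      · rw [e, add_comm, Function.iterate_add_apply, hstep, B1]
      · rw [e, add_assoc, SS_add, hstep, A2, B2, hD]
      · intro s D hs hsD
        have hs' : |s + Del n a (a + b)| ≤ D + 6 := by
          rcases le_total a b with hab | hab
          · have hb1 := Del_bound (n := n) hb (by omega : b ≤ a + b) (by omega) h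
            rw [Del_comm] at hb1
            rw [abs_le] at *
            constructor <;> linarith
          · have hb1 := Del_bound (n := n) ha (by omega : a ≤ a + b) (by omega) h
            rw [abs_le] at *
            constructor <;> linarith
        have C1 := A3 s (D + 6) (by linarith) hs'
        have C2 := B3 (s + Del n a (a + b)) (D + 6) hs' (by
          rw [add_assoc, ← hD]; linarith)
        have e6 : ∀ i, s + SS n (a, fst' n a b) (sz n a (a + b) + 1 + i + 1) =
            s + Del n a (a + b) + SS n (a + b, fst' n (a + b) b) (i + 1) := by
          intro i
          rw [add_assoc _ i 1, SS_add, hstep, A2]; ring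
        rw [e', e, Finset.sum_range_add, Finset.sum_range_succ, A2]
        simp only [e6]
        push_cast
        linarith
    · exact ih a b (by omega) ha hb han hbn

lemma tau_real (n : ℕ) (hn : 0 < n) (p : ℕ × ℕ) (h1 : 0 < p.1) (h2 : 0 < p.2) (h3 : p.1 ≤ n)
    (h4 : p.2 ≤ n) :
    bczT ((p.1 : ℝ) / n, (p.2 : ℝ) / n) = (((tau n p).1 : ℝ) / n, ((tau n p).2 : ℝ) / n) ∧
    khat ((p.1 : ℝ) / n, (p.2 : ℝ) / n) - 3 = (ff n p : ℝ) / 2 := by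
  obtain ⟨a, b⟩ := p
  simp only at h1 h2 h3 h4
  have hn' : (0 : ℝ) < n := by exact_mod_cast hn
  have key : ∀ x y : ℕ, 0 < y → ⌊(1 + (x : ℝ) / n) / ((y : ℝ) / n)⌋ = (((n + x) / y : ℕ) : ℤ) := by
    intro x y hy
    have hy' : (0 : ℝ) < y := by exact_mod_cast hy
    have : (1 + (x : ℝ) / n) / ((y : ℝ) / n) = ((n + x : ℕ) : ℝ) / (y : ℕ) := by
      push_cast
      field_simp
    rw [this, ← Int.natCast_floor_eq_floor (by positivity), Nat.floor_div_eq_div]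
  constructor
  · simp only [bczT, tau, key a b h2, Prod.mk.injEq, true_and]
    have : a ≤ (n + a) / b * b := by
      have := Nat.div_add_mod (n + a) b
      have := Nat.mod_lt (n + a) h2
      rw [mul_comm]
      omega
    rw [Nat.cast_sub this]
    simp only [Int.cast_natCast, Nat.cast_mul]
    field_simp
  · simp only [khat, ff, key a b h2, key b a h1, Int.cast_sub, Int.cast_add, Int.cast_natCast,
      Int.cast_ofNat]
    ring

lemma tau_inv (n : ℕ) (p : ℕ × ℕ) (h2 : 0 < p.2) (h4 : p.2 ≤ n) :
    0 < (tau n p).1 ∧ 0 < (tau n p).2 ∧ (tau n p).1 ≤ n ∧ (tau n p).2 ≤ n := by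
  obtain ⟨a, b⟩ := p
  simp only [tau] at *
  have h5 := Nat.div_add_mod (n + a) b
  have h6 := Nat.mod_lt (n + a) h2
  rw [mul_comm] at h5
  omega

lemma orbit_real (n : ℕ) (hn : 0 < n) (j : ℕ) :
    (0 < ((tau n)^[j] (1, n)).1 ∧ 0 < ((tau n)^[j] (1, n)).2 ∧
      ((tau n)^[j] (1, n)).1 ≤ n ∧ ((tau n)^[j] (1, n)).2 ≤ n) ∧
    bczT^[j] (1 / (n : ℝ), 1) =
      ((((tau n)^[j] (1, n)).1 : ℝ) / n, (((tau n)^[j] (1, n)).2 : ℝ) / n) := by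
  induction j with
  | zero =>
    have hn' : (n : ℝ) ≠ 0 := by exact_mod_cast hn.ne'
    refine ⟨⟨one_pos, hn, hn, le_rfl⟩, ?_⟩
    simp [hn']
  | succ j ih =>
    obtain ⟨⟨h1, h2, h3, h4⟩, h5⟩ := ih
    rw [Function.iterate_succ_apply', Function.iterate_succ_apply', h5]
    exact ⟨tau_inv n _ h2 h4, (tau_real n hn _ h1 h2 h3 h4).1⟩

lemma theta_real (n : ℕ) (hn : 0 < n) (i : ℕ) :
    ∑ j ∈ Finset.range i, (khat (bczT^[j] (1 / (n : ℝ), 1)) - 3) = (SS n (1, n) i : ℝ) / 2 := by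
  rw [SS, Int.cast_sum, Finset.sum_div]
  apply Finset.sum_congr rfl
  intro j _
  obtain ⟨⟨h1, h2, h3, h4⟩, h5⟩ := orbit_real n hn j
  rw [h5]
  exact (tau_real n hn _ h1 h2 h3 h4).2

lemma theta_sum (n : ℕ) (hn : 0 < n) :
    ∑ i ∈ Finset.range (fareyLen n), |SS n (1, n) (i + 1)| ≤
      2 * (fareyLen n : ℤ) + 6 * tsz n 1 1 := by
  obtain ⟨_, h2, h3⟩ := main_ind n _ 1 1 le_rfl one_pos one_pos hn hn
  have e : fst' n 1 1 = n := by rw [fst', Nat.div_one]; omega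
  have hd : Del n 1 1 = -2 := by
    simp only [Del, Nat.div_one]
    omega
  rw [e] at h2 h3
  have h4 := h3 0 2 (by norm_num) (by rw [hd]; norm_num)
  simp only [zero_add] at h4
  rw [← sz_one_one n hn, Finset.sum_range_succ, h2, hd]
  push_cast
  norm_num
  linarith

lemma harm_bound (ε : ℝ) (hε : 0 < ε) (n : ℕ) (hn : 1 ≤ n) :
    (∑ a ∈ Finset.Icc 1 n, (a : ℝ)⁻¹) ^ 2 ≤ (1 + 2 / ε) ^ 2 * (n : ℝ) ^ ε := by
  have h1 : ∑ a ∈ Finset.Icc 1 n, (a : ℝ)⁻¹ ≤ 1 + Real.log n := by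
    have := harmonic_le_one_add_log n
    rw [harmonic_eq_sum_Icc] at this
    push_cast at this
    exact this
  have hn1 : (1 : ℝ) ≤ n := by exact_mod_cast hn
  have h2 : Real.log n ≤ (n : ℝ) ^ (ε / 2) / (ε / 2) :=
    Real.log_le_rpow_div (by positivity) (by positivity)
  have h3 : (1 : ℝ) ≤ (n : ℝ) ^ (ε / 2) := Real.one_le_rpow hn1 (by positivity)
  have h4 : ∑ a ∈ Finset.Icc 1 n, (a : ℝ)⁻¹ ≤ (1 + 2 / ε) * (n : ℝ) ^ (ε / 2) := by
    have e : (n : ℝ) ^ (ε / 2) / (ε / 2) = 2 / ε * (n : ℝ) ^ (ε / 2) := by field_simp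
    rw [e] at h2
    linarith
  have h0 : 0 ≤ ∑ a ∈ Finset.Icc 1 n, (a : ℝ)⁻¹ := Finset.sum_nonneg (fun _ _ => by positivity)
  calc (∑ a ∈ Finset.Icc 1 n, (a : ℝ)⁻¹) ^ 2 ≤ ((1 + 2 / ε) * (n : ℝ) ^ (ε / 2)) ^ 2 := by
        gcongr
    _ = (1 + 2 / ε) ^ 2 * (n : ℝ) ^ ε := by
        rw [mul_pow, ← Real.rpow_natCast ((n : ℝ) ^ (ε / 2)) 2, ← Real.rpow_mul (by positivity)]
        congr 2
        push_cast
        ring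

theorem discretized_analog_RH (ε : ℝ) (hε : 0 < ε) :
    ∃ C : ℝ, 0 < C ∧ ∀ n : ℕ, 1 ≤ n →
      (1 / (fareyLen n : ℝ)) *
        ∑ i ∈ Finset.Icc 1 (fareyLen n),
          |∑ j ∈ Finset.range i, (khat (bczT^[j] (1 / (n : ℝ), 1)) - 3)| ≤
        C * (n : ℝ) ^ ε := by
  refine ⟨1 + 48 * (1 + 2 / ε) ^ 2, by positivity, ?_⟩
  intro n hn
  have hn1 : (1 : ℝ) ≤ n := by exact_mod_cast hn
  have hA := fareyLen_lower n
  have hA0 : (0 : ℝ) < fareyLen n := by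
    have : (0 : ℝ) < (n : ℝ) ^ 2 / 16 := by positivity
    linarith
  have hS : ∑ i ∈ Finset.Icc 1 (fareyLen n),
      |∑ j ∈ Finset.range i, (khat (bczT^[j] (1 / (n : ℝ), 1)) - 3)| ≤
      fareyLen n + 3 * (tsz n 1 1 : ℝ) := by
    have e : ∑ i ∈ Finset.Icc 1 (fareyLen n),
        |∑ j ∈ Finset.range i, (khat (bczT^[j] (1 / (n : ℝ), 1)) - 3)| =
        ((∑ i ∈ Finset.range (fareyLen n), |SS n (1, n) (i + 1)| : ℤ) : ℝ) / 2 := by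
      rw [Finset.range_eq_Ico, Finset.sum_Ico_add' (fun i => |SS n (1, n) i|) 0 _ 1]
      push_cast
      rw [Finset.sum_div]
      apply Finset.sum_congr
      · ext i
        simp only [Finset.mem_Icc, Finset.mem_Ico]
        omega
      · intro i _
        rw [theta_real n hn, abs_div, abs_two]
    have h := theta_sum n hn
    have h' : ((∑ i ∈ Finset.range (fareyLen n), |SS n (1, n) (i + 1)| : ℤ) : ℝ) ≤
        2 * (fareyLen n : ℝ) + 6 * (tsz n 1 1 : ℝ) := by exact_mod_cast h
    rw [e]
    linarith
  have hT := tsz_bound n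
  have hH := harm_bound ε hε n hn
  have hp : (1 : ℝ) ≤ (n : ℝ) ^ ε := Real.one_le_rpow hn1 hε.le
  set H := (∑ a ∈ Finset.Icc 1 n, (a : ℝ)⁻¹) ^ 2 with hHdef
  have hH0 : 0 ≤ H := by positivity
  have h1 : (tsz n 1 1 : ℝ) ≤ 16 * fareyLen n * H := by
    refine hT.trans ?_
    apply mul_le_mul_of_nonneg_right _ hH0
    linarith
  rw [one_div, inv_mul_le_iff₀ hA0]
  have h2 : (fareyLen n : ℝ) * H ≤ fareyLen n * ((1 + 2 / ε) ^ 2 * (n : ℝ) ^ ε) :=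
    mul_le_mul_of_nonneg_left hH hA0.le
  have h3 : (fareyLen n : ℝ) * 1 ≤ fareyLen n * (n : ℝ) ^ ε :=
    mul_le_mul_of_nonneg_left hp hA0.le
  nlinarith
end

section
/- For every ε > 0 there exists a constant C > 0 such that for all integers n ≥ 1, Σ_{i=1}^{A_n} |θ_i| ≤ C·n^{2+ε}, where A_n := Σ_{k=1}^{n} φ(k), θ'_j := k̂(T^{j−1}(1/n, 1)) − 3 and θ_i := Σ_{j=1}^{i} θ'_j. -/
/-- signed subtractive Euclid depth -/
def bczW (a b : ℕ) : ℤ :=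
  if h : 0 < a ∧ 0 < b then
    if a < b then bczW a (b - a) + 1
    else if b < a then bczW (a - b) b - 1
    else 0
  else 0
termination_by a + b
decreasing_by all_goals omega

lemma bczW_lt {a c : ℕ} (ha : 0 < a) (hc : 0 < c) : bczW a (c + a) = bczW a c + 1 := by
  rw [bczW]
  rw [dif_pos ⟨ha, by omega⟩, if_pos (by omega)]
  congr 2; omega

lemma bczW_gt {a b : ℕ} (ha : 0 < a) (hb : 0 < b) : bczW (a + b) b = bczW a b - 1 := by
  rw [bczW]
  rw [dif_pos ⟨by omega, by omega⟩, if_neg (by omega), if_pos (by omega)]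
  congr 2; omega

lemma bczW_self (a : ℕ) : bczW a a = 0 := by
  rw [bczW]; split_ifs <;> simp_all

lemma bczW_one (m : ℕ) : bczW 1 (m + 1) = m := by
  induction m with
  | zero => simpa using bczW_self 1
  | succ k ih => rw [bczW_lt one_pos (by omega), ih]; push_cast; ring

lemma bczW_step (N : ℕ) : ∀ a b c k : ℕ, a + c ≤ N → 0 < a → 0 < b → 0 < c → Nat.Coprime a b →
    a + c = k * b →
    bczW b c - bczW a b = (k : ℤ) - 3 + (if b = 1 then 1 else 0) := by
  induction N with
  | zero => intros; omega
  | succ N ih =>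
    intro a b c k hN ha hb hc hab hk
    by_cases h1 : b < a
    · obtain ⟨a', rfl⟩ : ∃ a', a = a' + b := ⟨a - b, by omega⟩
      have hk0 : k ≠ 0 := by rintro rfl; omega
      obtain ⟨k', rfl⟩ := Nat.exists_eq_succ_of_ne_zero hk0
      have := ih a' b c k' (by omega) (by omega) hb hc (by simpa using hab)
        (by rw [Nat.succ_mul] at hk; omega)
      rw [bczW_gt (by omega) hb]
      push_cast; linarith
    by_cases h2 : b < c
    · obtain ⟨c', rfl⟩ : ∃ a', c = a' + b := ⟨c - b, by omega⟩
      have hk0 : k ≠ 0 := by rintro rfl; omega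
      obtain ⟨k', rfl⟩ := Nat.exists_eq_succ_of_ne_zero hk0
      have := ih a b c' k' (by omega) (by omega) hb (by omega) hab
        (by rw [Nat.succ_mul] at hk; omega)
      rw [bczW_lt hb (by omega)]
      push_cast; linarith
    by_cases h3 : b = 1
    · subst h3
      have : a = 1 := by omega
      have : c = 1 := by omega
      subst a c
      have : k = 2 := by omega
      subst k
      simp
    have hab' : a ≠ b := by
      rintro rfl
      simp at hab; omega
    have hk1 : k = 1 := by
      have hk2 : k < 2 := by
        by_contra hcon
        have : 2 * b ≤ k * b := Nat.mul_le_mul_right _ (by omega)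
        omega
      have : k ≠ 0 := by rintro rfl; omega
      omega
    subst hk1
    rw [one_mul] at hk
    subst hk
    have e1 := bczW_gt ha hc
    have e2 := bczW_lt ha hc
    rw [add_comm c a] at e2
    rw [e1, e2, if_neg h3]; push_cast; ring

def ancRel (a b x y : ℕ) : Prop :=
  ∃ α β γ δ : ℕ, α * δ = β * γ + 1 ∧ a = x * α + y * γ ∧ b = x * β + y * δ

open Classical in
noncomputable def ancSet (n a b : ℕ) : Finset (ℕ × ℕ) :=
  (Finset.Icc 1 n ×ˢ Finset.Icc 1 n).filter (fun p => ancRel a b p.1 p.2)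

lemma ancRel_self (a b : ℕ) : ancRel a b a b := ⟨1, 0, 0, 1, by simp⟩

lemma ancRel_le {a b x y : ℕ} (h : ancRel a b x y) : x ≤ a ∧ y ≤ b := by
  obtain ⟨α, β, γ, δ, h1, rfl, rfl⟩ := h
  have h0 : 0 < α * δ := by omega
  have hα : 0 < α := Nat.pos_of_mul_pos_right h0
  have hδ : 0 < δ := Nat.pos_of_mul_pos_left h0
  constructor <;> nlinarith [Nat.zero_le (y * γ), Nat.zero_le (x * β)]

lemma ancRel_lt {a b x y : ℕ} (h : ancRel a b x y) : ancRel a (b + a) x y := by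
  obtain ⟨α, β, γ, δ, h1, rfl, rfl⟩ := h
  exact ⟨α, α + β, γ, γ + δ, by linarith, rfl, by ring⟩

lemma ancRel_gt {a b x y : ℕ} (h : ancRel a b x y) : ancRel (a + b) b x y := by
  obtain ⟨α, β, γ, δ, h1, rfl, rfl⟩ := h
  exact ⟨α + β, β, γ + δ, δ, by linarith, by ring, rfl⟩

open Classical in
lemma abs_bczW_le (n N : ℕ) : ∀ a b : ℕ, a + b ≤ N → 0 < a → 0 < b → a ≤ n → b ≤ n →
    |bczW a b| + 1 ≤ ((ancSet n a b).card : ℤ) := by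
  induction N with
  | zero => intros; omega
  | succ N ih =>
    intro a b hN ha hb han hbn
    have key : ∀ a' b' : ℕ, a' + b' < a + b → (∀ x y, ancRel a' b' x y → ancRel a b x y) →
        ((ancSet n a' b').card : ℤ) + 1 ≤ (ancSet n a b).card := by
      intro a' b' hlt himp
      have hnot : (a, b) ∉ ancSet n a' b' := by
        intro hmem
        have := ancRel_le (Finset.mem_filter.1 hmem).2
        simp at this; omega
      rw [← Nat.cast_succ, Nat.cast_le, Nat.succ_eq_add_one, ← Finset.card_insert_of_notMem hnot]
      apply Finset.card_le_card
      intro p hp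
      rcases Finset.mem_insert.1 hp with rfl | hp
      · exact Finset.mem_filter.2 ⟨by simp; omega, ancRel_self _ _⟩
      · exact Finset.mem_filter.2 ⟨(Finset.mem_filter.1 hp).1, himp _ _ (Finset.mem_filter.1 hp).2⟩
    rcases lt_trichotomy a b with h | h | h
    · obtain ⟨c, rfl⟩ : ∃ c, b = c + a := ⟨b - a, by omega⟩
      have := ih a c (by omega) ha (by omega) han (by omega)
      have k := key a c (by omega) (fun x y => ancRel_lt)
      rw [bczW_lt ha (by omega)]
      have := abs_add_le (bczW a c) 1
      rw [abs_one] at this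
      omega
    · subst h
      rw [bczW_self]
      have : 0 < (ancSet n a a).card :=
        Finset.card_pos.2 ⟨(a, a), Finset.mem_filter.2 ⟨by simp; omega, ancRel_self _ _⟩⟩
      rw [abs_zero]; omega
    · obtain ⟨c, rfl⟩ : ∃ c, a = c + b := ⟨a - b, by omega⟩
      have := ih c b (by omega) (by omega) hb (by omega) hbn
      have k := key c b (by omega) (fun x y => ancRel_gt)
      rw [bczW_gt (by omega) hb]
      have := abs_sub (bczW c b) 1
      rw [abs_one] at this
      omega

def farS (n : ℕ) : Finset (ℕ × ℕ) :=
  (Finset.Icc 1 n ×ˢ Finset.Icc 1 n).filter (fun p => n < p.1 + p.2 ∧ Nat.Coprime p.1 p.2)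

def farQ (n : ℕ) : Finset (ℕ × ℕ) :=
  (Finset.Icc 1 n ×ˢ Finset.range (n + 1)).filter (fun p => p.1 * p.2 ≤ n)

lemma anc_unique {n a b b' x y α β γ δ β' δ' : ℕ} (h : α * δ = β * γ + 1)
    (h' : α * δ' = β' * γ + 1) (ha : a = x * α + y * γ) (hb : b = x * β + y * δ)
    (hb' : b' = x * β' + y * δ') (h1 : n < a + b) (h2 : b ≤ n) (h3 : n < a + b') (h4 : b' ≤ n) :
    b = b' := by
  have hco : IsCoprime (α : ℤ) (γ : ℤ) := ⟨δ, -β, by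
    have : (α * δ : ℤ) = β * γ + 1 := by exact_mod_cast h
    linarith⟩
  have e : (α : ℤ) * (δ - δ') = γ * (β - β') := by
    have e1 : (α * δ : ℤ) = β * γ + 1 := by exact_mod_cast h
    have e2 : (α * δ' : ℤ) = β' * γ + 1 := by exact_mod_cast h'
    linarith
  have hα : (α : ℤ) ≠ 0 := by
    rintro h0
    have : α = 0 := by exact_mod_cast h0
    subst this; omega
  obtain ⟨k, hk⟩ : (α : ℤ) ∣ (β - β') := hco.dvd_of_dvd_mul_left ⟨_, e.symm⟩
  have hk2 : (δ - δ' : ℤ) = γ * k := by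
    apply mul_left_cancel₀ hα
    rw [e, hk]; ring
  have hd : (b : ℤ) - b' = a * k := by
    subst ha hb hb'
    push_cast
    linear_combination (x : ℤ) * hk + (y : ℤ) * hk2
  have hk0 : k = 0 := by
    by_contra hne
    rcases lt_or_gt_of_ne hne with hlt | hgt
    · have : (a : ℤ) * k ≤ a * (-1) := mul_le_mul_of_nonneg_left (by omega) (by positivity)
      omega
    · have : (a : ℤ) * 1 ≤ a * k := mul_le_mul_of_nonneg_left (by omega) (by positivity)
      omega
  rw [hk0] at hd
  omega

lemma sum_anc_le (n : ℕ) : ∑ p ∈ farS n, (ancSet n p.1 p.2).card ≤ (farQ n).card ^ 2 := by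
  rw [← Finset.card_sigma, sq, ← Finset.card_product]
  apply Finset.card_le_card_of_forall_subsingleton
    (fun (p : (_ : ℕ × ℕ) × (ℕ × ℕ)) (q : (ℕ × ℕ) × (ℕ × ℕ)) =>
      p.2.1 = q.1.1 ∧ p.2.2 = q.2.1 ∧ p.1.1 = q.1.1 * q.1.2 + q.2.1 * q.2.2 ∧
      ∃ β δ, q.1.2 * δ = β * q.2.2 + 1 ∧ p.1.2 = q.1.1 * β + q.2.1 * δ)
  · rintro ⟨⟨a, b⟩, ⟨x, y⟩⟩ hp
    simp only [Finset.mem_sigma, farS, ancSet, Finset.mem_filter, Finset.mem_product,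
      Finset.mem_Icc] at hp
    obtain ⟨⟨hp1, -⟩, hxy, α, β, γ, δ, h1, h2, h3⟩ := hp
    refine ⟨((x, α), (y, γ)), ?_, rfl, rfl, h2, β, δ, h1, h3⟩
    have l1 : x * α ≤ n := by omega
    have l2 : y * γ ≤ n := by omega
    have l3 : α ≤ x * α := Nat.le_mul_of_pos_left _ (by omega)
    have l4 : γ ≤ y * γ := Nat.le_mul_of_pos_left _ (by omega)
    simp only [Finset.mem_product, farQ, Finset.mem_filter, Finset.mem_Icc, Finset.mem_range]
    omega
  · rintro ⟨⟨x, α⟩, ⟨y, γ⟩⟩ -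
    rintro ⟨⟨a, b⟩, ⟨x1, y1⟩⟩ ⟨hm, hx, hy, ha, β, δ, h1, h2⟩
    rintro ⟨⟨a', b'⟩, ⟨x2, y2⟩⟩ ⟨hm', hx', hy', ha', β', δ', h1', h2'⟩
    simp only [Finset.mem_sigma, farS, Finset.mem_filter, Finset.mem_product,
      Finset.mem_Icc] at hm hm'
    dsimp only at *
    subst x1 y1 x2 y2
    have haa : a' = a := by rw [ha, ha']
    subst haa
    have := anc_unique (n := n) h1 h1' ha h2 h2' (by omega) (by omega) (by omega) (by omega)
    subst this
    rfl

lemma card_farQ (n : ℕ) : ((farQ n).card : ℝ) ≤ n * (2 + Real.log n) := by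
  have h : (farQ n).card ≤ ∑ y ∈ Finset.Icc 1 n, (n / y + 1) := by
    have : farQ n ⊆ (Finset.Icc 1 n).biUnion (fun y => (Finset.range (n / y + 1)).image
        (fun g => (y, g))) := by
      rintro ⟨y, g⟩ h
      simp only [farQ, Finset.mem_filter, Finset.mem_product, Finset.mem_Icc,
        Finset.mem_range] at h
      simp only [Finset.mem_biUnion, Finset.mem_image, Finset.mem_Icc, Finset.mem_range]
      refine ⟨y, h.1.1, g, ?_, rfl⟩
      have := (Nat.le_div_iff_mul_le (x := g) (y := n) (k := y) (by omega)).2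
        (by rw [mul_comm]; exact h.2)
      omega
    refine (Finset.card_le_card this).trans (Finset.card_biUnion_le.trans ?_)
    apply Finset.sum_le_sum
    intro y _
    exact Finset.card_image_le.trans (by simp)
  have h2 : ((farQ n).card : ℝ) ≤ ∑ y ∈ Finset.Icc 1 n, ((n : ℝ) * (y : ℝ)⁻¹ + 1) := by
    refine (Nat.cast_le (α := ℝ).2 h).trans ?_
    push_cast
    apply Finset.sum_le_sum
    intro y _
    have := Nat.cast_div_le (α := ℝ) (m := n) (n := y)
    rw [div_eq_mul_inv] at this
    linarith
  have h3 := harmonic_le_one_add_log n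
  rw [harmonic_eq_sum_Icc] at h3
  push_cast at h3
  rw [Finset.sum_add_distrib, ← Finset.mul_sum] at h2
  simp at h2
  nlinarith [mul_le_mul_of_nonneg_left h3 (Nat.cast_nonneg (α := ℝ) n)]

lemma mem_farS {n : ℕ} {p : ℕ × ℕ} : p ∈ farS n ↔
    (1 ≤ p.1 ∧ p.1 ≤ n) ∧ (1 ≤ p.2 ∧ p.2 ≤ n) ∧ n < p.1 + p.2 ∧ Nat.Coprime p.1 p.2 := by
  simp [farS, Finset.mem_filter, Finset.mem_product, and_assoc]

lemma sum_farS_fst (n : ℕ) (g : ℕ → ℝ) :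
    ∑ p ∈ farS n, g p.1 = ∑ a ∈ Finset.Icc 1 n, (Nat.totient a : ℝ) * g a := by
  rw [farS, Finset.sum_filter, Finset.sum_product]
  apply Finset.sum_congr rfl
  intro a ha
  rw [Finset.mem_Icc] at ha
  dsimp only
  rw [← Finset.sum_filter, Finset.sum_const, nsmul_eq_mul,
    ← Nat.filter_coprime_Ico_eq_totient a (n - a + 1)]
  congr 3
  ext b
  simp only [Finset.mem_filter, Finset.mem_Icc, Finset.mem_Ico]
  constructor
  · rintro ⟨h1, h2, h3⟩; exact ⟨by omega, h3⟩
  · rintro ⟨h1, h3⟩; exact ⟨by omega, by omega, h3⟩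

lemma card_farS (n : ℕ) : (farS n).card = fareyLen n := by
  have := sum_farS_fst n (fun _ => 1)
  simp at this
  rw [fareyLen]
  exact_mod_cast this

lemma sum_inv_farS (m : ℕ) :
    ∑ p ∈ farS (m + 1), (1 : ℝ) / ((p.1 : ℝ) * (p.2 : ℝ)) ≤ 1 := by
  induction m with
  | zero =>
    have : farS (0 + 1) = {(1, 1)} := by decide
    rw [this]; simp
  | succ m ih =>
    set n := m + 1 with hn
    refine le_trans ?_ ih
    set h : ℕ × ℕ → ℝ := fun p => (1 : ℝ) / ((p.1 : ℝ) * (p.2 : ℝ)) with hh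
    have hpos : ∀ p, 0 ≤ h p := fun p => by simp only [hh]; positivity
    set C := (Finset.Icc 1 n).filter (fun a => Nat.Coprime a (n + 1)) with hC
    set X := (farS n).filter (fun p => n + 1 < p.1 + p.2) with hX
    have hsub1 : farS (n + 1) ⊆ (X ∪ C.image (fun a => (a, n + 1))) ∪
        C.image (fun a => (n + 1, n + 1 - a)) := by
      rintro ⟨a, b⟩ hp
      rw [mem_farS] at hp
      obtain ⟨h1, h2, h3, h4⟩ := hp
      dsimp only at *
      simp only [Finset.mem_union, Finset.mem_image, hX, hC, Finset.mem_filter, mem_farS,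
        Finset.mem_Icc]
      by_cases hb : b = n + 1
      · subst hb
        left; right
        refine ⟨a, ⟨⟨h1.1, ?_⟩, h4⟩, rfl⟩
        have : a ≠ n + 1 := by
          rintro rfl
          simp at h4
        omega
      by_cases ha : a = n + 1
      · subst ha
        right
        refine ⟨n + 1 - b, ⟨⟨by omega, by omega⟩, ?_⟩, ?_⟩
        · exact (Nat.coprime_self_sub_left (by omega)).2 h4.symm
        · rw [Nat.sub_sub_self (by omega)]
      · left; left
        exact ⟨⟨⟨by omega, by omega⟩, ⟨by omega, by omega⟩, by omega, h4⟩, by omega⟩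
    have hsub2 : X ∪ C.image (fun a => (a, n + 1 - a)) ⊆ farS n := by
      rintro ⟨a, b⟩ hp
      simp only [Finset.mem_union, Finset.mem_image, hX, hC, Finset.mem_filter,
        Finset.mem_Icc, Prod.mk.injEq] at hp
      rcases hp with hp | ⟨a', ⟨h1, h2⟩, rfl, rfl⟩
      · exact hp.1
      · rw [mem_farS]
        refine ⟨⟨by simp; omega, by simp; omega⟩, ⟨by simp; omega, by simp; omega⟩, by simp; omega, ?_⟩
        exact (Nat.coprime_sub_self_right (by omega)).2 h2
    have hdisj : Disjoint X (C.image (fun a => (a, n + 1 - a))) := by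
      rw [Finset.disjoint_left]
      rintro ⟨a, b⟩ h1 h2
      simp only [Finset.mem_image, hX, hC, Finset.mem_filter,
        Finset.mem_Icc, Prod.mk.injEq] at h1 h2
      obtain ⟨a', h2, rfl, rfl⟩ := h2
      omega
    have hun : ∀ s t : Finset (ℕ × ℕ), ∑ p ∈ s ∪ t, h p ≤ ∑ p ∈ s, h p + ∑ p ∈ t, h p := by
      intro s t
      rw [← Finset.sum_union_inter]
      exact le_add_of_nonneg_right (Finset.sum_nonneg fun p _ => hpos p)
    calc ∑ p ∈ farS (n + 1), h p
        ≤ ∑ p ∈ (X ∪ C.image (fun a => (a, n + 1))) ∪ C.image (fun a => (n + 1, n + 1 - a)), h p :=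
          Finset.sum_le_sum_of_subset_of_nonneg hsub1 fun p _ _ => hpos p
      _ ≤ ∑ p ∈ X, h p + ∑ p ∈ C.image (fun a => (a, n + 1)), h p +
          ∑ p ∈ C.image (fun a => (n + 1, n + 1 - a)), h p := by
          refine (hun _ _).trans ?_
          gcongr
          exact hun _ _
      _ = ∑ p ∈ X, h p + ∑ p ∈ C.image (fun a => (a, n + 1 - a)), h p := by
          rw [Finset.sum_image, Finset.sum_image, Finset.sum_image, add_assoc,
            ← Finset.sum_add_distrib]
          · congr 1
            apply Finset.sum_congr rfl
            intro a ha
            simp only [hC, Finset.mem_filter, Finset.mem_Icc] at ha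
            simp only [hh]
            rw [Nat.cast_sub (by omega)]
            push_cast
            have e1 : (0 : ℝ) < a := by exact_mod_cast ha.1.1
            have e2 : (0 : ℝ) < n + 1 - a := by
              have : (a : ℝ) ≤ n := by exact_mod_cast ha.1.2
              linarith
            have e3 : (0 : ℝ) < n + 1 := by positivity
            field_simp
            ring
          · intro a _ b _ hab; exact (Prod.mk.inj hab).1
          · intro a ha b hb hab
            simp only [hC, Finset.coe_filter, Set.mem_ofPred_eq, Finset.mem_Icc] at ha hb
            simp only [Prod.mk.injEq, true_and] at hab
            omega
          · intro a _ b _ hab; exact (Prod.mk.inj hab).1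
      _ = ∑ p ∈ X ∪ C.image (fun a => (a, n + 1 - a)), h p := (Finset.sum_union hdisj).symm
      _ ≤ ∑ p ∈ farS n, h p := Finset.sum_le_sum_of_subset_of_nonneg hsub2 fun p _ _ => hpos p

/-- the BCZ map on integer pairs -/
def fstep (n : ℕ) (p : ℕ × ℕ) : ℕ × ℕ := (p.2, ((n + p.1) / p.2) * p.2 - p.1)

lemma fstep_spec {n a b : ℕ} (h : (a, b) ∈ farS n) :
    ∃ c k, k = (n + a) / b ∧ fstep n (a, b) = (b, c) ∧ a + c = k * b ∧ (b, c) ∈ farS n ∧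
      (n + c) / b = k := by
  rw [mem_farS] at h
  obtain ⟨h1, h2, h3, h4⟩ := h
  dsimp only at *
  have hd := Nat.div_add_mod (n + a) b
  have hm := Nat.mod_lt (n + a) (show b > 0 by omega)
  rw [mul_comm] at hd
  refine ⟨(n + a) / b * b - a, (n + a) / b, rfl, rfl, by omega, ?_, ?_⟩
  · rw [mem_farS]
    refine ⟨h2, ⟨by simp; omega, by simp; omega⟩, by simp; omega, ?_⟩
    have : Nat.Coprime b ((n + a) / b * b - a) ↔ Nat.Coprime b a := by
      have e : a + ((n + a) / b * b - a) = (n + a) / b * b := by omega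
      have key : ∀ x y k : ℕ, x + y = k * b → Nat.Coprime b x → Nat.Coprime b y := by
        intro x y k hxy hx
        have h0 : Nat.gcd b y ∣ x :=
          (Nat.dvd_add_left (Nat.gcd_dvd_right b y)).1
            (hxy ▸ (Nat.gcd_dvd_left b y).mul_left k)
        exact Nat.eq_one_of_dvd_coprimes hx (Nat.gcd_dvd_left b y) h0
      exact ⟨key _ _ _ (by rw [add_comm]; exact e), key _ _ _ e⟩
    exact this.2 h4.symm
  · have hb : 0 < b := by omega
    have e : n + ((n + a) / b * b - a) = (n - a) + (n + a) / b * b := by omega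
    rw [e, Nat.add_mul_div_right _ _ hb, Nat.div_eq_of_lt (by omega), zero_add]

lemma fstep_mem {n : ℕ} {p : ℕ × ℕ} (h : p ∈ farS n) : fstep n p ∈ farS n := by
  obtain ⟨c, k, -, h2, -, h3, -⟩ := fstep_spec (a := p.1) (b := p.2) h
  exact h2 ▸ h3

lemma fstep_inj {n : ℕ} {p q : ℕ × ℕ} (hp : p ∈ farS n) (hq : q ∈ farS n)
    (h : fstep n p = fstep n q) : p = q := by
  obtain ⟨a, b⟩ := p
  obtain ⟨a', b'⟩ := q
  obtain ⟨c, k, -, h2, h4, h3, h5⟩ := fstep_spec hp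
  obtain ⟨c', k', -, h2', h4', h3', h5'⟩ := fstep_spec hq
  rw [h2, h2'] at h
  simp only [Prod.mk.injEq] at h
  obtain ⟨rfl, rfl⟩ := h
  have : k = k' := h5.symm.trans h5'
  subst this
  simp; omega

/-- The orbit. -/
def forb (n j : ℕ) : ℕ × ℕ := (fstep n)^[j] (1, n)

lemma forb_zero (n : ℕ) : forb n 0 = (1, n) := rfl

lemma forb_succ (n j : ℕ) : forb n (j + 1) = fstep n (forb n j) := by
  rw [forb, Function.iterate_succ_apply']; rfl

lemma forb_mem {n : ℕ} (hn : 1 ≤ n) (j : ℕ) : forb n j ∈ farS n := by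
  induction j with
  | zero => rw [forb_zero, mem_farS]; simp; omega
  | succ j ih => rw [forb_succ]; exact fstep_mem ih

lemma forb_sum {n : ℕ} (hn : 1 ≤ n) (j : ℕ) : ∃ p p' : ℤ,
    ∑ i ∈ Finset.range j, (1 : ℝ) / (((forb n i).1 : ℝ) * ((forb n i).2 : ℝ)) =
      p / ((forb n j).1 : ℝ) ∧ p' * ((forb n j).1 : ℤ) - p * ((forb n j).2 : ℤ) = 1 := by
  induction j with
  | zero => exact ⟨0, 1, by simp, by simp [forb_zero]⟩
  | succ j ih =>
    obtain ⟨p, p', h1, h2⟩ := ih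
    have hm := forb_mem hn j
    obtain ⟨c, k, -, h3, h4, h5, -⟩ := fstep_spec (a := (forb n j).1) (b := (forb n j).2) hm
    have h6 : forb n (j + 1) = ((forb n j).2, c) := by rw [forb_succ]; exact h3
    rw [mem_farS] at hm
    obtain ⟨a, b, hq⟩ : ∃ a b, forb n j = (a, b) := ⟨_, _, rfl⟩
    rw [hq] at h1 h2 h3 h4 h5 h6 hm
    dsimp only at *
    refine ⟨p', k * p' - p, ?_, ?_⟩
    · rw [Finset.sum_range_succ, h1, h6, hq]
      dsimp only
      have : (p' : ℝ) * a - p * b = 1 := by exact_mod_cast h2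
      have ha : (a : ℝ) ≠ 0 := by exact_mod_cast (show a ≠ 0 by omega)
      have hb : (b : ℝ) ≠ 0 := by exact_mod_cast (show b ≠ 0 by omega)
      rw [div_add_div _ _ ha (mul_ne_zero ha hb), div_eq_div_iff (mul_ne_zero ha (mul_ne_zero ha hb)) hb]
      linear_combination (-(a : ℝ) * b) * this
    · rw [h6]
      have : (a + c : ℤ) = k * b := by exact_mod_cast h4
      linear_combination h2 - p' * this

lemma forb_period {n : ℕ} (hn : 1 ≤ n) : forb n (fareyLen n) = forb n 0 ∧
    Set.InjOn (forb n) (Finset.range (fareyLen n)) ∧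
    (Finset.range (fareyLen n)).image (forb n) = farS n := by
  let f : farS n → farS n := fun p => ⟨fstep n p, fstep_mem p.2⟩
  have hf : Function.Injective f := by
    intro p q h
    exact Subtype.ext (fstep_inj p.2 q.2 (congrArg Subtype.val h))
  let x0 : farS n := ⟨forb n 0, forb_mem hn 0⟩
  have hit : ∀ j, ((f^[j] x0 : farS n) : ℕ × ℕ) = forb n j := by
    intro j
    induction j with
    | zero => rfl
    | succ j ih => rw [Function.iterate_succ_apply', forb_succ, ← ih]
  have hper : x0 ∈ Function.periodicPts f := hf.mem_periodicPts x0
  set P := Function.minimalPeriod f x0 with hP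
  have hPpos : 0 < P := Function.minimalPeriod_pos_of_mem_periodicPts hper
  have hP0 : forb n P = forb n 0 := by
    rw [← hit, Function.iterate_minimalPeriod]
  have hinj : Set.InjOn (forb n) (Finset.range P) := by
    intro i hi j hj hij
    rw [← hit, ← hit] at hij
    exact Function.iterate_injOn_Iio_minimalPeriod (by simpa using hi) (by simpa using hj)
      (Subtype.ext hij)
  have himg : (Finset.range P).image (forb n) = farS n := by
    have hsub : (Finset.range P).image (forb n) ⊆ farS n := by
      intro p hp
      obtain ⟨j, -, rfl⟩ := Finset.mem_image.1 hp
      exact forb_mem hn j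
    by_contra hne
    obtain ⟨q, hq, hq'⟩ := Finset.exists_of_ssubset (hsub.ssubset_of_ne hne)
    have hlt : ∑ p ∈ (Finset.range P).image (forb n), (1 : ℝ) / ((p.1 : ℝ) * (p.2 : ℝ)) <
        ∑ p ∈ farS n, (1 : ℝ) / ((p.1 : ℝ) * (p.2 : ℝ)) := by
      apply Finset.sum_lt_sum_of_subset hsub hq hq'
      · rw [mem_farS] at hq
        have e1 : (0 : ℝ) < q.1 := by exact_mod_cast hq.1.1
        have e2 : (0 : ℝ) < q.2 := by exact_mod_cast hq.2.1.1
        positivity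
      · intros; positivity
    have hle : ∑ p ∈ farS n, (1 : ℝ) / ((p.1 : ℝ) * (p.2 : ℝ)) ≤ 1 := by
      obtain ⟨m, rfl⟩ : ∃ m, n = m + 1 := ⟨n - 1, by omega⟩
      exact sum_inv_farS m
    rw [Finset.sum_image hinj] at hlt
    obtain ⟨p, p', h1, h2⟩ := forb_sum hn P
    rw [h1, hP0, forb_zero] at hlt
    have hpos : (0 : ℝ) < p := by
      have : (0 : ℝ) < ∑ i ∈ Finset.range P,
          (1 : ℝ) / (((forb n i).1 : ℝ) * ((forb n i).2 : ℝ)) := by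
        apply Finset.sum_pos
        · intro i _
          have hq := forb_mem hn i
          rw [mem_farS] at hq
          have e1 : (0 : ℝ) < (forb n i).1 := by exact_mod_cast hq.1.1
          have e2 : (0 : ℝ) < (forb n i).2 := by exact_mod_cast hq.2.1.1
          positivity
        · simpa using hPpos.ne'
      rw [h1, hP0, forb_zero] at this
      simpa using this
    have hp1 : (1 : ℤ) ≤ p := by
      have : (0 : ℤ) < p := by exact_mod_cast hpos
      omega
    have : (1 : ℝ) ≤ p := by exact_mod_cast hp1
    simp at hlt
    simp at hle
    linarith
  have hPA : P = fareyLen n := by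
    rw [← card_farS, ← himg, Finset.card_image_of_injOn hinj, Finset.card_range]
  rw [← hPA]
  exact ⟨hP0, hinj, himg⟩

lemma floor_aux {n a b : ℕ} (hn : 1 ≤ n) :
    (⌊(1 + (a : ℝ) / n) / ((b : ℝ) / n)⌋ : ℤ) = (((n + a) / b : ℕ) : ℤ) := by
  have hn' : (n : ℝ) ≠ 0 := by positivity
  have : (1 + (a : ℝ) / n) / ((b : ℝ) / n) = ((n + a : ℕ) : ℝ) / (b : ℕ) := by
    push_cast
    rw [← div_div_div_cancel_right₀ hn' ((n : ℝ) + a) (b : ℝ), add_div (n : ℝ) a n, div_self hn']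
  rw [this, Int.floor_div_natCast, Int.floor_natCast]
  simp

lemma bcz_orbit {n : ℕ} (hn : 1 ≤ n) (j : ℕ) : bczT^[j] (1 / (n : ℝ), 1) =
    (((forb n j).1 : ℝ) / n, ((forb n j).2 : ℝ) / n) := by
  have hn' : (n : ℝ) ≠ 0 := by positivity
  induction j with
  | zero => simp [forb_zero, hn']
  | succ j ih =>
    rw [Function.iterate_succ_apply', ih, bczT]
    have hm := forb_mem hn j
    obtain ⟨c, k, hk, h3, h4, h5, -⟩ := fstep_spec (a := (forb n j).1) (b := (forb n j).2) hm
    have h6 : forb n (j + 1) = ((forb n j).2, c) := by rw [forb_succ]; exact h3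
    rw [h6]
    dsimp only
    rw [floor_aux hn, ← hk]
    congr 1
    have : ((forb n j).1 : ℝ) + c = k * (forb n j).2 := by exact_mod_cast h4
    push_cast
    field_simp
    linarith

/-- the potential -/
noncomputable def fG (n : ℕ) (p : ℕ × ℕ) : ℝ := (bczW p.1 p.2 : ℝ) - (((n + p.2) / p.1 : ℕ) : ℝ) / 2

lemma khat_eq {n : ℕ} (hn : 1 ≤ n) (j : ℕ) : khat (bczT^[j] (1 / (n : ℝ), 1)) - 3 =
    fG n (forb n (j + 1)) - fG n (forb n j) - (if (forb n j).2 = 1 then 1 else 0) := by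
  rw [bcz_orbit hn, khat]
  have hm := forb_mem hn j
  obtain ⟨c, k, hk, h3, h4, h5, h7⟩ := fstep_spec (a := (forb n j).1) (b := (forb n j).2) hm
  have h6 : forb n (j + 1) = ((forb n j).2, c) := by rw [forb_succ]; exact h3
  rw [h6]
  dsimp only
  rw [floor_aux hn, floor_aux hn, fG, fG]
  rw [mem_farS] at hm h5
  dsimp only at *
  have hw := bczW_step _ (forb n j).1 (forb n j).2 c k le_rfl (by omega) (by omega) (by omega)
    hm.2.2.2 h4
  rw [h7, ← hk]
  have hw' : (bczW (forb n j).2 c : ℝ) - bczW (forb n j).1 (forb n j).2 =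
      (k : ℝ) - 3 + (if (forb n j).2 = 1 then 1 else 0) := by exact_mod_cast hw
  rw [Int.cast_natCast, Int.cast_natCast]
  linarith

lemma theta_bound {n : ℕ} (hn : 1 ≤ n) (i : ℕ) (hi : i ≤ fareyLen n) :
    |∑ j ∈ Finset.range i, (khat (bczT^[j] (1 / (n : ℝ), 1)) - 3)| ≤
      |(bczW (forb n i).1 (forb n i).2 : ℝ)| + (n : ℝ) / (forb n i).1 + 2 := by
  have h0 : fG n (forb n 0) = -1 := by
    obtain ⟨m, rfl⟩ : ∃ m, n = m + 1 := ⟨n - 1, by omega⟩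
    rw [forb_zero, fG]
    dsimp only
    rw [bczW_one, Nat.div_one]
    push_cast; ring
  rw [Finset.sum_congr rfl (fun j _ => khat_eq hn j), Finset.sum_sub_distrib,
    Finset.sum_range_sub (fun j => fG n (forb n j)), h0, ← Finset.sum_filter, Finset.sum_const,
    nsmul_eq_mul, mul_one]
  set c := ((Finset.range i).filter (fun j => (forb n j).2 = 1)).card with hc
  have hc1 : c ≤ 1 := by
    rw [hc, Finset.card_le_one]
    have hall : ∀ j, (forb n j).2 = 1 → forb n j = (n, 1) := by
      intro j hj
      have hm := forb_mem hn j
      rw [mem_farS] at hm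
      ext
      · dsimp only; omega
      · exact hj
    intro a ha b hb
    rw [Finset.mem_filter, Finset.mem_range] at ha hb
    exact (forb_period hn).2.1 (by simp; omega) (by simp; omega)
      ((hall a ha.2).trans (hall b hb.2).symm)
  have hcR : (c : ℝ) ≤ 1 := by exact_mod_cast hc1
  have hc0 : (0 : ℝ) ≤ c := by positivity
  have hm := forb_mem hn i
  rw [mem_farS] at hm
  generalize forb n i = q at *
  obtain ⟨a, b⟩ := q
  rw [fG]
  dsimp only at *
  have ha : (0 : ℝ) < a := by exact_mod_cast hm.1.1
  have hk : (((n + b) / a : ℕ) : ℝ) ≤ 2 * ((n : ℝ) / a) := by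
    refine Nat.cast_div_le.trans ?_
    rw [← mul_div_assoc]
    have : (b : ℝ) ≤ n := by exact_mod_cast hm.2.1.2
    push_cast
    gcongr
    linarith
  have hk0 : (0 : ℝ) ≤ (((n + b) / a : ℕ) : ℝ) := by positivity
  have := le_abs_self (bczW a b : ℝ)
  have := neg_abs_le (bczW a b : ℝ)
  rw [abs_le]
  constructor <;> linarith

lemma main_bound {n : ℕ} (hn : 1 ≤ n) :
    ∑ i ∈ Finset.Icc 1 (fareyLen n),
          |∑ j ∈ Finset.range i, (khat (bczT^[j] (1 / (n : ℝ), 1)) - 3)| ≤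
      (n * (2 + Real.log n)) ^ 2 + 2 * (n : ℝ) ^ 2 := by
  set F : ℕ × ℕ → ℝ := fun p => |(bczW p.1 p.2 : ℝ)| + (n : ℝ) / p.1 + 2 with hF
  have h1 : ∑ i ∈ Finset.Icc 1 (fareyLen n),
          |∑ j ∈ Finset.range i, (khat (bczT^[j] (1 / (n : ℝ), 1)) - 3)| ≤
      ∑ i ∈ Finset.Icc 1 (fareyLen n), F (forb n i) :=
    Finset.sum_le_sum fun i hi => theta_bound hn i (Finset.mem_Icc.1 hi).2
  have h2 : ∑ i ∈ Finset.Icc 1 (fareyLen n), F (forb n i) = ∑ p ∈ farS n, F p := by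
    obtain ⟨p1, p2, p3⟩ := forb_period hn
    have e1 := Finset.sum_range_succ (fun i => F (forb n i)) (fareyLen n)
    have e2 := Finset.sum_range_succ' (fun i => F (forb n i)) (fareyLen n)
    rw [← p3, Finset.sum_image p2]
    have e3 : ∑ i ∈ Finset.Icc 1 (fareyLen n), F (forb n i) =
        ∑ i ∈ Finset.range (fareyLen n), F (forb n (i + 1)) := by
      rw [Finset.range_eq_Ico, Finset.sum_Ico_add' (fun i => F (forb n i)) 0 _ 1]
      rfl
    rw [p1] at e1
    linarith
  have h3 : ∑ p ∈ farS n, F p ≤ ∑ p ∈ farS n, (((ancSet n p.1 p.2).card : ℝ) +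
      ((n : ℝ) / p.1 + 1)) := by
    apply Finset.sum_le_sum
    rintro ⟨a, b⟩ hp
    rw [mem_farS] at hp
    have := abs_bczW_le n (a + b) a b le_rfl (by simp at hp; omega) (by simp at hp; omega) (by simp at hp; omega) (by simp at hp; omega)
    have : |(bczW a b : ℝ)| + 1 ≤ ((ancSet n a b).card : ℝ) := by exact_mod_cast this
    simp only [hF]
    linarith
  have h4 : ∑ p ∈ farS n, ((ancSet n p.1 p.2).card : ℝ) ≤ (n * (2 + Real.log n)) ^ 2 := by
    have := sum_anc_le n
    have : ((∑ p ∈ farS n, (ancSet n p.1 p.2).card : ℕ) : ℝ) ≤ ((farQ n).card : ℝ) ^ 2 := by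
      exact_mod_cast this
    push_cast at this
    refine this.trans ?_
    gcongr
    exact card_farQ n
  have h5 : ∑ p ∈ farS n, ((n : ℝ) / p.1 + 1) ≤ 2 * (n : ℝ) ^ 2 := by
    rw [sum_farS_fst n (fun a => (n : ℝ) / a + 1)]
    have : ∀ a ∈ Finset.Icc 1 n, (Nat.totient a : ℝ) * ((n : ℝ) / a + 1) ≤ 2 * n := by
      intro a ha
      rw [Finset.mem_Icc] at ha
      have ha0 : (0 : ℝ) < a := by exact_mod_cast ha.1
      have ha1 : (a : ℝ) ≤ n := by exact_mod_cast ha.2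
      have ht : (Nat.totient a : ℝ) ≤ a := by exact_mod_cast Nat.totient_le a
      calc (Nat.totient a : ℝ) * ((n : ℝ) / a + 1) ≤ a * ((n : ℝ) / a + 1) := by gcongr
        _ = n + a := by field_simp
        _ ≤ 2 * n := by linarith
    refine (Finset.sum_le_sum this).trans ?_
    simp
    apply le_of_eq; ring
  have h6 := h3.trans_eq Finset.sum_add_distrib
  linarith

theorem sum_abs_theta_bound (ε : ℝ) (hε : 0 < ε) :
    ∃ C : ℝ, 0 < C ∧ ∀ n : ℕ, 1 ≤ n →
      ∑ i ∈ Finset.Icc 1 (fareyLen n),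
          |∑ j ∈ Finset.range i, (khat (bczT^[j] (1 / (n : ℝ), 1)) - 3)| ≤
        C * (n : ℝ) ^ (2 + ε) := by
  refine ⟨(2 + 2 / ε) ^ 2 + 2, by positivity, fun n hn => (main_bound hn).trans ?_⟩
  have hn1 : (1 : ℝ) ≤ n := by exact_mod_cast hn
  have hn0 : (0 : ℝ) < n := by linarith
  have hl : Real.log n ≤ (n : ℝ) ^ (ε / 2) / (ε / 2) :=
    Real.log_le_rpow_div hn0.le (by positivity)
  have hl0 : 0 ≤ Real.log n := Real.log_nonneg hn1
  set t := (n : ℝ) ^ (ε / 2) with ht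
  have ht1 : 1 ≤ t := Real.one_le_rpow hn1 (by positivity)
  have htt : (n : ℝ) ^ (2 + ε) = (n : ℝ) ^ 2 * t ^ 2 := by
    rw [Real.rpow_add hn0, ht, ← Real.rpow_natCast (_ ^ _) 2, ← Real.rpow_mul hn0.le]
    norm_num
  have hb : 2 + Real.log n ≤ (2 + 2 / ε) * t := by
    have : t / (ε / 2) = 2 / ε * t := by field_simp
    rw [this] at hl
    linarith
  have hb2 : (2 + Real.log n) ^ 2 ≤ ((2 + 2 / ε) * t) ^ 2 := by gcongr
  have ht2 : 1 ≤ t ^ 2 := one_le_pow₀ ht1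
  rw [htt, mul_pow]
  calc (n : ℝ) ^ 2 * (2 + Real.log n) ^ 2 + 2 * (n : ℝ) ^ 2
      ≤ (n : ℝ) ^ 2 * ((2 + 2 / ε) * t) ^ 2 + 2 * ((n : ℝ) ^ 2 * t ^ 2) := by
        gcongr
        exact le_mul_of_one_le_right (by positivity) ht2
    _ = _ := by ring
end

section
/- For every real e > 1 there exists a constant C > 0 such that for every excursion ((a_i,b_i))_{i=0}^{s} of the BCZ map with (a_0, a_s) ∈ Δ, one has Σ_{i=1}^{s} |Σ_{j=0}^{i−1} (k̂(a_j,b_j) − 3)| ≤ C · (1/(a_0·a_s))^{e}. -/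
namespace BCZ

/-- Abstract data extracted from an excursion. -/
structure Dat (a : ℕ → ℝ) (s : ℕ) : Prop where
  pos : ∀ i ≤ s, 0 < a i
  le_one : ∀ i ≤ s, a i ≤ 1
  gap : ∀ i < s, 1 < a i + a (i + 1)
  int : ∀ i, 0 < i → i < s → ∃ k : ℤ, a (i - 1) + a (i + 1) = k * a i

/-- Stern–Brocot structure on an interval of indices. -/
inductive Tree (a : ℕ → ℝ) : ℕ → ℕ → Prop
  | leaf (i : ℕ) : Tree a i (i + 1)
  | node (l m r : ℕ) : Tree a l m → Tree a m r → a m = a l + a r → Tree a l r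

theorem Tree.lt {a : ℕ → ℝ} {l r : ℕ} (h : Tree a l r) : l < r := by
  induction h with
  | leaf i => omega
  | node l m r _ _ _ h1 h2 => omega

noncomputable def X (a : ℕ → ℝ) (l r : ℕ) : ℝ := (a (l + 1) - a r) / a l
noncomputable def Y (a : ℕ → ℝ) (l r : ℕ) : ℝ := (a (r - 1) - a l) / a r
noncomputable def K (a : ℕ → ℝ) (j : ℕ) : ℝ := (a (j - 1) + a (j + 1)) / a j

theorem X_split {a : ℕ → ℝ} {l m r : ℕ} (hl : 0 < a l) (h : a m = a l + a r) :
    X a l r = X a l m + 1 := by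
  unfold X; rw [h]; field_simp; ring

theorem Y_split {a : ℕ → ℝ} {l m r : ℕ} (hr : 0 < a r) (h : a m = a l + a r) :
    Y a l r = Y a m r + 1 := by
  unfold Y; rw [h]; field_simp; ring

theorem K_split {a : ℕ → ℝ} {l m r : ℕ} (hm : 0 < a m) (h : a m = a l + a r) :
    K a m = Y a l m + X a m r + 1 := by
  have h2 : a l = a m - a r := by linarith
  unfold K X Y; rw [h2]; field_simp; ring

/-- Integrality of the end contributions. -/
theorem Tree.int {a : ℕ → ℝ} {s l r : ℕ} (D : Dat a s) (h : Tree a l r) (hr : r ≤ s) :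
    (∃ x : ℤ, X a l r = x) ∧ (∃ y : ℤ, Y a l r = y) := by
  induction h with
  | leaf i => exact ⟨⟨0, by simp [X]⟩, ⟨0, by simp [Y]⟩⟩
  | node l m r h1 h2 hm i1 i2 =>
    have := h1.lt
    have := h2.lt
    obtain ⟨⟨x, hx⟩, _⟩ := i1 (by omega)
    obtain ⟨_, ⟨y, hy⟩⟩ := i2 (by omega)
    refine ⟨⟨x + 1, ?_⟩, ⟨y + 1, ?_⟩⟩
    · rw [X_split (D.pos l (by omega)) hm, hx]; push_cast; ring
    · rw [Y_split (D.pos r (by omega)) hm, hy]; push_cast; ring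

theorem Tree.mult {a : ℕ → ℝ} {s l m r : ℕ} (D : Dat a s) (h1 : Tree a l m) (h2 : Tree a m r)
    (hr : r ≤ s) : ∃ k : ℤ, a l + a r = k * a m := by
  have := h1.lt
  have := h2.lt
  obtain ⟨_, ⟨y, hy⟩⟩ := h1.int D (by omega)
  obtain ⟨⟨x, hx⟩, _⟩ := h2.int D (by omega)
  obtain ⟨k, hk⟩ := D.int m (by omega) (by omega)
  have hm := D.pos m (by omega)
  refine ⟨k - x - y, ?_⟩
  unfold X at hx
  unfold Y at hy
  rw [div_eq_iff hm.ne'] at hx hy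
  push_cast
  linear_combination hk - hx - hy

theorem tree_of_exc {a : ℕ → ℝ} {s : ℕ} (D : Dat a s) : ∀ n l r : ℕ, r - l = n → l < r → r ≤ s →
    (∀ i, l < i → i < r → a l < a i ∧ a r < a i) → Tree a l r := by
  intro n
  induction n using Nat.strong_induction_on with
  | _ n ih =>
  intro l r hn hlr hr hexc
  by_cases h1 : r = l + 1
  · subst h1; exact Tree.leaf l
  -- minimal interior value, leftmost
  obtain ⟨m0, hm0, hmin0⟩ := Finset.exists_min_image (Finset.Ioo l r) a
    ⟨l + 1, by simp; omega⟩
  have hex : ∃ m, m ∈ Finset.Ioo l r ∧ a m = a m0 := ⟨m0, hm0, rfl⟩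
  classical
  obtain ⟨hm, hmv⟩ := Nat.find_spec hex
  have hleft : ∀ i, l < i → i < Nat.find hex → a (Nat.find hex) < a i := by
    intro i hi1 hi2
    have hmem : i ∈ Finset.Ioo l r := by
      rw [Finset.mem_Ioo] at hm ⊢; omega
    have := Nat.find_min hex hi2
    have h3 := hmin0 i hmem
    rw [hmv]
    refine lt_of_le_of_ne h3 (fun h => this ⟨hmem, h.symm⟩)
  have hmin : ∀ i, l < i → i < r → a (Nat.find hex) ≤ a i := by
    intro i hi1 hi2
    rw [hmv]; exact hmin0 i (by rw [Finset.mem_Ioo]; omega)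
  generalize Nat.find hex = m at *
  rw [Finset.mem_Ioo] at hm
  obtain ⟨hlm, hmr⟩ := hm
  have hem := hexc m hlm hmr
  have posm := D.pos m (by omega)
  have posl := D.pos l (by omega)
  have posr := D.pos r (by omega)
  have T1 : Tree a l m := ih (m - l) (by omega) l m rfl hlm (by omega)
    (fun i hi1 hi2 => ⟨(hexc i hi1 (by omega)).1, hleft i hi1 hi2⟩)
  have hright : ∀ i, m < i → i < r → a m < a i := by
    by_contra hcon
    push Not at hcon
    have hc := Nat.find_spec hcon
    have hcm : ∀ i, m < i → i < Nat.find hcon → a m < a i := by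
      intro i hi1 hi2
      have := Nat.find_min hcon hi2
      push Not at this
      exact this hi1 (by omega)
    generalize Nat.find hcon = m2 at *
    obtain ⟨hc1, hc2, hc3⟩ := hc
    have heq : a m2 = a m := le_antisymm hc3 (hmin m2 (by omega) hc2)
    have T2 : Tree a m m2 := ih (m2 - m) (by omega) m m2 rfl hc1 (by omega)
      (fun i hi1 hi2 => ⟨hcm i hi1 hi2, heq ▸ hcm i hi1 hi2⟩)
    obtain ⟨k, hk⟩ := T1.mult D T2 (by omega)
    rw [heq] at hk
    have k1 : (1 : ℝ) < k := by
      by_contra hh; push Not at hh; nlinarith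
    have k2 : (k : ℝ) < 2 := by
      by_contra hh; push Not at hh; nlinarith
    have k1' : 1 < k := by exact_mod_cast k1
    have k2' : k < 2 := by exact_mod_cast k2
    omega
  have T2 : Tree a m r := ih (r - m) (by omega) m r rfl hmr (by omega)
      (fun i hi1 hi2 => ⟨hright i hi1 hi2, (hexc i (by omega) hi2).2⟩)
  obtain ⟨k, hk⟩ := T1.mult D T2 (by omega)
  have k1 : (0 : ℝ) < k := by
    by_contra hh; push Not at hh; nlinarith
  have k2 : (k : ℝ) < 2 := by
    by_contra hh; push Not at hh; nlinarith
  have k1' : 0 < k := by exact_mod_cast k1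
  have k2' : k < 2 := by exact_mod_cast k2
  have : k = 1 := by omega
  subst this
  exact Tree.node l m r T1 T2 (by push_cast at hk; linarith)

theorem sum_split (f : ℕ → ℝ) {l m r : ℕ} (h1 : l < m) (h2 : m < r) :
    ∑ j ∈ Finset.Ico (l + 1) r, f j =
      ∑ j ∈ Finset.Ico (l + 1) m, f j + f m + ∑ j ∈ Finset.Ico (m + 1) r, f j := by
  rw [← Finset.sum_Ico_consecutive f (show l + 1 ≤ m by omega) h2.le,
    Finset.sum_eq_sum_Ico_succ_bot h2, add_assoc]

theorem Tree.total {a : ℕ → ℝ} {s l r : ℕ} (D : Dat a s) (h : Tree a l r) (hr : r ≤ s) :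
    X a l r + ∑ j ∈ Finset.Ico (l + 1) r, K a j + Y a l r = 3 * ((r : ℝ) - l - 1) := by
  induction h with
  | leaf i => simp [X, Y]
  | node l m r h1 h2 hm i1 i2 =>
    have l1 := h1.lt
    have l2 := h2.lt
    have e1 := i1 (by omega)
    have e2 := i2 (by omega)
    rw [sum_split _ l1 l2, X_split (D.pos l (by omega)) hm, Y_split (D.pos r (by omega)) hm,
      K_split (D.pos m (by omega)) hm]
    linarith

theorem Tree.length {a : ℕ → ℝ} {s l r : ℕ} (D : Dat a s) (h : Tree a l r) (hr : r ≤ s) :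
    (r : ℝ) - l ≤ 1 / (a l * a r) := by
  induction h with
  | leaf i =>
    have p1 := D.pos i (by omega)
    have p2 := D.pos (i + 1) (by omega)
    have q1 := D.le_one i (by omega)
    have q2 := D.le_one (i + 1) (by omega)
    rw [le_div_iff₀ (by positivity)]
    push_cast
    nlinarith
  | node l m r h1 h2 hm i1 i2 =>
    have l1 := h1.lt
    have l2 := h2.lt
    have e1 := i1 (by omega)
    have e2 := i2 (by omega)
    have p1 := D.pos l (by omega)
    have p2 := D.pos r (by omega)
    have : 1 / (a l * a r) = 1 / (a l * a m) + 1 / (a m * a r) := by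
      rw [hm]; field_simp; ring
    linarith

/-- Partial sums inside an interval. -/
noncomputable def S (a : ℕ → ℝ) (l r i : ℕ) : ℝ :=
  X a l r + ∑ j ∈ Finset.Ico (l + 1) i, K a j + K a i / 2 - 3 * ((i : ℝ) - l)

noncomputable def E (a : ℕ → ℝ) (l r : ℕ) : ℝ := ∑ i ∈ Finset.Ico (l + 1) r, |S a l r i|

theorem E_step {a : ℕ → ℝ} {s l m r : ℕ} (D : Dat a s) (h1 : Tree a l m) (h2 : Tree a m r)
    (hm : a m = a l + a r) (hr : r ≤ s) :
    E a l r ≤ E a l m + E a m r + 4 * (1 / (a l * a r)) := by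
  have l1 := h1.lt
  have l2 := h2.lt
  have pl := D.pos l (by omega)
  have pm := D.pos m (by omega)
  have pr := D.pos r (by omega)
  have t1 := h1.total D (by omega)
  have A1 : ∑ i ∈ Finset.Ico (l + 1) m, |S a l r i| ≤
      ∑ i ∈ Finset.Ico (l + 1) m, (|S a l m i| + 1) := by
    refine Finset.sum_le_sum fun i _ => ?_
    have : S a l r i = S a l m i + 1 := by
      unfold S; rw [X_split pl hm]; ring
    rw [this]
    exact (abs_add_le _ _).trans (by simp)
  have A2 : ∑ i ∈ Finset.Ico (m + 1) r, |S a l r i| ≤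
      ∑ i ∈ Finset.Ico (m + 1) r, (|S a m r i| + 1) := by
    refine Finset.sum_le_sum fun i hi => ?_
    rw [Finset.mem_Ico] at hi
    have : S a l r i = S a m r i - 1 := by
      unfold S; rw [sum_split _ l1 (show m < i by omega), X_split pl hm, K_split pm hm]
      linarith
    rw [this]
    exact (abs_sub _ _).trans (by simp)
  have A3 : |S a l r m| ≤ 4 := by
    have e : S a l r m = -3 / 2 + (X a m r - Y a l m) / 2 := by
      unfold S; rw [X_split pl hm, K_split pm hm]; linarith
    have g1 := D.gap m (by omega)
    have g2 := D.gap (m - 1) (by omega)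
    rw [show m - 1 + 1 = m by omega] at g2
    have o1 := D.le_one (m + 1) (by omega)
    have o2 := D.le_one (m - 1) (by omega)
    have hb : |X a m r - Y a l m| ≤ 2 := by
      unfold X Y
      rw [← sub_div, abs_div, abs_of_pos pm, div_le_iff₀ pm, abs_le]
      constructor <;> linarith
    rw [abs_le] at hb ⊢
    rw [e]
    constructor <;> linarith [hb.1, hb.2]
  have L := (Tree.node l m r h1 h2 hm).length D hr
  have L2 : (l : ℝ) + 1 ≤ r := by exact_mod_cast (by omega : l + 1 ≤ r)
  unfold E
  rw [sum_split _ l1 l2]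
  rw [Finset.sum_add_distrib] at A1 A2
  simp only [Finset.sum_const, Nat.card_Ico, nsmul_eq_mul, mul_one] at A1 A2
  rw [Nat.cast_sub (by omega)] at A1 A2
  push_cast at A1 A2
  linarith

theorem E_leaf (a : ℕ → ℝ) (l : ℕ) : E a l (l + 1) = 0 := by simp [E]

theorem pow_drop {p t : ℝ} (hp : 0 < p) (ht : 0 < t) (ht1 : t ≤ 1) :
    p / (2 + p) * t ≤ 1 - (1 / (1 + t)) ^ p := by
  have h1 : (1 / (1 + t)) ^ p = Real.exp (- (p * Real.log (1 + t))) := by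
    rw [Real.rpow_def_of_pos (by positivity), one_div, Real.log_inv]; ring_nf
  have h2 : t / 2 ≤ Real.log (1 + t) := by
    have := Real.one_sub_inv_le_log_of_pos (show 0 < 1 + t by linarith)
    have h3 : t / 2 ≤ 1 - (1 + t)⁻¹ := by
      rw [← sub_nonneg]
      have : 1 - (1 + t)⁻¹ - t / 2 = t * (1 - t) / (2 * (1 + t)) := by field_simp; ring
      rw [this]
      have : 0 ≤ 1 - t := by linarith
      positivity
    linarith
  have h4 : 1 + p * t / 2 ≤ Real.exp (p * Real.log (1 + t)) := by
    have := Real.add_one_le_exp (p * Real.log (1 + t))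
    nlinarith
  rw [h1, Real.exp_neg]
  have h5 : (Real.exp (p * Real.log (1 + t)))⁻¹ ≤ (1 + p * t / 2)⁻¹ :=
    inv_anti₀ (by positivity) h4
  have h6 : p / (2 + p) * t ≤ 1 - (1 + p * t / 2)⁻¹ := by
    rw [← sub_nonneg]
    have : 1 - (1 + p * t / 2)⁻¹ - p / (2 + p) * t
        = p ^ 2 * t * (1 - t) / ((2 + p) * (2 + p * t)) := by
      field_simp; ring
    rw [this]
    have : 0 ≤ 1 - t := by linarith
    positivity
  linarith

noncomputable def G (d u w : ℝ) : ℝ := (1 / (u * w)) * (1 / (u * w)) ^ d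
noncomputable def H (d u w : ℝ) : ℝ := (1 / u ^ 2 + 1 / w ^ 2) * (1 / (u * w)) ^ d

theorem G_symm (d u w : ℝ) : G d u w = G d w u := by unfold G; rw [mul_comm u w]
theorem H_symm (d u w : ℝ) : H d u w = H d w u := by
  unfold H; rw [mul_comm u w, add_comm]

theorem H_drop {d u w : ℝ} (hd : 0 < d) (hw : 0 < w) (hwu : w ≤ u) (h1 : u + w ≤ 1) :
    H d (u + w) w + d / (2 + d) * (1 / (u * w)) ≤ H d u w := by
  have hu : 0 < u := by linarith
  have hP : 1 ≤ 1 / (u * w) := by rw [le_div_iff₀ (by positivity)]; nlinarith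
  have hPd : 1 ≤ (1 / (u * w)) ^ d := Real.one_le_rpow hP hd.le
  have key := pow_drop hd (show 0 < w / u by positivity) (by rw [div_le_one hu]; exact hwu)
  have e1 : (1 / ((u + w) * w)) ^ d = (1 / (u * w)) ^ d * (1 / (1 + w / u)) ^ d := by
    rw [← Real.mul_rpow (by positivity) (by positivity)]
    congr 1; field_simp
  have hq : (1 / (1 + w / u)) ^ d ≤ 1 :=
    Real.rpow_le_one (by positivity) (by rw [div_le_one (by positivity)]; linarith [show 0 < w / u by positivity]) hd.le
  have hq0 : 0 ≤ (1 / (1 + w / u)) ^ d := by positivity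
  unfold H
  rw [e1]
  set P := (1 / (u * w)) ^ d
  set q := (1 / (1 + w / u)) ^ d
  have i1 : 1 / (u + w) ^ 2 ≤ 1 / u ^ 2 := by
    apply one_div_le_one_div_of_le (by positivity); nlinarith
  have i2 : (1 / (u + w) ^ 2) * (P * q) ≤ 1 / u ^ 2 * P := by
    apply mul_le_mul i1 _ (by positivity) (by positivity)
    nlinarith
  have i3 : d / (2 + d) * (1 / (u * w)) ≤ 1 / w ^ 2 * P * (1 - q) := by
    have : d / (2 + d) * (1 / (u * w)) = 1 / w ^ 2 * 1 * (d / (2 + d) * (w / u)) := by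
      field_simp
    rw [this]
    apply mul_le_mul _ key (by positivity) (by positivity)
    apply mul_le_mul_of_nonneg_left hPd (by positivity)
  linarith

theorem H_other {d u w : ℝ} (hw : 0 < w) (hwu : w ≤ u) :
    H d u (u + w) ≤ 4 * G d u (u + w) := by
  have hu : 0 < u := by linarith
  unfold H G
  rw [← mul_assoc]
  apply mul_le_mul_of_nonneg_right _ (by positivity)
  have i1 : 1 / (u + w) ^ 2 ≤ 1 / u ^ 2 := by
    apply one_div_le_one_div_of_le (by positivity); nlinarith
  have i2 : 1 / u ^ 2 ≤ 2 * (1 / (u * (u + w))) := by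
    rw [← mul_div_assoc, div_le_div_iff₀ (by positivity) (by positivity)]; nlinarith
  linarith

theorem G_drop {d u w : ℝ} (hd : 0 < d) (hw : 0 < w) (hwu : w ≤ u) :
    G d (u + w) w + G d u (u + w) + ((2 : ℝ) ^ d - 1) * G d u (u + w) ≤ G d u w := by
  have hu : 0 < u := by linarith
  unfold G
  have hsum : 1 / (u * w) = 1 / ((u + w) * w) + 1 / (u * (u + w)) := by field_simp
  have hxy : 1 / (u * (u + w)) ≤ 1 / ((u + w) * w) := by
    apply one_div_le_one_div_of_le (by positivity); nlinarith
  have hx : 0 < 1 / (u * (u + w)) := by positivity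
  rw [hsum]
  generalize 1 / (u * (u + w)) = x at *
  generalize 1 / ((u + w) * w) = y at *
  have a1 : (2 : ℝ) ^ d * x ^ d ≤ (y + x) ^ d := by
    rw [← Real.mul_rpow (by norm_num) hx.le]
    apply Real.rpow_le_rpow (by positivity) (by linarith) hd.le
  have a2 : y ^ d ≤ (y + x) ^ d := Real.rpow_le_rpow (by linarith) (by linarith) hd.le
  have b1 := mul_le_mul_of_nonneg_left a1 hx.le
  have b2 := mul_le_mul_of_nonneg_left a2 (show 0 ≤ y by linarith)
  linarith

/-- The potential. -/
noncomputable def F (d u w : ℝ) : ℝ :=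
  (2 + d) / d * (4 / ((2 : ℝ) ^ d - 1) * G d u w + H d u w)

theorem F_symm (d u w : ℝ) : F d u w = F d w u := by
  unfold F; rw [G_symm, H_symm]

theorem two_pow_pos {d : ℝ} (hd : 0 < d) : 0 < (2 : ℝ) ^ d - 1 := by
  have := Real.one_lt_rpow (show (1 : ℝ) < 2 by norm_num) hd
  linarith

theorem F_nonneg {d u w : ℝ} (hd : 0 < d) (hu : 0 < u) (hw : 0 < w) : 0 ≤ F d u w := by
  have := two_pow_pos hd
  unfold F G H; positivity

theorem F_step_aux {d u w : ℝ} (hd : 0 < d) (hw : 0 < w) (hwu : w ≤ u) (h1 : u + w ≤ 1) :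
    F d u (u + w) + F d (u + w) w + 1 / (u * w) ≤ F d u w := by
  have hu : 0 < u := by linarith
  have c := two_pow_pos hd
  have a1 := H_drop hd hw hwu h1
  have a2 := H_other (d := d) hw hwu
  have a3 := G_drop hd hw hwu
  have a4 := mul_le_mul_of_nonneg_left a3 (show 0 ≤ 4 / ((2 : ℝ) ^ d - 1) by positivity)
  have a5 : 4 / ((2 : ℝ) ^ d - 1) * (((2 : ℝ) ^ d - 1) * G d u (u + w)) = 4 * G d u (u + w) := by
    field_simp
  rw [mul_add, a5] at a4
  have a6 : 4 / ((2 : ℝ) ^ d - 1) * G d u (u + w) + H d u (u + w) +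
      (4 / ((2 : ℝ) ^ d - 1) * G d (u + w) w + H d (u + w) w) + d / (2 + d) * (1 / (u * w)) ≤
      4 / ((2 : ℝ) ^ d - 1) * G d u w + H d u w := by linarith
  have a7 := mul_le_mul_of_nonneg_left a6 (show 0 ≤ (2 + d) / d by positivity)
  have a8 : (2 + d) / d * (d / (2 + d) * (1 / (u * w))) = 1 / (u * w) := by field_simp
  unfold F
  rw [mul_add, mul_add, a8] at a7
  linarith

theorem F_step {d u w : ℝ} (hd : 0 < d) (hu : 0 < u) (hw : 0 < w) (h1 : u + w ≤ 1) :
    F d u (u + w) + F d (u + w) w + 1 / (u * w) ≤ F d u w := by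
  rcases le_total w u with h | h
  · exact F_step_aux hd hw h h1
  · have := F_step_aux hd hu h (by linarith)
    rw [F_symm d u w, F_symm d u, F_symm d (u + w) w, mul_comm u w, add_comm u w]
    linarith

theorem Tree.E_le {a : ℕ → ℝ} {s l r : ℕ} {d : ℝ} (hd : 0 < d) (D : Dat a s) (h : Tree a l r)
    (hr : r ≤ s) : E a l r ≤ 4 * F d (a l) (a r) := by
  induction h with
  | leaf i =>
    rw [E_leaf]
    have := F_nonneg hd (D.pos i (by omega)) (D.pos (i + 1) hr)
    linarith
  | node l m r h1 h2 hm i1 i2 =>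
    have l1 := h1.lt
    have l2 := h2.lt
    have e1 := i1 (by omega)
    have e2 := i2 (by omega)
    have e3 := E_step D h1 h2 hm hr
    have p1 := D.pos l (by omega)
    have p2 := D.pos r (by omega)
    have o := D.le_one m (by omega)
    have e4 := F_step hd p1 p2 (by linarith)
    rw [← hm] at e4
    linarith

theorem F_golden {d u w : ℝ} (hd : 0 < d) (hu : 0 < u) (hw : 0 < w) (h1 : u ≤ 2 * w)
    (h2 : w ≤ 2 * u) :
    F d u w ≤ (2 + d) / d * (4 / ((2 : ℝ) ^ d - 1) + 4) * G d u w := by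
  have c := two_pow_pos hd
  have hH : H d u w ≤ 4 * G d u w := by
    unfold H G
    rw [← mul_assoc]
    apply mul_le_mul_of_nonneg_right _ (by positivity)
    have i1 : 1 / u ^ 2 ≤ 2 * (1 / (u * w)) := by
      rw [← mul_div_assoc, div_le_div_iff₀ (by positivity) (by positivity)]; nlinarith
    have i2 : 1 / w ^ 2 ≤ 2 * (1 / (u * w)) := by
      rw [← mul_div_assoc, div_le_div_iff₀ (by positivity) (by positivity)]; nlinarith
    linarith
  unfold F
  rw [mul_assoc]
  apply mul_le_mul_of_nonneg_left _ (by positivity)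
  linarith

/-- The floor at an end compared with the end contribution. -/
theorem end_bound {u v z : ℝ} (hu : 0 < u) (hz : 0 < z) (hz2 : z ≤ 2 * u) (hv : v ≤ 1)
    (hg : 1 < u + v) : |(⌊(1 + v) / u⌋ : ℝ) / 2 - (v - z) / u| ≤ 3 := by
  have f1 := Int.floor_le ((1 + v) / u)
  have f2 := Int.lt_floor_add_one ((1 + v) / u)
  have e : (1 + v) / u / 2 - (v - z) / u = (1 - v) / u / 2 + z / u := by field_simp; ring
  have b1 : 0 ≤ (1 - v) / u := div_nonneg (by linarith) hu.le
  have b2 : (1 - v) / u ≤ 1 := by rw [div_le_one hu]; linarith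
  have b3 : 0 < z / u := by positivity
  have b4 : z / u ≤ 2 := by rw [div_le_iff₀ hu]; linarith
  rw [abs_le]
  constructor <;> linarith

theorem floor_back {x y z : ℝ} {k : ℤ} (hy : 0 < y) (hx : x ≤ 1) (hg : 1 < x + y)
    (h : x + z = k * y) : ⌊(1 + z) / y⌋ = k := by
  rw [Int.floor_eq_iff, le_div_iff₀ hy, div_lt_iff₀ hy]
  constructor <;> linarith

end BCZ

open BCZ

theorem energy_bound_golden (e : ℝ) (he : 1 < e) :
    ∃ C : ℝ, 0 < C ∧ ∀ (p : ℕ → ℝ × ℝ) (s : ℕ), IsExcursion p s →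
      ((p 0).1, (p s).1) ∈ goldenArea →
      ∑ i ∈ Finset.Icc 1 s, |∑ j ∈ Finset.range i, (khat (p j) - 3)| ≤
        C * (1 / ((p 0).1 * (p s).1)) ^ e := by
  have hd : 0 < e - 1 := by linarith
  have c := two_pow_pos hd
  refine ⟨4 * ((2 + (e - 1)) / (e - 1) * (4 / ((2 : ℝ) ^ (e - 1) - 1) + 4)) + 9,
    by positivity, ?_⟩
  intro p s ⟨hs, hO, hT, hexc⟩ hgold
  obtain ⟨_, _, _, _, g1, g2⟩ := hgold
  simp only at g1 g2
  set a : ℕ → ℝ := fun i => (p i).1 with ha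
  have hnext : ∀ i < s, (p i).2 = a (i + 1) := by
    intro i hi; simp only [ha]; rw [hT i hi]; rfl
  have hrec : ∀ i, i + 1 < s → a i + a (i + 2) = (⌊(1 + a i) / a (i + 1)⌋ : ℝ) * a (i + 1) := by
    intro i hi
    have : a (i + 2) = (p (i + 1)).2 := (hnext (i + 1) hi).symm
    rw [this, hT i (by omega), ← hnext i (by omega)]
    simp only [bczT, ha]
    ring
  have D : Dat a s := by
    refine ⟨fun i hi => (hO i hi).1, fun i hi => (hO i hi).2.1, fun i hi => ?_, fun i h0 hi => ?_⟩
    · rw [← hnext i hi]; exact (hO i hi.le).2.2.2.2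
    · obtain ⟨j, rfl⟩ : ∃ j, i = j + 1 := ⟨i - 1, by omega⟩
      exact ⟨_, hrec j hi⟩
  have p0 : 0 < a 0 := D.pos 0 (by omega)
  have ps : 0 < a s := D.pos s le_rfl
  have h5 : Real.sqrt 5 ≤ 3 := Real.sqrt_le_iff.2 (by norm_num)
  have h5' : 2 ≤ Real.sqrt 5 := Real.le_sqrt_of_sq_le (by norm_num)
  have r1 : a s ≤ 2 * a 0 := by
    have : a s / a 0 ≤ 2 := g2.trans (by linarith)
    rwa [div_le_iff₀ p0] at this
  have r2 : a 0 ≤ 2 * a s := by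
    have : 1 / 2 ≤ a s / a 0 := le_trans (by linarith) g1
    rw [le_div_iff₀ p0] at this; linarith
  have T : Tree a 0 s := tree_of_exc D s 0 s (by omega) (by omega) le_rfl hexc
  -- floors
  set k0 : ℝ := (⌊(1 + a 1) / a 0⌋ : ℝ) with hk0
  set ks : ℝ := (⌊(1 + a (s - 1)) / a s⌋ : ℝ) with hks
  have fl1 : ∀ j, j + 1 < s → (⌊(1 + a j) / a (j + 1)⌋ : ℝ) = K a (j + 1) := by
    intro j hj
    have pj := D.pos (j + 1) (by omega)
    unfold K
    rw [eq_div_iff pj.ne']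
    exact (hrec j hj).symm
  have fl2 : ∀ j, 0 < j → j < s → (⌊(1 + a (j + 1)) / a j⌋ : ℝ) = K a j := by
    intro j h0 hj
    obtain ⟨k, hk⟩ := D.int j h0 hj
    have pj := D.pos j hj.le
    have g := D.gap (j - 1) (by omega)
    rw [show j - 1 + 1 = j by omega] at g
    rw [floor_back pj (D.le_one (j - 1) (by omega)) g hk]
    unfold K
    rw [eq_div_iff pj.ne']
    exact hk.symm
  have kh : ∀ j < s, khat (p j) =
      ((⌊(1 + a j) / a (j + 1)⌋ : ℝ) + (⌊(1 + a (j + 1)) / a j⌋ : ℝ)) / 2 := by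
    intro j hj
    unfold khat; rw [hnext j hj]
  have part : ∀ i, 0 < i → i < s → ∑ j ∈ Finset.range i, (khat (p j) - 3) =
      k0 / 2 + ∑ j ∈ Finset.Ico 1 i, K a j + K a i / 2 - 3 * (i : ℝ) := by
    intro i
    induction i with
    | zero => intro h; omega
    | succ i ih =>
      intro _ hi
      rw [Finset.sum_range_succ, kh i (by omega), fl1 i hi]
      rcases Nat.eq_zero_or_pos i with rfl | h0
      · simp [hk0]; ring
      · rw [ih h0 (by omega), fl2 i h0 (by omega), Finset.sum_Ico_succ_top (by omega)]
        push_cast; ring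
  have B0 : |k0 / 2 - X a 0 s| ≤ 3 := by
    have := D.gap 0 (by omega)
    exact end_bound p0 ps r1 (D.le_one 1 (by omega)) this
  have Bs : |ks / 2 - Y a 0 s| ≤ 3 := by
    have := D.gap (s - 1) (by omega)
    rw [show s - 1 + 1 = s by omega] at this
    exact end_bound ps p0 r2 (D.le_one (s - 1) (by omega)) (by linarith)
  have tot := T.total D le_rfl
  have last : ∑ j ∈ Finset.range s, (khat (p j) - 3) =
      k0 / 2 + ∑ j ∈ Finset.Ico 1 s, K a j + ks / 2 - 3 * (s : ℝ) := by
    obtain ⟨t, rfl⟩ : ∃ t, s = t + 1 := ⟨s - 1, by omega⟩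
    rw [Finset.sum_range_succ, kh t (by omega)]
    simp only [Nat.add_sub_cancel] at hks
    rw [← hks]
    rcases Nat.eq_zero_or_pos t with rfl | h0
    · simp [hk0]; ring
    · rw [part t h0 (by omega), fl2 t h0 (by omega), Finset.sum_Ico_succ_top (by omega)]
      push_cast; ring
  have Blast : |∑ j ∈ Finset.range s, (khat (p j) - 3)| ≤ 9 := by
    rw [last]
    simp only [zero_add, Nat.cast_zero] at tot
    rw [abs_le] at B0 Bs ⊢
    constructor <;> linarith [B0.1, B0.2, Bs.1, Bs.2]
  have Bmid : ∀ i ∈ Finset.Ico 1 s, |∑ j ∈ Finset.range i, (khat (p j) - 3)| ≤ |S a 0 s i| + 9 := by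
    intro i hi
    rw [Finset.mem_Ico] at hi
    rw [part i (by omega) hi.2]
    have : k0 / 2 + ∑ j ∈ Finset.Ico 1 i, K a j + K a i / 2 - 3 * (i : ℝ) =
        S a 0 s i + (k0 / 2 - X a 0 s) := by
      unfold S; simp only [zero_add, Nat.cast_zero]; ring
    rw [this]
    exact (abs_add_le _ _).trans (by linarith)
  have Ebd := T.E_le hd D le_rfl
  have Fbd := F_golden hd p0 ps r2 r1
  have Lbd := T.length D le_rfl
  have hP : 1 ≤ 1 / (a 0 * a s) := by
    rw [le_div_iff₀ (by positivity)]
    nlinarith [D.le_one 0 (by omega), D.le_one s le_rfl]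
  have hG : G (e - 1) (a 0) (a s) = (1 / (a 0 * a s)) ^ e := by
    unfold G
    rw [← Real.rpow_one_add' (by positivity) (by linarith)]
    congr 1; ring
  have hPG : 1 / (a 0 * a s) ≤ (1 / (a 0 * a s)) ^ e := by
    have := Real.rpow_le_rpow_of_exponent_le hP he.le
    rwa [Real.rpow_one] at this
  rw [hG] at Fbd
  have hsum : ∑ i ∈ Finset.Icc 1 s, |∑ j ∈ Finset.range i, (khat (p j) - 3)| =
      ∑ i ∈ Finset.Ico 1 s, |∑ j ∈ Finset.range i, (khat (p j) - 3)| +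
        |∑ j ∈ Finset.range s, (khat (p j) - 3)| := by
    rw [← Finset.sum_Ico_succ_top (by omega)]
    rfl
  rw [hsum]
  have M := Finset.sum_le_sum Bmid
  rw [Finset.sum_add_distrib] at M
  simp only [Finset.sum_const, Nat.card_Ico, nsmul_eq_mul] at M
  rw [Nat.cast_sub hs] at M
  have EE : ∑ i ∈ Finset.Ico 1 s, |S a 0 s i| = E a 0 s := by simp [E]
  rw [EE] at M
  simp only [Nat.cast_zero, Nat.cast_one, sub_zero] at M Lbd
  change _ ≤ _ * (1 / (a 0 * a s)) ^ e
  rw [add_mul]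
  linarith
end

section
/- Let g be a real-valued function on the Farey triangle Ω. Suppose there exist α ≥ 1 and C₁ > 0 such that for every excursion ((a_i,b_i))_{i=0}^{s} of the BCZ map, |Σ_{j=0}^{s−1} g(a_j,b_j)| < C₁·((a_0/a_s)^α + (a_s/a_0)^α). Then for every ε > 0 there exists C > 0 such that for every excursion ((a_i,b_i))_{i=0}^{s} with (a_0, a_s) ∈ Δ, Σ_{i=1}^{s} |Σ_{j=0}^{i−1} g(a_j,b_j)| ≤ C · (1/(a_0·a_s))^{(α+1)/2 + ε}. -/
/-- Abstract sequences with the excursion property. -/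
def GoodSeq (x : ℕ → ℝ) (s : ℕ) : Prop :=
  (∀ i ≤ s, 0 < x i) ∧ (∀ i, i + 2 ≤ s → ∃ k : ℤ, x i + x (i + 2) = k * x (i + 1)) ∧
  (∀ i, 0 < i → i < s → x 0 < x i ∧ x s < x i)

/-- Some interior point is the sum of its neighbours (the leftmost maximum). -/
lemma GoodSeq.exists_max {x : ℕ → ℝ} {s : ℕ} (h : GoodSeq x s) (hs : 2 ≤ s) :
    ∃ m, m + 2 ≤ s ∧ x (m + 1) = x m + x (m + 2) := by
  obtain ⟨hpos, hrel, hint⟩ := h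
  obtain ⟨m0, hm0, hmax0⟩ := Finset.exists_max_image (Finset.Ioo 0 s) x ⟨1, by simp; omega⟩
  have hex : ∃ n, 0 < n ∧ n < s ∧ ∀ i, 0 < i → i < s → x i ≤ x n := by
    simp only [Finset.mem_Ioo] at hm0 hmax0
    exact ⟨m0, hm0.1, hm0.2, fun i h1 h2 => hmax0 i ⟨h1, h2⟩⟩
  classical
  obtain ⟨n1, n2, n3⟩ := Nat.find_spec hex
  have hmin := fun k (hk : k < Nat.find hex) => Nat.find_min hex hk
  generalize Nat.find hex = n at n1 n2 n3 hmin
  obtain ⟨m, rfl⟩ : ∃ m, n = m + 1 := ⟨n - 1, by omega⟩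
  refine ⟨m, by omega, ?_⟩
  obtain ⟨k, hk⟩ := hrel m (by omega)
  have hl : x m < x (m + 1) := by
    rcases Nat.eq_zero_or_pos m with h0 | h0
    · subst h0; exact (hint 1 (by omega) n2).1
    · by_contra hcon
      push Not at hcon
      exact hmin m (by omega) ⟨h0, by omega, fun i h1 h2 => (n3 i h1 h2).trans hcon⟩
  have hr : x (m + 2) ≤ x (m + 1) := by
    rcases Nat.lt_or_ge (m + 2) s with h0 | h0
    · exact n3 _ (by omega) h0
    · have : m + 2 = s := by omega
      rw [this]; exact (hint (m + 1) (by omega) n2).2.le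
  have p0 := hpos m (by omega)
  have p1 := hpos (m + 1) (by omega)
  have p2 := hpos (m + 2) (by omega)
  have k1 : (0 : ℝ) < k := by
    by_contra hcon
    push Not at hcon
    nlinarith
  have k2 : (k : ℝ) < 2 := by
    by_contra hcon
    push Not at hcon
    nlinarith
  have : k = 1 := by
    have h1 : 0 < k := by exact_mod_cast k1
    have h2 : k < 2 := by exact_mod_cast k2
    omega
  subst this
  push_cast at hk
  linarith

/-- The unique interior minimum is the sum of the end points. -/
lemma GoodSeq.exists_mediant (s : ℕ) : ∀ (x : ℕ → ℝ), GoodSeq x (s + 2) →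
    ∃ k, 0 < k ∧ k < s + 2 ∧ x k = x 0 + x (s + 2) ∧
      ∀ i, 0 < i → i < s + 2 → i ≠ k → x k < x i := by
  induction s with
  | zero =>
    intro x h
    obtain ⟨m, hm, hx⟩ := h.exists_max (by omega)
    obtain rfl : m = 0 := by omega
    exact ⟨1, by omega, by omega, by simpa using hx, fun i h1 h2 h3 => by omega⟩
  | succ s ih =>
    intro x h
    obtain ⟨m, hm, hx⟩ := h.exists_max (by omega)
    obtain ⟨hpos, hrel, hint⟩ := h
    let y : ℕ → ℝ := fun i => if i ≤ m then x i else x (i + 1)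
    have y1 : ∀ i, i ≤ m → y i = x i := fun i hi => by simp [y, hi]
    have y2 : ∀ i, m < i → y i = x (i + 1) := fun i hi => by
      simp [y, Nat.not_le.mpr hi]
    have hy : GoodSeq y (s + 2) := by
      refine ⟨?_, ?_, ?_⟩
      · intro i hi
        rcases Nat.lt_or_ge m i with h0 | h0
        · rw [y2 i h0]; exact hpos _ (by omega)
        · rw [y1 i h0]; exact hpos _ (by omega)
      · intro i hi
        rcases Nat.lt_or_ge m i with h0 | h0
        · rw [y2 i h0, y2 _ (by omega), y2 _ (by omega)]
          exact hrel (i + 1) (by omega)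
        · rw [y1 i h0]
          rcases Nat.lt_or_ge m (i + 1) with h1 | h1
          · obtain rfl : i = m := by omega
            rw [y2 _ (by omega), y2 _ (by omega)]
            obtain ⟨k, hk⟩ := hrel (i + 1) (by omega)
            refine ⟨k - 1, ?_⟩
            have e1 : i + 1 + 2 = i + 2 + 1 := by omega
            have e2 : i + 1 + 1 = i + 2 := by omega
            rw [e1, e2] at hk
            rw [e2]
            push_cast
            linarith
          · rw [y1 _ h1]
            rcases Nat.lt_or_ge m (i + 2) with h2 | h2
            · obtain rfl : i + 1 = m := by omega
              rw [y2 _ (by omega)]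
              obtain ⟨k, hk⟩ := hrel i (by omega)
              refine ⟨k - 1, ?_⟩
              have e1 : i + 1 + 2 = i + 2 + 1 := by omega
              have e2 : i + 1 + 1 = i + 2 := by omega
              rw [e1, e2] at hx
              push_cast
              linarith
            · rw [y1 _ h2]
              exact hrel i (by omega)
      · intro i hi0 hi1
        rw [y1 0 (by omega), y2 (s + 2) (by omega)]
        rcases Nat.lt_or_ge m i with h0 | h0
        · rw [y2 i h0]; exact hint _ (by omega) (by omega)
        · rw [y1 i h0]; exact hint _ (by omega) (by omega)
    obtain ⟨k, hk0, hk1, hk2, hk3⟩ := ih y hy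
    rw [y1 0 (by omega), y2 (s + 2) (by omega)] at hk2
    have key : ∀ j, 0 < j → j < s + 2 → y k ≤ y j := by
      intro j hj0 hj1
      by_cases hjk : j = k
      · rw [hjk]
      · exact (hk3 j hj0 hj1 hjk).le
    have hmax : y k < x (m + 1) := by
      rcases Nat.eq_zero_or_pos m with h0 | h0
      · have := key 1 (by omega) (by omega)
        rw [y2 1 (by omega)] at this
        subst h0
        have := hpos 0 (by omega)
        simp only [Nat.zero_add, Nat.reduceAdd] at *
        linarith
      · have := key m (by omega) (by omega)
        rw [y1 m le_rfl] at this
        have := hpos (m + 2) (by omega)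
        linarith
    have fin : ∀ k', k' ≠ m + 1 → y k = x k' →
        (∀ i, 0 < i → i < s + 1 + 2 → i ≠ k' → i ≠ m + 1 → x k' < x i) →
        (∀ i, 0 < i → i < s + 1 + 2 → i ≠ k' → x k' < x i) := by
      intro k' _ hyk h1 i hi0 hi1 hi2
      by_cases him : i = m + 1
      · rw [him, ← hyk]; exact hmax
      · exact h1 i hi0 hi1 hi2 him
    rcases Nat.lt_or_ge m k with h0 | h0
    · refine ⟨k + 1, by omega, by omega, ?_, ?_⟩
      · rw [← y2 k h0, hk2]
      · refine fin (k + 1) (by omega) (y2 k h0) ?_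
        intro i hi0 hi1 hi2 hi3
        rw [← y2 k h0]
        rcases Nat.lt_or_ge m i with h1 | h1
        · have := hk3 (i - 1) (by omega) (by omega) (by omega)
          rw [y2 (i - 1) (by omega)] at this
          rwa [show i - 1 + 1 = i by omega] at this
        · have := hk3 i (by omega) (by omega) (by omega)
          rwa [y1 i h1] at this
    · refine ⟨k, by omega, by omega, ?_, ?_⟩
      · rw [← y1 k h0, hk2]
      · refine fin k (by omega) (y1 k h0) ?_
        intro i hi0 hi1 hi2 hi3
        rw [← y1 k h0]
        rcases Nat.lt_or_ge m i with h1 | h1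
        · have := hk3 (i - 1) (by omega) (by omega) (by omega)
          rw [y2 (i - 1) (by omega)] at this
          rwa [show i - 1 + 1 = i by omega] at this
        · have := hk3 i (by omega) (by omega) (by omega)
          rwa [y1 i h1] at this

/-- Splitting an excursion at its mediant. -/
lemma IsExcursion.split {p : ℕ → ℝ × ℝ} {s : ℕ} (h : IsExcursion p s) (hs : 2 ≤ s) :
    ∃ k, 0 < k ∧ k < s ∧ (p k).1 = (p 0).1 + (p s).1 ∧ IsExcursion p k ∧
      IsExcursion (fun i => p (k + i)) (s - k) := by
  obtain ⟨h1, h2, h3, h4⟩ := h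
  have hg : GoodSeq (fun i => (p i).1) s := by
    refine ⟨fun i hi => (h2 i hi).1, ?_, h4⟩
    intro i hi
    refine ⟨⌊(1 + (p i).1) / (p i).2⌋, ?_⟩
    beta_reduce
    rw [h3 (i + 1) (by omega), h3 i (by omega)]
    simp [bczT]
  obtain ⟨t, rfl⟩ : ∃ t, s = t + 2 := ⟨s - 2, by omega⟩
  obtain ⟨k, k0, k1, k2, k3⟩ := GoodSeq.exists_mediant t _ hg
  refine ⟨k, k0, k1, k2, ⟨k0, fun i hi => h2 i (by omega), fun i hi => h3 i (by omega), ?_⟩,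
    ⟨by omega, fun i hi => h2 _ (by omega), fun i hi => h3 (k + i) (by omega), ?_⟩⟩
  · intro i i0 i1
    exact ⟨(h4 i i0 (by omega)).1, k3 i i0 (by omega) (by omega)⟩
  · intro i i0 i1
    have e : k + (t + 2 - k) = t + 2 := by omega
    simp only [e, Nat.add_zero]
    exact ⟨k3 _ (by omega) (by omega) (by omega), (h4 _ (by omega) (by omega)).2⟩

lemma IsExcursion.length_le (s : ℕ) : ∀ p : ℕ → ℝ × ℝ, IsExcursion p s →
    (s : ℝ) ≤ 1 / ((p 0).1 * (p s).1) := by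
  induction s using Nat.strong_induction_on with
  | _ s ih =>
    intro p h
    have a0 := h.2.1 0 (by omega)
    have as := h.2.1 s le_rfl
    rcases Nat.lt_or_ge s 2 with hs | hs
    · have : s = 1 := by have := h.1; omega
      subst this
      rw [le_div_iff₀ (mul_pos a0.1 as.1)]
      have := mul_le_one₀ a0.2.1 as.1.le as.2.1
      simpa using this
    · obtain ⟨k, k0, k1, k2, k3, k4⟩ := h.split hs
      have i1 := ih k k1 p k3
      have i2 := ih (s - k) (by omega) _ k4
      have e : k + (s - k) = s := by omega
      simp only [e, Nat.add_zero] at i2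
      rw [Nat.cast_sub k1.le] at i2
      rw [k2] at i1 i2
      have p0 := a0.1
      have p1 := as.1
      have : 1 / ((p 0).1 * (p s).1) = 1 / ((p 0).1 * ((p 0).1 + (p s).1))
          + 1 / (((p 0).1 + (p s).1) * (p s).1) := by
        field_simp
        ring
      rw [this]
      linarith

/-- Splitting the energy. -/
lemma energy_split (g : ℝ × ℝ → ℝ) (p : ℕ → ℝ × ℝ) (k t : ℕ) (ht : 0 < t) :
    ∑ i ∈ Finset.range (k + t), |∑ j ∈ Finset.range i, g (p j)| ≤
      ∑ i ∈ Finset.range k, |∑ j ∈ Finset.range i, g (p j)|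
      + ∑ i ∈ Finset.range t, |∑ j ∈ Finset.range i, g (p (k + j))|
      + t * |∑ j ∈ Finset.range k, g (p j)| := by
  rw [Finset.sum_range_add, add_assoc]
  gcongr
  calc ∑ i ∈ Finset.range t, |∑ j ∈ Finset.range (k + i), g (p j)|
      ≤ ∑ i ∈ Finset.range t, (|∑ j ∈ Finset.range i, g (p (k + j))|
          + |∑ j ∈ Finset.range k, g (p j)|) := by
        gcongr with i hi
        rw [Finset.sum_range_add, add_comm]
        exact abs_add_le _ _
    _ = _ := by rw [Finset.sum_add_distrib]; simp

/-- The cost of a split. -/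
lemma cost_le (α : ℝ) (hα : 1 ≤ α) (a b : ℝ) (ha : 0 < a) (hb : 0 < b) (hab : a + b ≤ 1) :
    ((a + b) / a) ^ α * (1 / ((a + b) * b)) ≤
      2 ^ α * 2 * ((min a b) ^ (-α) / (a + b)) := by
  have hw : 0 < a + b := by positivity
  have h2 : (1 : ℝ) ≤ 2 ^ α := Real.one_le_rpow (by norm_num) (by linarith)
  rcases le_total a b with h | h
  · rw [min_eq_left h, Real.div_rpow hw.le ha.le, Real.rpow_neg ha.le]
    have h1 : (a + b) ^ α ≤ a + b := by
      calc (a + b) ^ α ≤ (a + b) ^ (1 : ℝ) :=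
            Real.rpow_le_rpow_of_exponent_ge hw hab hα
        _ = a + b := Real.rpow_one _
    have hp : 0 < a ^ α := Real.rpow_pos_of_pos ha α
    calc (a + b) ^ α / a ^ α * (1 / ((a + b) * b))
        ≤ (a + b) / a ^ α * (1 / ((a + b) * b)) := by gcongr
      _ = (a ^ α)⁻¹ * (1 / b) := by field_simp
      _ ≤ (a ^ α)⁻¹ * (2 / (a + b)) := by
          gcongr (a ^ α)⁻¹ * ?_
          rw [div_le_div_iff₀ hb hw]; linarith
      _ = 1 * 2 * ((a ^ α)⁻¹ / (a + b)) := by ring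
      _ ≤ _ := by gcongr
  · rw [min_eq_right h]
    have h1 : ((a + b) / a) ^ α ≤ 2 ^ α := by
      apply Real.rpow_le_rpow (by positivity) _ (by linarith)
      rw [div_le_iff₀ ha]; linarith
    have h3 : 1 / b ≤ b ^ (-α) := by
      rw [one_div, ← Real.rpow_neg_one]
      exact Real.rpow_le_rpow_of_exponent_ge hb (by linarith) (by linarith)
    have hp : 0 < b ^ (-α) := Real.rpow_pos_of_pos hb _
    calc ((a + b) / a) ^ α * (1 / ((a + b) * b))
        ≤ 2 ^ α * (1 / ((a + b) * b)) := by gcongr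
      _ = 2 ^ α * 1 * ((1 / b) / (a + b)) := by field_simp
      _ ≤ 2 ^ α * 2 * (b ^ (-α) / (a + b)) := by gcongr; norm_num

/-- The potential. -/
noncomputable def potl (α ε M a b : ℝ) : ℝ :=
  a ^ (-α - 1) * b ^ (-ε) + b ^ (-α - 1) * a ^ (-ε) + M * (1 / (a * b)) ^ ((α + 1) / 2 + ε)

lemma potl_comm (α ε M a b : ℝ) : potl α ε M a b = potl α ε M b a := by
  unfold potl
  rw [mul_comm a b]; ring

lemma rpow_gap (ε a b : ℝ) (hε : 0 < ε) (ha : 0 < a) (hb : 0 < b) (hab : a + b ≤ 1) :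
    ε * a / (a + b) ≤ b ^ (-ε) - (a + b) ^ (-ε) := by
  have hw : 0 < a + b := by positivity
  have h1 : b ^ (-ε) = (a + b) ^ (-ε) * (b / (a + b)) ^ (-ε) := by
    rw [← Real.mul_rpow hw.le (by positivity)]
    congr 1; field_simp
  have h2 : 1 + ε * a / (a + b) ≤ (b / (a + b)) ^ (-ε) := by
    rw [Real.rpow_def_of_pos (by positivity)]
    have l1 := Real.add_one_le_exp (Real.log (b / (a + b)) * -ε)
    have l2 := Real.log_le_sub_one_of_pos (show 0 < b / (a + b) by positivity)
    have l3 : b / (a + b) - 1 = - (a / (a + b)) := by field_simp; ring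
    rw [l3] at l2
    have : ε * a / (a + b) = ε * (a / (a + b)) := by ring
    rw [this]
    nlinarith
  have h3 : 1 ≤ (a + b) ^ (-ε) :=
    Real.one_le_rpow_of_pos_of_le_one_of_nonpos hw hab (by linarith)
  have h4 : 0 ≤ ε * a / (a + b) := by positivity
  rw [h1]
  nlinarith

lemma pow_gap (α ε a b : ℝ) (hα : 1 ≤ α) (hε : 0 < ε) (ha : 0 < a) (hle : a ≤ b)
    (hab : a + b ≤ 1) :
    (1 - (1 / 2) ^ ((α - 1) / 2 + ε)) / 2 * b ^ (-(α + 1 + ε)) ≤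
      (1 / (a * b)) ^ ((α + 1) / 2 + ε) - (1 / (a * (a + b))) ^ ((α + 1) / 2 + ε)
        - (1 / ((a + b) * b)) ^ ((α + 1) / 2 + ε) := by
  have hb : 0 < b := by linarith
  have hw : 0 < a + b := by positivity
  set κ := (α - 1) / 2 + ε with hκ
  have hκ0 : 0 < κ := by rw [hκ]; linarith
  have hβ : (α + 1) / 2 + ε = 1 + κ := by rw [hκ]; ring
  rw [hβ]
  set X := 1 / (a * b) with hX
  set Y := 1 / (a * (a + b)) with hY
  set Z := 1 / ((a + b) * b) with hZ
  have X0 : 0 < X := by positivity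
  have Y0 : 0 < Y := by positivity
  have Z0 : 0 < Z := by positivity
  have hXYZ : X = Y + Z := by rw [hX, hY, hZ]; field_simp; ring
  have hZX : Z ≤ 1 / 2 * X := by
    rw [hX, hZ, div_mul_div_comm, div_le_div_iff₀ (by positivity) (by positivity)]
    nlinarith
  have f : ∀ t : ℝ, 0 < t → t ^ (1 + κ) = t * t ^ κ := fun t ht => by
    rw [Real.rpow_add ht, Real.rpow_one]
  rw [f X X0, f Y Y0, f Z Z0]
  have e1 : Y ^ κ ≤ X ^ κ := Real.rpow_le_rpow Y0.le (by linarith) hκ0.le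
  have e2 : Z ^ κ ≤ (1 / 2) ^ κ * X ^ κ := by
    rw [← Real.mul_rpow (by norm_num) X0.le]
    exact Real.rpow_le_rpow Z0.le hZX hκ0.le
  have c0 : (1 / 2 : ℝ) ^ κ < 1 := Real.rpow_lt_one (by norm_num) (by norm_num) hκ0
  have e3 : b ^ (-2 : ℝ) ≤ 2 * Z := by
    rw [hZ, Real.rpow_neg hb.le, mul_one_div, inv_eq_one_div, Real.rpow_two,
      div_le_div_iff₀ (by positivity) (by positivity)]
    nlinarith
  have e4 : b ^ (-2 : ℝ) ≤ X := by
    rw [hX, Real.rpow_neg hb.le, inv_eq_one_div, Real.rpow_two]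
    apply one_div_le_one_div_of_le (by positivity)
    nlinarith
  have e5 : b ^ (-(α + 1 + ε)) ≤ b ^ (-2 : ℝ) * (b ^ (-2 : ℝ)) ^ κ := by
    rw [← Real.rpow_mul hb.le, ← Real.rpow_add hb]
    apply Real.rpow_le_rpow_of_exponent_ge hb (by linarith)
    rw [hκ]; linarith
  have e6 : b ^ (-(α + 1 + ε)) ≤ 2 * Z * X ^ κ := by
    refine e5.trans ?_
    have := Real.rpow_pos_of_pos hb (-2)
    gcongr
  calc (1 - (1 / 2) ^ κ) / 2 * b ^ (-(α + 1 + ε))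
      ≤ (1 - (1 / 2) ^ κ) / 2 * (2 * Z * X ^ κ) := by
        apply mul_le_mul_of_nonneg_left e6; linarith
    _ = Z * (X ^ κ - (1 / 2) ^ κ * X ^ κ) := by ring
    _ ≤ Z * (X ^ κ - Z ^ κ) + Y * (X ^ κ - Y ^ κ) := by
        have := mul_nonneg Y0.le (sub_nonneg.2 e1)
        have := mul_le_mul_of_nonneg_left e2 Z0.le
        linarith
    _ = (Y + Z) * X ^ κ - Y * Y ^ κ - Z * Z ^ κ := by ring
    _ = _ := by rw [← hXYZ]

lemma potl_step_aux (α ε M : ℝ) (hα : 1 ≤ α) (hε : 0 < ε)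
    (hM : 2 ≤ M * ((1 - (1 / 2) ^ ((α - 1) / 2 + ε)) / 2)) (hM0 : 0 ≤ M) (a b : ℝ)
    (ha : 0 < a) (hle : a ≤ b) (hab : a + b ≤ 1) :
    ε * (a ^ (-α) / (a + b)) ≤
      potl α ε M a b - potl α ε M a (a + b) - potl α ε M (a + b) b := by
  have hb : 0 < b := by linarith
  have hw : 0 < a + b := by positivity
  have g1 := mul_le_mul_of_nonneg_left (pow_gap α ε a b hα hε ha hle hab) hM0
  have g2 := rpow_gap ε a b hε ha hb hab
  have hB : 0 < b ^ (-(α + 1 + ε)) := Real.rpow_pos_of_pos hb _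
  have g3 := mul_le_mul_of_nonneg_right hM hB.le
  have hA : 0 < a ^ (-α - 1) := Real.rpow_pos_of_pos ha _
  have g4 := mul_le_mul_of_nonneg_left g2 hA.le
  have g5 : a ^ (-α - 1) * (ε * a / (a + b)) = ε * (a ^ (-α) / (a + b)) := by
    have : a ^ (-α) = a ^ (-α - 1) * a := by
      conv_rhs => rw [← Real.rpow_add_one ha.ne']
      congr 1; ring
    rw [this]; ring
  have eB : b ^ (-(α + 1 + ε)) = b ^ (-α - 1) * b ^ (-ε) := by
    rw [← Real.rpow_add hb]; congr 1; ring
  have m1 : (a + b) ^ (-α - 1) ≤ b ^ (-α - 1) :=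
    Real.rpow_le_rpow_of_nonpos hb (by linarith) (by linarith)
  have m2 : (a + b) ^ (-ε) ≤ b ^ (-ε) :=
    Real.rpow_le_rpow_of_nonpos hb (by linarith) (by linarith)
  have q1 := mul_le_mul_of_nonneg_right m1 (Real.rpow_pos_of_pos ha (-ε)).le
  have q2 := mul_le_mul_of_nonneg_right m1 (Real.rpow_pos_of_pos hb (-ε)).le
  have q3 := mul_le_mul_of_nonneg_left m2 (Real.rpow_pos_of_pos hb (-α - 1)).le
  unfold potl
  rw [g5] at g4
  rw [eB] at g1 g3
  linarith

lemma potl_step (α ε M : ℝ) (hα : 1 ≤ α) (hε : 0 < ε)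
    (hM : 2 ≤ M * ((1 - (1 / 2) ^ ((α - 1) / 2 + ε)) / 2)) (hM0 : 0 ≤ M) (a b : ℝ)
    (ha : 0 < a) (hb : 0 < b) (hab : a + b ≤ 1) :
    ε * ((min a b) ^ (-α) / (a + b)) ≤
      potl α ε M a b - potl α ε M a (a + b) - potl α ε M (a + b) b := by
  rcases le_total a b with h | h
  · rw [min_eq_left h]
    exact potl_step_aux α ε M hα hε hM hM0 a b ha h hab
  · rw [min_eq_right h]
    have := potl_step_aux α ε M hα hε hM hM0 b a hb h (by linarith)
    rw [potl_comm α ε M a b, potl_comm α ε M a (a + b), potl_comm α ε M (a + b) b, add_comm a b]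
    linarith

lemma energy_le_potl (g : ℝ × ℝ → ℝ) (α C₁ : ℝ) (hα : 1 ≤ α) (hC₁ : 0 < C₁)
    (hg : ∀ (p : ℕ → ℝ × ℝ) (s : ℕ), IsExcursion p s →
      |∑ j ∈ Finset.range s, g (p j)| <
        C₁ * (((p 0).1 / (p s).1) ^ α + ((p s).1 / (p 0).1) ^ α))
    (ε M : ℝ) (hε : 0 < ε) 
    (hM : 2 ≤ M * ((1 - (1 / 2) ^ ((α - 1) / 2 + ε)) / 2)) (hM0 : 0 ≤ M) (s : ℕ) :
    ∀ p : ℕ → ℝ × ℝ, IsExcursion p s →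
      ∑ i ∈ Finset.range s, |∑ j ∈ Finset.range i, g (p j)| ≤
        2 * C₁ * (2 ^ α * 2) / ε * potl α ε M (p 0).1 (p s).1 := by
  induction s using Nat.strong_induction_on with
  | _ s ih =>
    intro p h
    have a0 := (h.2.1 0 (by omega)).1
    have as := (h.2.1 s le_rfl).1
    rcases Nat.lt_or_ge s 2 with hs | hs
    · have : s = 1 := by have := h.1; omega
      subst this
      simp only [Finset.range_one, Finset.sum_singleton, Finset.range_zero, Finset.sum_empty,
        abs_zero]
      unfold potl
      positivity
    · obtain ⟨k, k0, k1, k2, k3, k4⟩ := h.split hs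
      have i1 := ih k k1 p k3
      have i2 := ih (s - k) (by omega) _ k4
      have hl := IsExcursion.length_le _ _ k4
      have e : k + (s - k) = s := by omega
      simp only [e, Nat.add_zero] at i2 hl
      have hw := (h.2.1 k k1.le).2.1
      have hk := hg p k k3
      rw [k2] at i1 i2 hl hw hk
      have sp := energy_split g p k (s - k) (by omega)
      rw [e] at sp
      set a := (p 0).1
      set b := (p s).1
      have w0 : 0 < a + b := by positivity
      have hS : |∑ j ∈ Finset.range k, g (p j)| ≤ 2 * C₁ * ((a + b) / a) ^ α := by
        have : (a / (a + b)) ^ α ≤ ((a + b) / a) ^ α := by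
          apply Real.rpow_le_rpow (by positivity) _ (by linarith)
          rw [div_le_div_iff₀ w0 a0]
          nlinarith
        nlinarith
      have hc : ((s - k : ℕ) : ℝ) * |∑ j ∈ Finset.range k, g (p j)| ≤
          2 * C₁ * (2 ^ α * 2) / ε * (ε * ((min a b) ^ (-α) / (a + b))) := by
        calc ((s - k : ℕ) : ℝ) * |∑ j ∈ Finset.range k, g (p j)|
            ≤ (1 / ((a + b) * b)) * (2 * C₁ * ((a + b) / a) ^ α) := by gcongr
          _ = 2 * C₁ * (((a + b) / a) ^ α * (1 / ((a + b) * b))) := by ring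
          _ ≤ 2 * C₁ * (2 ^ α * 2 * ((min a b) ^ (-α) / (a + b))) := by
              gcongr 2 * C₁ * ?_
              exact cost_le α hα a b a0 as hw
          _ = _ := by field_simp
      have st := mul_le_mul_of_nonneg_left (potl_step α ε M hα hε hM hM0 a b a0 as hw)
        (show 0 ≤ 2 * C₁ * (2 ^ α * 2) / ε by positivity)
      linarith

lemma potl_balanced (α ε a b : ℝ) (hα : 1 ≤ α) (hε : 0 < ε) (ha : 0 < a) (hb : 0 < b)
    (ha1 : a ≤ 1) (h1 : b ≤ 2 * a) :
    a ^ (-α - 1) * b ^ (-ε) ≤ 2 ^ ((α + 1) / 2 + ε) * (1 / (a * b)) ^ ((α + 1) / 2 + ε) := by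
  rw [← Real.mul_rpow (by norm_num) (by positivity), Real.rpow_add (by positivity)]
  have e1 : a ^ (-α - 1) = (a ^ (-2 : ℝ)) ^ ((α + 1) / 2) := by
    rw [← Real.rpow_mul ha.le]; congr 1; ring
  have e2 : b ^ (-ε) = (1 / b) ^ ε := by
    rw [Real.rpow_neg hb.le, one_div, Real.inv_rpow hb.le]
  rw [e1, e2]
  have f1 : a ^ (-2 : ℝ) ≤ 2 * (1 / (a * b)) := by
    rw [Real.rpow_neg ha.le, inv_eq_one_div, Real.rpow_two, mul_one_div,
      div_le_div_iff₀ (by positivity) (by positivity)]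
    nlinarith
  have f2 : 1 / b ≤ 2 * (1 / (a * b)) := by
    rw [mul_one_div, div_le_div_iff₀ (by positivity) (by positivity)]
    nlinarith
  have := Real.rpow_pos_of_pos ha (-2)
  gcongr

theorem energy_bound_general (g : ℝ × ℝ → ℝ) (α C₁ : ℝ) (hα : 1 ≤ α) (hC₁ : 0 < C₁)
    (hg : ∀ (p : ℕ → ℝ × ℝ) (s : ℕ), IsExcursion p s →
      |∑ j ∈ Finset.range s, g (p j)| <
        C₁ * (((p 0).1 / (p s).1) ^ α + ((p s).1 / (p 0).1) ^ α))
    (ε : ℝ) (hε : 0 < ε) :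
    ∃ C : ℝ, 0 < C ∧ ∀ (p : ℕ → ℝ × ℝ) (s : ℕ), IsExcursion p s →
      ((p 0).1, (p s).1) ∈ goldenArea →
      ∑ i ∈ Finset.Icc 1 s, |∑ j ∈ Finset.range i, g (p j)| ≤
        C * (1 / ((p 0).1 * (p s).1)) ^ ((α + 1) / 2 + ε) := by
  have hc0 : (1 / 2 : ℝ) ^ ((α - 1) / 2 + ε) < 1 :=
    Real.rpow_lt_one (by norm_num) (by norm_num) (by linarith)
  set c := (1 - (1 / 2 : ℝ) ^ ((α - 1) / 2 + ε)) / 2 with hc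
  have hcpos : 0 < c := by rw [hc]; linarith
  set M := 2 / c with hMdef
  have hM : 2 ≤ M * c := by rw [hMdef, div_mul_cancel₀ _ hcpos.ne']
  have hM0 : 0 < M := by positivity
  set K := 2 * C₁ * (2 ^ α * 2) / ε with hK
  have hK0 : 0 < K := by positivity
  refine ⟨K * (2 * 2 ^ ((α + 1) / 2 + ε) + M) + 2 * C₁ * 2 ^ α, by positivity, ?_⟩
  intro p s h hΔ
  have hE := energy_le_potl g α C₁ hα hC₁ hg ε M hε hM hM0.le s p h
  rw [← hK] at hE
  have hS := hg p s h
  obtain ⟨a0, a1, b0, b1, hr1, hr2⟩ := hΔ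
  simp only at a0 a1 b0 b1 hr1 hr2
  set a := (p 0).1
  set b := (p s).1
  have s5 : Real.sqrt 5 ≤ 3 := by
    rw [Real.sqrt_le_left (by norm_num)]; norm_num
  have s5' : 2 ≤ Real.sqrt 5 := by
    apply Real.le_sqrt_of_sq_le; norm_num
  have hba : b ≤ 2 * a := by
    rw [div_le_iff₀ a0] at hr2
    nlinarith
  have hab : a ≤ 2 * b := by
    rw [le_div_iff₀ a0] at hr1
    nlinarith
  have q1 := potl_balanced α ε a b hα hε a0 b0 a1 hba
  have q2 := potl_balanced α ε b a hα hε b0 a0 b1 hab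
  rw [mul_comm b a] at q2
  have hU : 1 ≤ (1 / (a * b)) ^ ((α + 1) / 2 + ε) := by
    apply Real.one_le_rpow _ (by linarith)
    rw [le_div_iff₀ (by positivity)]
    nlinarith
  have r1 : (a / b) ^ α ≤ 2 ^ α := by
    apply Real.rpow_le_rpow (by positivity) _ (by linarith)
    rw [div_le_iff₀ b0]; linarith
  have r2 : (b / a) ^ α ≤ 2 ^ α := by
    apply Real.rpow_le_rpow (by positivity) _ (by linarith)
    rw [div_le_iff₀ a0]; linarith
  have hS2 : |∑ j ∈ Finset.range s, g (p j)| ≤ 2 * C₁ * 2 ^ α := by nlinarith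
  have hsum : ∑ i ∈ Finset.Icc 1 s, |∑ j ∈ Finset.range i, g (p j)| =
      ∑ i ∈ Finset.range s, |∑ j ∈ Finset.range i, g (p j)|
        + |∑ j ∈ Finset.range s, g (p j)| := by
    rw [← Finset.sum_range_succ, Finset.sum_range_succ', Finset.range_zero, Finset.sum_empty,
      abs_zero, add_zero, ← Finset.Ico_add_one_right_eq_Icc, Finset.sum_Ico_eq_sum_range]
    simp [add_comm]
  rw [hsum]
  set U := (1 / (a * b)) ^ ((α + 1) / 2 + ε) with hUdef
  have hF : potl α ε M a b ≤ (2 * 2 ^ ((α + 1) / 2 + ε) + M) * U := by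
    unfold potl
    rw [← hUdef]
    linarith
  have z1 := mul_le_mul_of_nonneg_left hF hK0.le
  have z2 := mul_le_mul_of_nonneg_left hU (show 0 ≤ 2 * C₁ * 2 ^ α by positivity)
  linarith
end

section
/- Let g be a real-valued function on the Farey triangle Ω. Suppose: (1) there exist α > 1 and C₁ > 0 such that for every excursion ((a_i,b_i))_{i=0}^{s} of the BCZ map, |Σ_{j=0}^{s−1} g(a_j,b_j)| < C₁·((a_0/a_s)^α + (a_s/a_0)^α); and (2) there exist β with 0 < β < α, C₂ > 0 and γ > 0 such that for every excursion ((a_i,b_i))_{i=0}^{s} with (a_0, a_s) ∈ Δ and every integer i with 1 ≤ i < γ·(1/a_0)^{2 − β/α}, one has |Σ_{j=0}^{i−1} g(a_j,b_j)| < C₂·((1/a_0)^β + (1/a_s)^β). Then for every ε > 0 there exists C > 0 such that for every excursion ((a_i,b_i))_{i=0}^{s} with (a_0, a_s) ∈ Δ, Σ_{i=1}^{s} |Σ_{j=0}^{i−1} g(a_j,b_j)| ≤ C · (1/(a_0·a_s))^{1 + (β/2)(1 − 1/α) + ε}. -/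
/-- Index version of an excursion `i → j` inside a finite sequence `a 0, …, a s`. -/
def BExc (a : ℕ → ℝ) (s i j : ℕ) : Prop :=
  i < j ∧ j ≤ s ∧ ∀ t, i < t → t < j → a i < a t ∧ a j < a t

/-- The slope of the `n`-th lattice vector. -/
noncomputable def bsig (a : ℕ → ℝ) (n : ℕ) : ℝ := ∑ t ∈ Finset.range n, 1 / (a t * a (t + 1))

/-- The determinant of the `i`-th and `j`-th lattice vectors. -/
noncomputable def bdet (a : ℕ → ℝ) (i j : ℕ) : ℝ := a i * a j * (bsig a j - bsig a i)

lemma bdet_succ (a : ℕ → ℝ) (s i : ℕ) (ha : ∀ t ≤ s, 0 < a t ∧ a t ≤ 1) (hi : i + 1 ≤ s) :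
    bdet a i (i + 1) = 1 := by
  have h1 := (ha i (by omega)).1
  have h2 := (ha (i + 1) hi).1
  unfold bdet bsig
  rw [Finset.sum_range_succ]
  field_simp
  ring

lemma bdet_int (a : ℕ → ℝ) (s i : ℕ) (ha : ∀ t ≤ s, 0 < a t ∧ a t ≤ 1)
    (hrec : ∀ t, t + 2 ≤ s → ∃ k : ℤ, a (t + 2) = k * a (t + 1) - a t) (n : ℕ) :
    i + n + 1 ≤ s → (∃ k : ℤ, bdet a i (i + n) = k) ∧ (∃ k : ℤ, bdet a i (i + n + 1) = k) := by
  induction n with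
  | zero =>
    intro h
    refine ⟨⟨0, by simp [bdet]⟩, ⟨1, ?_⟩⟩
    have := bdet_succ a s i ha h
    simpa using this
  | succ n ih =>
    intro h
    obtain ⟨⟨k1, h1⟩, ⟨k2, h2⟩⟩ := ih (by omega)
    refine ⟨⟨k2, h2⟩, ?_⟩
    obtain ⟨k, hk⟩ := hrec (i + n) (by omega)
    refine ⟨k * k2 - k1, ?_⟩
    push_cast
    rw [← h1, ← h2]
    have p0 := (ha (i + n) (by omega)).1
    have p1 := (ha (i + n + 1) (by omega)).1
    have p2 := (ha (i + n + 2) (by omega)).1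
    have e : i + (n + 1) + 1 = i + n + 2 := by ring
    rw [e]
    have s1 : bsig a (i + n + 1) = bsig a (i + n) + 1 / (a (i + n) * a (i + n + 1)) := by
      unfold bsig; rw [Finset.sum_range_succ]
    have s2 : bsig a (i + n + 2) = bsig a (i + n + 1) + 1 / (a (i + n + 1) * a (i + n + 2)) := by
      unfold bsig; rw [Finset.sum_range_succ]
    have hkk : (k : ℝ) = (a (i + n + 2) + a (i + n)) / a (i + n + 1) := by
      rw [eq_div_iff p1.ne']; linarith
    unfold bdet
    rw [s2, s1, hkk]
    field_simp
    ring

lemma bdet_int' (a : ℕ → ℝ) (s i j : ℕ) (ha : ∀ t ≤ s, 0 < a t ∧ a t ≤ 1)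
    (hrec : ∀ t, t + 2 ≤ s → ∃ k : ℤ, a (t + 2) = k * a (t + 1) - a t) (hij : i < j)
    (hj : j ≤ s) : ∃ k : ℤ, bdet a i j = k := by
  have := (bdet_int a s i ha hrec (j - i - 1) (by omega)).2
  have e : i + (j - i - 1) + 1 = j := by omega
  rwa [e] at this

lemma bdet_plucker (a : ℕ → ℝ) (i m j : ℕ) :
    bdet a i m * a j + bdet a m j * a i = bdet a i j * a m := by
  unfold bdet; ring

/-- Excursions have determinant one, and the interior splits at the mediant. -/
lemma bexc_main (a : ℕ → ℝ) (s : ℕ) (ha : ∀ t ≤ s, 0 < a t ∧ a t ≤ 1)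
    (hrec : ∀ t, t + 2 ≤ s → ∃ k : ℤ, a (t + 2) = k * a (t + 1) - a t) (n : ℕ) :
    ∀ i j, j - i ≤ n → BExc a s i j → bdet a i j = 1 ∧
      (i + 1 < j → ∃ m, BExc a s i m ∧ BExc a s m j ∧ a m = a i + a j) := by
  induction n with
  | zero => intro i j h1 h2; have := h2.1; omega
  | succ n ih =>
    intro i j hn hE
    obtain ⟨hij, hjs, hin⟩ := hE
    by_cases hc : j = i + 1
    · subst hc
      exact ⟨bdet_succ a s i ha hjs, fun h => by omega⟩
    have hlt : i + 1 < j := by omega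
    -- the first interior minimum
    obtain ⟨m0, hm0, hmin0⟩ := Finset.exists_min_image (Finset.Ioo i j) a ⟨i + 1, by simp; omega⟩
    have hex : ∃ t, i < t ∧ t < j ∧ a t ≤ a m0 := by
      rw [Finset.mem_Ioo] at hm0
      exact ⟨m0, hm0.1, hm0.2, le_rfl⟩
    classical
    obtain ⟨him, hmj, hm⟩ := Nat.find_spec hex
    have hfirst : ∀ t, i < t → t < Nat.find hex → a m0 < a t := by
      intro t h1 h2
      by_contra h3
      exact Nat.find_min hex h2 ⟨h1, by omega, not_lt.mp h3⟩
    generalize Nat.find hex = m at him hmj hm hfirst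
    have hmin : ∀ t, i < t → t < j → a m ≤ a t := fun t h1 h2 =>
      hm.trans (hmin0 t (by rw [Finset.mem_Ioo]; exact ⟨h1, h2⟩))
    have hEim : BExc a s i m := by
      refine ⟨him, by omega, fun t h1 h2 => ⟨(hin t h1 (by omega)).1, ?_⟩⟩
      exact lt_of_le_of_lt hm (hfirst t h1 h2)
    have hdim := (ih i m (by omega) hEim).1
    have hstrict : ∀ t, m < t → t < j → a m < a t := by
      intro t0 h10 h20
      by_contra h30
      have hex2 : ∃ t, m < t ∧ t < j ∧ a t ≤ a m := ⟨t0, h10, h20, not_lt.mp h30⟩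
      obtain ⟨hmN, hNj, hN⟩ := Nat.find_spec hex2
      have hf2 : ∀ t, m < t → t < Nat.find hex2 → a m < a t := by
        intro t h1 h2
        by_contra h3
        exact Nat.find_min hex2 h2 ⟨h1, by omega, not_lt.mp h3⟩
      generalize Nat.find hex2 = N at hmN hNj hN hf2
      have heq : a N = a m := le_antisymm hN (hmin N (by omega) hNj)
      have hEmN : BExc a s m N :=
        ⟨hmN, by omega, fun t h1 h2 => ⟨hf2 t h1 h2, by rw [heq]; exact hf2 t h1 h2⟩⟩
      have hd := (ih m N (by omega) hEmN).1
      have hp := bdet_plucker a i m N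
      obtain ⟨k, hk⟩ := bdet_int' a s i N ha hrec (by omega) (by omega)
      rw [hdim, hd, hk, heq] at hp
      have hmpos := (ha m (by omega)).1
      have hipos := (ha i (by omega)).1
      have hlt2 := (hin m him hmj).1
      have k1 : (1 : ℝ) < k := by
        by_contra h
        have := mul_le_mul_of_nonneg_right (not_lt.mp h) hmpos.le
        linarith
      have k2 : (k : ℝ) < 2 := by
        by_contra h
        have := mul_le_mul_of_nonneg_right (not_lt.mp h) hmpos.le
        linarith
      have k1' : (1 : ℤ) < k := by exact_mod_cast k1
      have k2' : k < (2 : ℤ) := by exact_mod_cast k2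
      omega
    have hEmj : BExc a s m j :=
      ⟨hmj, hjs, fun t h1 h2 => ⟨hstrict t h1 h2, (hin t (by omega) h2).2⟩⟩
    have hdmj := (ih m j (by omega) hEmj).1
    have hp := bdet_plucker a i m j
    obtain ⟨k, hk⟩ := bdet_int' a s i j ha hrec hij hjs
    rw [hdim, hdmj, hk] at hp
    have hmpos := (ha m (by omega)).1
    have hipos := (ha i (by omega)).1
    have hjpos := (ha j (by omega)).1
    have hlt2 := (hin m him hmj)
    have k1 : (0 : ℝ) < k := by
      by_contra h
      have := mul_le_mul_of_nonneg_right (not_lt.mp h) hmpos.le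
      linarith
    have k2 : (k : ℝ) < 2 := by
      by_contra h
      have := mul_le_mul_of_nonneg_right (not_lt.mp h) hmpos.le
      linarith [hlt2.1, hlt2.2]
    have k1' : (0 : ℤ) < k := by exact_mod_cast k1
    have k2' : k < (2 : ℤ) := by exact_mod_cast k2
    have k3 : k = 1 := by omega
    subst k3
    refine ⟨by simpa using hk, fun _ => ⟨m, hEim, hEmj, ?_⟩⟩
    push_cast at hp
    linarith

lemma bexc_count (a : ℕ → ℝ) (s : ℕ) (ha : ∀ t ≤ s, 0 < a t ∧ a t ≤ 1)
    (hrec : ∀ t, t + 2 ≤ s → ∃ k : ℤ, a (t + 2) = k * a (t + 1) - a t) (i j : ℕ)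
    (hE : BExc a s i j) : ((j - i : ℕ) : ℝ) ≤ 1 / (a i * a j) := by
  have hd := (bexc_main a s ha hrec _ i j le_rfl hE).1
  have hi := (ha i (by have := hE.1; have := hE.2.1; omega)).1
  have hj := (ha j hE.2.1).1
  have h1 : bsig a j - bsig a i = 1 / (a i * a j) := by
    unfold bdet at hd
    field_simp
    linarith
  rw [← h1]
  unfold bsig
  rw [← Finset.sum_Ico_eq_sub _ hE.1.le]
  have : ((j - i : ℕ) : ℝ) = ∑ t ∈ Finset.Ico i j, (1 : ℝ) := by simp
  rw [this]
  apply Finset.sum_le_sum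
  intro t ht
  rw [Finset.mem_Ico] at ht
  have hjs := hE.2.1
  have p1 := ha t (by omega)
  have p2 := ha (t + 1) (by omega)
  rw [le_div_iff₀ (mul_pos p1.1 p2.1), one_mul]
  exact mul_le_one₀ p1.2 p2.1.le p2.2

/-- Expected depth potential. -/
noncomputable def bphi (x y : ℝ) : ℝ :=
  -(x / y) * Real.log x - (y / x) * Real.log y + (Real.log x + Real.log y) ^ 2

lemma bphi_nonneg (x y : ℝ) (hx : 0 < x) (hy : 0 < y) (hx1 : x ≤ 1) (hy1 : y ≤ 1) :
    0 ≤ bphi x y := by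
  have l1 := Real.log_nonpos hx.le hx1
  have l2 := Real.log_nonpos hy.le hy1
  have q1 : 0 < x / y := div_pos hx hy
  have q2 : 0 < y / x := div_pos hy hx
  unfold bphi
  nlinarith [mul_nonneg q1.le (neg_nonneg.mpr l1), mul_nonneg q2.le (neg_nonneg.mpr l2),
    sq_nonneg (Real.log x + Real.log y)]

lemma bphi_step (x y : ℝ) (hx : 0 < x) (hy : 0 < y) (hxy : x + y ≤ 1) :
    bphi x (x + y) / (x * (x + y)) + bphi (x + y) y / ((x + y) * y) + 1 / (x * y)
      ≤ bphi x y / (x * y) := by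
  have hz : 0 < x + y := by linarith
  set z := x + y with hzdef
  set u := Real.log x with hu
  set v := Real.log y with hv
  set w := Real.log z with hw
  have hw0 : w ≤ 0 := Real.log_nonpos hz.le hxy
  -- log (z/x) ≥ y/z
  have e1 : y / z ≤ w - u := by
    have h := Real.log_le_sub_one_of_pos (div_pos hx hz)
    rw [Real.log_div hx.ne' hz.ne'] at h
    have : x / z - 1 = - (y / z) := by field_simp; linarith
    linarith
  have e2 : x / z ≤ w - v := by
    have h := Real.log_le_sub_one_of_pos (div_pos hy hz)
    rw [Real.log_div hy.ne' hz.ne'] at h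
    have : y / z - 1 = - (x / z) := by field_simp; linarith
    linarith
  have hu0 : u ≤ 0 := by have : 0 < y / z := div_pos hy hz; linarith
  have hv0 : v ≤ 0 := by have : 0 < x / z := div_pos hx hz; linarith
  have key : y / z * bphi x z + x / z * bphi z y + 1 ≤ bphi x y := by
    have hs : y / z = 1 - x / z := by field_simp; linarith
    set p := x / z with hp
    have hp0 : 0 < p := div_pos hx hz
    have hq0 : 0 < 1 - p := by rw [← hs]; exact div_pos hy hz
    have g1 : 1 - p ≤ w - u := by rw [← hs]; exact e1
    have f1 : z / x = 1 / p := by rw [hp]; field_simp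
    have f2 : y / z = 1 - p := hs
    have f3 : z / y = 1 / (1 - p) := by rw [← hs]; field_simp
    have f4 : x / y = p / (1 - p) := by rw [← hs, hp]; field_simp
    have f5 : y / x = (1 - p) / p := by rw [← hs, hp]; field_simp
    unfold bphi
    rw [← hu, ← hv, ← hw, ← hp, f1, f2, f3, f4, f5]
    have r1 : 1 - p + p = 1 := by ring
    -- rewrite the linear parts
    have L1 : (1 - p) * (-p * u - 1 / p * w + (u + w) ^ 2) +
        p * (-(1 / (1 - p)) * w - (1 - p) * v + (w + v) ^ 2) =
        -(p * (1 - p)) * (u + v) - (1 - p) / p * w - p / (1 - p) * w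
          + (1 - p) * (u + w) ^ 2 + p * (w + v) ^ 2 := by ring
    rw [L1]
    have A1 : p ≤ p / (1 - p) * (w - u) := by
      have := mul_le_mul_of_nonneg_left g1 (div_pos hp0 hq0).le
      rwa [div_mul_cancel₀ _ hq0.ne'] at this
    have A2 : 1 - p ≤ (1 - p) / p * (w - v) := by
      have := mul_le_mul_of_nonneg_left e2 (div_pos hq0 hp0).le
      rwa [div_mul_cancel₀ _ hp0.ne'] at this
    -- squares
    have B1 : (u + w) ^ 2 ≤ (u + v) * (u + w) := by nlinarith
    have B2 : (w + v) ^ 2 ≤ (u + v) * (w + v) := by nlinarith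
    have B3 : (1 - p) * (u + w) ^ 2 ≤ (1 - p) * ((u + v) * (u + w)) :=
      mul_le_mul_of_nonneg_left B1 hq0.le
    have B4 : p * (w + v) ^ 2 ≤ p * ((u + v) * (w + v)) :=
      mul_le_mul_of_nonneg_left B2 hp0.le
    -- entropy
    have C1 : (1 - p) * p ≤ (1 - p) * (w - v) := mul_le_mul_of_nonneg_left e2 hq0.le
    have C2 : p * (1 - p) ≤ p * (w - u) := mul_le_mul_of_nonneg_left g1 hp0.le
    have C3 : (1 - p) * p * (-(u + v)) ≤ ((1 - p) * (w - v) + p * (w - u)) * (-(u + v)) := by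
      apply mul_le_mul_of_nonneg_right _ (by linarith)
      linarith [mul_pos hp0 hq0]
    have ng : -(p / (1 - p)) * u = -(p / (1 - p) * u) := by ring
    rw [ng]
    generalize p / (1 - p) = A at *
    generalize (1 - p) / p = D at *
    linarith
  have t1 : bphi x z / (x * z) = (y / z * bphi x z) / (x * y) := by field_simp
  have t2 : bphi z y / (z * y) = (x / z * bphi z y) / (x * y) := by field_simp
  rw [t1, t2, ← add_div, ← add_div]
  exact div_le_div_of_nonneg_right key (mul_pos hx hy).le

/-- There is a golden excursion starting at `i`. -/
def BGood (a : ℕ → ℝ) (s i : ℕ) : Prop :=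
  ∃ G, BExc a s i G ∧ (Real.sqrt 5 - 1) / 2 ≤ a G / a i ∧ a G / a i ≤ (Real.sqrt 5 + 1) / 2

lemma bgood_of_le (a : ℕ → ℝ) (s : ℕ) (ha : ∀ t ≤ s, 0 < a t ∧ a t ≤ 1)
    (i m j : ℕ) (hE : BExc a s i j) (hm : BExc a s i m) (hsum : a m = a i + a j)
    (hle : a j ≤ a i) : BGood a s i := by
  have hipos := (ha i (by have := hE.1; have := hE.2.1; omega)).1
  have h5 : (2 : ℝ) ≤ Real.sqrt 5 := by
    rw [Real.le_sqrt (by norm_num) (by norm_num)]; norm_num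
  have hr : a j / a i ≤ 1 := (div_le_one hipos).mpr hle
  have hjpos := (ha j hE.2.1).1
  have hr0 : 0 < a j / a i := div_pos hjpos hipos
  have h53 : Real.sqrt 5 ≤ 3 := by
    rw [Real.sqrt_le_left (by norm_num)]; norm_num
  by_cases hc : (Real.sqrt 5 - 1) / 2 ≤ a j / a i
  · exact ⟨j, hE, hc, by linarith⟩
  · refine ⟨m, hm, ?_, ?_⟩
    · rw [hsum, add_div, div_self hipos.ne']; linarith
    · rw [hsum, add_div, div_self hipos.ne']; linarith [not_le.mp hc]

lemma bexc_energy (a S : ℕ → ℝ) (s : ℕ) (B : ℝ) (hB : 0 ≤ B) (ha : ∀ t ≤ s, 0 < a t ∧ a t ≤ 1)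
    (hrec : ∀ t, t + 2 ≤ s → ∃ k : ℤ, a (t + 2) = k * a (t + 1) - a t)
    (H : ∀ i m, BExc a s i m → a i ≤ a m → BGood a s i → |S m - S i| ≤ B * (a m / a i)) (n : ℕ) :
    ∀ i j, j - i ≤ n → BExc a s i j → (BGood a s i ∨ a j ≤ a i) →
      ∑ t ∈ Finset.Ico i j, |S t - S i| ≤ B * (bphi (a i) (a j) / (a i * a j)) := by
  induction n with
  | zero => intro i j h1 h2; have := h2.1; omega
  | succ n ih =>
    intro i j hn hE hG
    obtain ⟨xp, x1⟩ := ha i (by have := hE.1; have := hE.2.1; omega)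
    obtain ⟨yp, y1⟩ := ha j hE.2.1
    by_cases hc : j = i + 1
    · subst hc
      simp only [Nat.Ico_succ_singleton, Finset.sum_singleton, sub_self, abs_zero]
      exact mul_nonneg hB (div_nonneg (bphi_nonneg _ _ xp yp x1 y1) (mul_pos xp yp).le)
    obtain ⟨m, him, hmj, hsum⟩ := (bexc_main a s ha hrec _ i j le_rfl hE).2
      (by have := hE.1; omega)
    have hgood : BGood a s i := by
      rcases hG with h | h
      · exact h
      · exact bgood_of_le a s ha i m j hE him hsum h
    obtain ⟨zp, z1⟩ := ha m him.2.1
    have i1 := him.1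
    have i2 := hmj.1
    have I1 := ih i m (by omega) him (Or.inl hgood)
    have I2 := ih m j (by omega) hmj (Or.inr (by linarith))
    have hH := H i m him (by linarith) hgood
    have hcnt := bexc_count a s ha hrec m j hmj
    rw [← Finset.sum_Ico_consecutive _ i1.le i2.le]
    have T : ∑ t ∈ Finset.Ico m j, |S t - S i| ≤
        ∑ t ∈ Finset.Ico m j, |S t - S m| + ((j - m : ℕ) : ℝ) * |S m - S i| := by
      have : ((j - m : ℕ) : ℝ) * |S m - S i| = ∑ t ∈ Finset.Ico m j, |S m - S i| := by simp
      rw [this, ← Finset.sum_add_distrib]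
      exact Finset.sum_le_sum fun t _ => abs_sub_le _ _ _
    have T2 : ((j - m : ℕ) : ℝ) * |S m - S i| ≤ B * (1 / (a i * a j)) := by
      calc ((j - m : ℕ) : ℝ) * |S m - S i| ≤ (1 / (a m * a j)) * (B * (a m / a i)) :=
            mul_le_mul hcnt hH (abs_nonneg _) (by positivity)
        _ = B * (1 / (a i * a j)) := by field_simp
    have st := bphi_step (a i) (a j) xp yp (by linarith)
    rw [← hsum] at st
    have := mul_le_mul_of_nonneg_left st hB
    linarith

lemma bexc_shift (p : ℕ → ℝ × ℝ) (s i j : ℕ) (hp : IsExcursion p s)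
    (hE : BExc (fun t => (p t).1) s i j) : IsExcursion (fun t => p (i + t)) (j - i) := by
  obtain ⟨h1, h2, h3, h4⟩ := hp
  obtain ⟨e1, e2, e3⟩ := hE
  refine ⟨by omega, fun t ht => h2 _ (by omega), fun t ht => h3 (i + t) (by omega), ?_⟩
  intro t t1 t2
  have := e3 (i + t) (by omega) (by omega)
  have e : i + (j - i) = j := by omega
  simpa [e] using this

/-- The combination of the two hypotheses by interpolation. -/
lemma binterp (α β C₁ C₂ γ x r v : ℝ) (hα : 1 < α) (hC₁ : 0 < C₁) (hβ0 : 0 < β)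
    (hC₂ : 0 < C₂) (hγ : 0 < γ) (hx : 0 < x) (hr : 1 ≤ r)
    (h1 : v ≤ 2 * C₁ * r ^ α)
    (h2 : (1 / x) ^ (β / α) < γ * r → v ≤ C₂ * (1 / x) ^ β) :
    v ≤ (2 * C₁ * (1 / γ) ^ (α - 1) + C₂ * γ) * (1 / x) ^ (β * (1 - 1 / α)) * r := by
  have hX : 0 < 1 / x := by positivity
  have hr0 : 0 < r := by linarith
  have hα0 : 0 < α := by linarith
  have hD : 0 < (1 / x) ^ (β * (1 - 1 / α)) := Real.rpow_pos_of_pos hX _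
  by_cases hc : (1 / x) ^ (β / α) < γ * r
  · have e : (1 / x) ^ β = (1 / x) ^ (β * (1 - 1 / α)) * (1 / x) ^ (β / α) := by
      rw [← Real.rpow_add hX]; congr 1; field_simp; ring
    have h3 := h2 hc
    rw [e] at h3
    have h4 : (1 / x) ^ (β * (1 - 1 / α)) * (1 / x) ^ (β / α) ≤
        (1 / x) ^ (β * (1 - 1 / α)) * (γ * r) := mul_le_mul_of_nonneg_left hc.le hD.le
    have h5 := mul_le_mul_of_nonneg_left h4 hC₂.le
    have h6 : 0 ≤ 2 * C₁ * (1 / γ) ^ (α - 1) * (1 / x) ^ (β * (1 - 1 / α)) * r := by positivity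
    linarith
  · have hc' := not_lt.mp hc
    have hrle : r ≤ (1 / γ) * (1 / x) ^ (β / α) := by
      rw [one_div_mul_eq_div, le_div_iff₀ hγ]; linarith
    have h3 : r ^ (α - 1) ≤ (1 / γ) ^ (α - 1) * (1 / x) ^ (β * (1 - 1 / α)) := by
      calc r ^ (α - 1) ≤ ((1 / γ) * (1 / x) ^ (β / α)) ^ (α - 1) :=
            Real.rpow_le_rpow hr0.le hrle (by linarith)
        _ = (1 / γ) ^ (α - 1) * (1 / x) ^ (β * (1 - 1 / α)) := by
            rw [Real.mul_rpow (by positivity) (by positivity), ← Real.rpow_mul hX.le]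
            congr 2; field_simp
    have e : r ^ α = r ^ (α - 1) * r := by
      rw [← Real.rpow_add_one hr0.ne']; congr 1; ring
    rw [e] at h1
    have h4 := mul_le_mul_of_nonneg_left (mul_le_mul_of_nonneg_right h3 hr0.le)
      (by positivity : 0 ≤ 2 * C₁)
    have h6 : 0 ≤ C₂ * γ * (1 / x) ^ (β * (1 - 1 / α)) * r := by positivity
    linarith

lemma bfinal (x y δ ε : ℝ) (hx : 0 < x) (hx1 : x ≤ 1) (hy : 0 < y) (hy1 : y ≤ 1) (hδ : 0 < δ)
    (hε : 0 < ε) (h1 : y ≤ 2 * x) (h2 : x ≤ 2 * y) :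
    (1 / x) ^ δ * (bphi x y / (x * y)) ≤
      (2 ^ (δ / 2) * (2 / ε + 4 / ε ^ 2)) * (1 / (x * y)) ^ (1 + δ / 2 + ε) := by
  have hxy : 0 < x * y := mul_pos hx hy
  set W := 1 / (x * y) with hW
  have hW0 : 0 < W := by positivity
  have hl : Real.log x + Real.log y = - Real.log W := by
    rw [hW, one_div, Real.log_inv, Real.log_mul hx.ne' hy.ne']; ring
  have l1 := Real.log_nonpos hx.le hx1
  have l2 := Real.log_nonpos hy.le hy1
  have hL0 : 0 ≤ Real.log W := by linarith
  have hphi : bphi x y ≤ 2 * Real.log W + (Real.log W) ^ 2 := by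
    unfold bphi
    rw [hl]
    have a1 : x / y ≤ 2 := (div_le_iff₀ hy).mpr h2
    have a2 : y / x ≤ 2 := (div_le_iff₀ hx).mpr h1
    nlinarith [mul_le_mul_of_nonneg_right a1 (neg_nonneg.mpr l1),
      mul_le_mul_of_nonneg_right a2 (neg_nonneg.mpr l2)]
  have b1 := Real.log_le_rpow_div hW0.le hε
  have b2 := Real.log_le_rpow_div hW0.le (half_pos hε)
  have b3 : (Real.log W) ^ 2 ≤ 4 / ε ^ 2 * W ^ ε := by
    calc (Real.log W) ^ 2 ≤ (W ^ (ε / 2) / (ε / 2)) ^ 2 := pow_le_pow_left₀ hL0 b2 2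
      _ = 4 / ε ^ 2 * (W ^ (ε / 2) * W ^ (ε / 2)) := by field_simp; ring
      _ = 4 / ε ^ 2 * W ^ ε := by rw [← Real.rpow_add hW0]; congr 2; ring
  have hphi2 : bphi x y ≤ (2 / ε + 4 / ε ^ 2) * W ^ ε := by
    have : 2 * (W ^ ε / ε) = 2 / ε * W ^ ε := by ring
    linarith
  have hxd : (1 / x) ^ δ ≤ 2 ^ (δ / 2) * W ^ (δ / 2) := by
    have e : (1 / x) ^ δ = ((1 / x) ^ (2 : ℝ)) ^ (δ / 2) := by
      rw [← Real.rpow_mul (by positivity)]; congr 1; ring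
    rw [e, ← Real.mul_rpow (by norm_num) hW0.le]
    apply Real.rpow_le_rpow (by positivity) _ (by positivity)
    rw [hW, Real.rpow_two, div_pow, one_pow, mul_one_div, div_le_div_iff₀ (by positivity) hxy]
    nlinarith
  have e3 : W ^ (1 + δ / 2 + ε) = W * W ^ (δ / 2) * W ^ ε := by
    rw [Real.rpow_add hW0, Real.rpow_add hW0, Real.rpow_one]
  have e4 : bphi x y / (x * y) = bphi x y * W := by rw [hW]; ring
  rw [e3, e4]
  calc (1 / x) ^ δ * (bphi x y * W)
      ≤ (2 ^ (δ / 2) * W ^ (δ / 2)) * (((2 / ε + 4 / ε ^ 2) * W ^ ε) * W) := by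
        apply mul_le_mul hxd (mul_le_mul_of_nonneg_right hphi2 hW0.le) _ (by positivity)
        exact mul_nonneg (bphi_nonneg x y hx hy hx1 hy1) hW0.le
    _ = _ := by ring

theorem energy_bound_general' (g : ℝ × ℝ → ℝ) (α C₁ β C₂ γ : ℝ)
    (hα : 1 < α) (hC₁ : 0 < C₁) (hβ0 : 0 < β) (hβα : β < α) (hC₂ : 0 < C₂) (hγ : 0 < γ)
    (hg₁ : ∀ (p : ℕ → ℝ × ℝ) (s : ℕ), IsExcursion p s →
      |∑ j ∈ Finset.range s, g (p j)| <
        C₁ * (((p 0).1 / (p s).1) ^ α + ((p s).1 / (p 0).1) ^ α))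
    (hg₂ : ∀ (p : ℕ → ℝ × ℝ) (s : ℕ), IsExcursion p s →
      ((p 0).1, (p s).1) ∈ goldenArea →
      ∀ i : ℕ, 1 ≤ i → (i : ℝ) < γ * (1 / (p 0).1) ^ (2 - β / α) →
        |∑ j ∈ Finset.range i, g (p j)| <
          C₂ * ((1 / (p 0).1) ^ β + (1 / (p s).1) ^ β))
    (ε : ℝ) (hε : 0 < ε) :
    ∃ C : ℝ, 0 < C ∧ ∀ (p : ℕ → ℝ × ℝ) (s : ℕ), IsExcursion p s →
      ((p 0).1, (p s).1) ∈ goldenArea →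
      ∑ i ∈ Finset.Icc 1 s, |∑ j ∈ Finset.range i, g (p j)| ≤
        C * (1 / ((p 0).1 * (p s).1)) ^ (1 + (β / 2) * (1 - 1 / α) + ε) := by
  have hα0 : 0 < α := by linarith
  have hδ : 0 < β * (1 - 1 / α) := by
    apply mul_pos hβ0
    rw [sub_pos, div_lt_one hα0]; exact hα
  set δ := β * (1 - 1 / α) with hδdef
  set K := 2 * C₁ * (1 / γ) ^ (α - 1) + (C₂ * (1 + 2 ^ β)) * γ with hK
  have hK0 : 0 < K := by positivity
  have h5 : (2 : ℝ) ≤ Real.sqrt 5 := by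
    rw [Real.le_sqrt (by norm_num) (by norm_num)]; norm_num
  have h53 : Real.sqrt 5 ≤ 3 := by
    rw [Real.sqrt_le_left (by norm_num)]; norm_num
  refine ⟨K * (2 ^ (δ / 2) * (2 / ε + 4 / ε ^ 2)) + 2 * C₁ * 2 ^ α, by positivity, ?_⟩
  intro p s hp hgold
  have hp' := hp
  obtain ⟨hs1, hΩ, hT, hint⟩ := hp'
  set a : ℕ → ℝ := fun t => (p t).1 with hadef
  have ha : ∀ t ≤ s, 0 < a t ∧ a t ≤ 1 := fun t ht => ⟨(hΩ t ht).1, (hΩ t ht).2.1⟩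
  have hrec : ∀ t, t + 2 ≤ s → ∃ k : ℤ, a (t + 2) = k * a (t + 1) - a t := by
    intro t ht
    have e1 := hT t (by omega)
    have e2 := hT (t + 1) (by omega)
    refine ⟨⌊(1 + (p (t + 1)).1) / (p (t + 1)).2⌋ * 0 + ⌊(1 + (p t).1) / (p t).2⌋, ?_⟩
    simp only [hadef]
    rw [show t + 2 = t + 1 + 1 from rfl, e2, e1]
    simp [bczT]
  have hE0 : BExc a s 0 s := ⟨by omega, le_rfl, fun t h1 h2 => hint t h1 h2⟩
  obtain ⟨-, -, -, -, hg1, hg2⟩ := hgold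
  have hG0 : BGood a s 0 := ⟨s, hE0, hg1, hg2⟩
  obtain ⟨xp, x1⟩ := ha 0 (by omega)
  obtain ⟨yp, y1⟩ := ha s le_rfl
  set S : ℕ → ℝ := fun n => ∑ j ∈ Finset.range n, g (p j) with hS
  have hSd : ∀ i m, i ≤ m → ∑ j ∈ Finset.range (m - i), g (p (i + j)) = S m - S i := by
    intro i m him
    rw [← Finset.sum_Ico_eq_sum_range (fun j => g (p j)), Finset.sum_Ico_eq_sub _ him]
  have H : ∀ i m, BExc a s i m → a i ≤ a m → BGood a s i →
      |S m - S i| ≤ (K * (1 / a 0) ^ δ) * (a m / a i) := by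
    intro i m hE hle hG
    have i1 := hE.1
    have i2 := hE.2.1
    obtain ⟨ip, ile⟩ := ha i (by omega)
    obtain ⟨mp, mle⟩ := ha m (by omega)
    have hr : 1 ≤ a m / a i := (one_le_div ip).mpr hle
    have hmain := binterp α β C₁ (C₂ * (1 + 2 ^ β)) γ (a i) (a m / a i) |S m - S i|
      hα hC₁ hβ0 (by positivity) hγ ip hr ?_ ?_
    · refine hmain.trans ?_
      apply mul_le_mul_of_nonneg_right _ (by positivity)
      apply mul_le_mul_of_nonneg_left _ hK0.le
      apply Real.rpow_le_rpow (by positivity) _ hδ.le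
      apply one_div_le_one_div_of_le xp
      rcases Nat.eq_zero_or_pos i with h | h
      · rw [h]
      · exact (hint i h (by omega)).1.le
    · have h := hg₁ _ _ (bexc_shift p s i m hp hE)
      rw [hSd i m i1.le, show i + (m - i) = m by omega, Nat.add_zero] at h
      have h2 : (a i / a m) ^ α ≤ (a m / a i) ^ α := by
        apply Real.rpow_le_rpow (by positivity) _ hα0.le
        have : a i / a m ≤ 1 := (div_le_one mp).mpr hle
        linarith
      have h3 := mul_le_mul_of_nonneg_left h2 hC₁.le
      simp only [hadef] at h3 ⊢
      linarith
    · intro hbig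
      obtain ⟨G, hEG, hG1, hG2⟩ := hG
      obtain ⟨Gp, Gle⟩ := ha G hEG.2.1
      have j1 := hEG.1
      have eG : i + (G - i) = G := by omega
      have h := hg₂ _ _ (bexc_shift p s i G hp hEG) (by
        simp only [eG, Nat.add_zero]
        exact ⟨ip, ile, Gp, Gle, hG1, hG2⟩) (m - i) (by omega) (by
          simp only [Nat.add_zero]
          have hc := bexc_count a s ha hrec i m hE
          refine lt_of_le_of_lt hc ?_
          have hX : 0 < 1 / a i := by positivity
          change _ < γ * (1 / a i) ^ (2 - β / α)
          rw [Real.rpow_sub hX, Real.rpow_two, ← mul_div_assoc,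
            lt_div_iff₀ (Real.rpow_pos_of_pos hX _)]
          calc 1 / (a i * a m) * (1 / a i) ^ (β / α) < 1 / (a i * a m) * (γ * (a m / a i)) :=
                mul_lt_mul_of_pos_left hbig (by positivity)
            _ = γ * (1 / a i) ^ 2 := by field_simp)
      rw [hSd i m i1.le, eG, Nat.add_zero] at h
      have hG3 : (1 / a G) ^ β ≤ 2 ^ β * (1 / a i) ^ β := by
        rw [← Real.mul_rpow (by norm_num) (by positivity)]
        apply Real.rpow_le_rpow (by positivity) _ hβ0.le
        rw [mul_one_div, div_le_div_iff₀ Gp ip]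
        rw [le_div_iff₀ ip] at hG1
        nlinarith
      have h3 := mul_le_mul_of_nonneg_left hG3 hC₂.le
      simp only [hadef] at h3 ⊢
      linarith
  have hEn := bexc_energy a S s (K * (1 / a 0) ^ δ) (by positivity) ha hrec H s 0 s (by omega)
    hE0 (Or.inl hG0)
  have hg1' : (Real.sqrt 5 - 1) / 2 * a 0 ≤ a s := (le_div_iff₀ xp).mp hg1
  have hg2' : a s ≤ (Real.sqrt 5 + 1) / 2 * a 0 := (div_le_iff₀ xp).mp hg2
  have hyx : a s ≤ 2 * a 0 := by nlinarith
  have hxy : a 0 ≤ 2 * a s := by nlinarith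
  have hfin := bfinal (a 0) (a s) δ ε xp x1 yp y1 hδ hε hyx hxy
  have hlast : |S s| ≤ 2 * C₁ * 2 ^ α := by
    have h := hg₁ p s hp
    have h2 : (a 0 / a s) ^ α ≤ 2 ^ α :=
      Real.rpow_le_rpow (by positivity) ((div_le_iff₀ yp).mpr hxy) hα0.le
    have h3 : (a s / a 0) ^ α ≤ 2 ^ α :=
      Real.rpow_le_rpow (by positivity) ((div_le_iff₀ xp).mpr hyx) hα0.le
    have h4 := mul_le_mul_of_nonneg_left (add_le_add h2 h3) hC₁.le
    simp only [hadef, hS] at h4 ⊢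
    linarith
  have hexp : 1 + (β / 2) * (1 - 1 / α) + ε = 1 + δ / 2 + ε := by rw [hδdef]; ring
  rw [hexp]
  change ∑ i ∈ Finset.Icc 1 s, |S i| ≤ _ * (1 / (a 0 * a s)) ^ (1 + δ / 2 + ε)
  have hW1 : 1 ≤ (1 / (a 0 * a s)) ^ (1 + δ / 2 + ε) := by
    apply Real.one_le_rpow _ (by positivity)
    rw [one_le_div (by positivity)]
    exact mul_le_one₀ x1 yp.le y1
  have hS0 : S 0 = 0 := by simp [hS]
  have hsum : ∑ i ∈ Finset.Icc 1 s, |S i| = ∑ t ∈ Finset.Ico 0 s, |S t - S 0| + |S s| := by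
    simp only [hS0, sub_zero, Nat.Ico_zero_eq_range]
    rw [← Finset.sum_range_succ (fun t => |S t|), Finset.range_eq_Ico,
      Finset.sum_eq_sum_Ico_succ_bot (by omega : 0 < s + 1), hS0, abs_zero, zero_add]
    rfl
  rw [hsum]
  have f1 := mul_le_mul_of_nonneg_left hfin hK0.le
  have f2 : 2 * C₁ * 2 ^ α ≤ 2 * C₁ * 2 ^ α * (1 / (a 0 * a s)) ^ (1 + δ / 2 + ε) :=
    le_mul_of_one_le_right (by positivity) hW1
  linarith
end

section
/- (Overall monotonicity.) Let ((a_i,b_i))_{i=0}^{s} be an excursion of the BCZ map with s ≥ 4, and set ζ_m := Σ_{i=0}^{m−1} (k̂(a_i,b_i) − 3) for 1 ≤ m ≤ s. Then for every m with 2 ≤ m ≤ s−2, ζ_{s−1} < ζ_m < ζ_1. -/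
/-- Farey-neighbour relation on indices, generated by mediant insertion. -/
inductive FAdj (x : ℕ → ℝ) : ℕ → ℕ → Prop
  | base (i : ℕ) : FAdj x i (i + 1)
  | step (i k j : ℕ) : FAdj x i k → FAdj x k j → x k = x i + x j → FAdj x i j

/-- Number of mediant triangles at a vertex of height `u` beside an edge to height `v`. -/
noncomputable def fN (u v : ℝ) : ℤ := ⌊(1 - v) / u⌋

theorem fN_shift {u v w : ℝ} (hu : 0 < u) (hw : w = u + v) : fN u w = fN u v - 1 := by
  unfold fN
  have : (1 - w) / u = (1 - v) / u - 1 := by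
    subst hw; field_simp; ring
  rw [this, Int.floor_sub_one]

theorem fN_zero {u v : ℝ} (hu : 0 < u) (hv : v ≤ 1) (h : 1 < u + v) : fN u v = 0 := by
  unfold fN
  rw [Int.floor_eq_zero_iff]
  refine ⟨div_nonneg (by linarith) hu.le, ?_⟩
  rw [div_lt_one hu]; linarith

theorem fN_nonneg {u v : ℝ} (hu : 0 < u) (hv : v ≤ 1) : 0 ≤ fN u v :=
  Int.floor_nonneg.mpr (div_nonneg (by linarith) hu.le)

theorem fN_le {u v w : ℝ} (hu : 0 < u) (h : w ≤ u + v) : fN u v - 1 ≤ fN u w := by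
  rw [← fN_shift hu (rfl : u + v = u + v)]
  unfold fN
  apply Int.floor_le_floor
  gcongr

theorem fN_anti {u u' v : ℝ} (hu : 0 < u) (h : u ≤ u') (hv : v ≤ 1) : fN u' v ≤ fN u v := by
  unfold fN
  apply Int.floor_le_floor
  apply div_le_div_of_nonneg_left (by linarith) hu h

theorem FAdj.lt {x : ℕ → ℝ} {i j : ℕ} (h : FAdj x i j) : i < j := by
  induction h with
  | base i => omega
  | step i k j _ _ _ h1 h2 => omega

/-- The standing assumptions. -/
structure FSeq (x : ℕ → ℝ) (K P : ℕ → ℤ) (s : ℕ) : Prop where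
  pos : ∀ i ≤ s, 0 < x i
  le1 : ∀ i ≤ s, x i ≤ 1
  sum : ∀ i < s, 1 < x i + x (i + 1)
  recur : ∀ i, i + 2 ≤ s → (K (i + 1) : ℝ) * x (i + 1) = x i + x (i + 2)
  pref : ∀ i, 0 < i → i < s → P (i + 1) = P i + K i - 3

theorem FAdj.right {x : ℕ → ℝ} {K P : ℕ → ℤ} {s : ℕ} (H : FSeq x K P s) {i j : ℕ}
    (h : FAdj x i j) : j ≤ s → x (i + 1) = x j + fN (x i) (x j) * x i := by
  induction h with
  | base i =>
    intro hj
    rw [fN_zero (H.pos _ (by omega)) (H.le1 _ hj) (H.sum _ (by omega))]; simp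
  | step i k j h1 h2 h3 ih1 ih2 =>
    intro hj
    have l1 := h1.lt
    have l2 := h2.lt
    rw [ih1 (by omega), fN_shift (H.pos i (by omega)) h3, h3]
    push_cast; ring

theorem FAdj.left {x : ℕ → ℝ} {K P : ℕ → ℤ} {s : ℕ} (H : FSeq x K P s) {i j : ℕ}
    (h : FAdj x i j) : j ≤ s → x (j - 1) = x i + fN (x j) (x i) * x j := by
  induction h with
  | base i =>
    intro hj
    rw [fN_zero (H.pos _ (by omega)) (H.le1 _ (by omega))
      (by have := H.sum i (by omega); linarith)]; simp
  | step i k j h1 h2 h3 ih1 ih2 =>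
    intro hj
    have l1 := h1.lt
    have l2 := h2.lt
    rw [ih2 (by omega), fN_shift (H.pos j (by omega)) (h3.trans (add_comm _ _)), h3]
    push_cast; ring

theorem FAdj.kap {x : ℕ → ℝ} {K P : ℕ → ℤ} {s : ℕ} (H : FSeq x K P s) {i k j : ℕ}
    (h1 : FAdj x i k) (h2 : FAdj x k j) (hj : j ≤ s) :
    ((K k - fN (x k) (x i) - fN (x k) (x j) : ℤ) : ℝ) * x k = x i + x j := by
  have l1 := h1.lt
  have l2 := h2.lt
  have e1 := h1.left H (by omega)
  have e2 := h2.right H hj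
  obtain ⟨k, rfl⟩ : ∃ k', k = k' + 1 := ⟨k - 1, by omega⟩
  have e3 := H.recur k (by omega)
  simp only [Nat.add_sub_cancel] at e1
  rw [show k + 1 + 1 = k + 2 from rfl] at e2
  push_cast
  linarith

theorem FAdj.kap' {x : ℕ → ℝ} {K P : ℕ → ℤ} {s : ℕ} (H : FSeq x K P s) {i k j : ℕ}
    (h1 : FAdj x i k) (h2 : FAdj x k j) (h3 : x k = x i + x j) (hj : j ≤ s) :
    K k = 1 + fN (x k) (x i) + fN (x k) (x j) := by
  have e := FAdj.kap H h1 h2 hj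
  have l2 := h2.lt
  have hk := H.pos k (by omega)
  rw [← h3] at e
  have : ((K k - fN (x k) (x i) - fN (x k) (x j) : ℤ) : ℝ) = 1 :=
    mul_right_cancel₀ hk.ne' (by rw [e, one_mul])
  have : K k - fN (x k) (x i) - fN (x k) (x j) = 1 := by exact_mod_cast this
  omega

theorem FAdj.total {x : ℕ → ℝ} {K P : ℕ → ℤ} {s : ℕ} (H : FSeq x K P s) {i j : ℕ}
    (h : FAdj x i j) : j ≤ s → P j - P (i + 1) = - (fN (x i) (x j) + fN (x j) (x i)) := by
  induction h with
  | base i =>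
    intro hj
    have := H.sum i (by omega)
    rw [fN_zero (H.pos _ (by omega)) (H.le1 _ (by omega)) (by linarith),
      fN_zero (H.pos _ (by omega)) (H.le1 _ (by omega)) (by linarith)]
    simp
  | step i k j h1 h2 h3 ih1 ih2 =>
    intro hj
    have l1 := h1.lt
    have l2 := h2.lt
    have e1 := ih1 (by omega)
    have e2 := ih2 hj
    have e3 := FAdj.kap' H h1 h2 h3 hj
    have e4 := H.pref k (by omega) (by omega)
    have e5 := fN_shift (H.pos i (by omega)) h3
    have e6 := fN_shift (H.pos j (by omega)) (h3.trans (add_comm _ _))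
    omega

theorem FAdj.bound {x : ℕ → ℝ} {K P : ℕ → ℤ} {s : ℕ} (H : FSeq x K P s) {i j : ℕ}
    (h : FAdj x i j) (m : ℕ) : j ≤ s → i < m → m < j →
    2 * (P m - P (i + 1)) + K m ≤ 2 ∧ (m ≠ i + 1 → 2 * (P m - P (i + 1)) + K m ≤ 0) := by
  induction h with
  | base i => intro _ _ _; omega
  | step i k j h1 h2 h3 ih1 ih2 =>
    intro hj him hmj
    have l1 := h1.lt
    have l2 := h2.lt
    have pi := H.pos i (by omega)
    have pj := H.pos j (by omega)
    have pk := H.pos k (by omega)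
    have e1 := h1.total H (by omega)
    have e3 := FAdj.kap' H h1 h2 h3 hj
    have e4 := H.pref k (by omega) (by omega)
    have e5 := fN_shift pi h3
    rcases lt_trichotomy m k with hmk | rfl | hmk
    · exact ih1 (by omega) him hmk
    · have e7 : fN (x m) (x j) - 1 ≤ fN (x m) (x i) := fN_le pk (by linarith)
      have e8 : 0 ≤ fN (x i) (x m) := fN_nonneg pi (H.le1 _ (by omega))
      refine ⟨by omega, fun hne => ?_⟩
      have e9 : 1 ≤ fN (x i) (x m) := by
        cases h1 with
        | base => omega
        | step _ l _ g1 g2 g3 =>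
          have := g2.lt
          have := fN_shift pi g3
          have : 0 ≤ fN (x i) (x l) := fN_nonneg pi (H.le1 _ (by omega))
          omega
      omega
    · have e6 := (ih2 hj hmk hmj).1
      have e7 : fN (x k) (x j) ≤ fN (x i) (x j) :=
        fN_anti pi (by linarith) (H.le1 _ hj)
      constructor
      · omega
      · intro _; omega

theorem FAdj.exists {x : ℕ → ℝ} {K P : ℕ → ℤ} {s : ℕ} (H : FSeq x K P s) (n : ℕ) :
    ∀ i j : ℕ, j - i ≤ n → i < j → j ≤ s →
    (∀ k, i < k → k < j → x i < x k ∧ x j < x k) → FAdj x i j := by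
  induction n with
  | zero => intro i j _ _; omega
  | succ n ih =>
    intro i j hn hij hj hex
    by_cases hb : j = i + 1
    · subst hb; exact FAdj.base i
    -- key: two adjacent pieces force the mediant relation
    have key : ∀ k l, i < k → k < l → l ≤ j → FAdj x i k → FAdj x k l → x l ≤ x k →
        x k = x i + x l := by
      intro k l hk hl hlj h1 h2 hle
      have e := FAdj.kap H h1 h2 (by omega)
      have pk := H.pos k (by omega)
      have pi := H.pos i (by omega)
      have pl := H.pos l (by omega)
      have hx := (hex k hk (by omega)).1
      generalize (K k - fN (x k) (x i) - fN (x k) (x l)) = c at e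
      have c0 : 0 < c := by
        by_contra hc
        have : (c : ℝ) ≤ 0 := by exact_mod_cast (not_lt.mp hc)
        nlinarith
      have c2 : c < 2 := by
        by_contra hc
        have : (2 : ℝ) ≤ c := by exact_mod_cast (not_lt.mp hc)
        nlinarith
      have : c = 1 := by omega
      subst this
      simpa using e
    -- first minimum
    have hne : (Finset.Ioo i j).Nonempty := ⟨i + 1, by simp; omega⟩
    obtain ⟨k0, hk0, hmin0⟩ := Finset.exists_min_image (Finset.Ioo i j) x hne
    let q : ℕ → Prop := fun k => k ∈ Finset.Ioo i j ∧ x k = x k0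
    have hq : ∃ k, q k := ⟨k0, hk0, rfl⟩
    classical
    obtain ⟨k, ⟨hkm, hkx⟩, hkmin⟩ : ∃ k, q k ∧ ∀ l < k, ¬ q l :=
      ⟨Nat.find hq, Nat.find_spec hq, fun l hl => Nat.find_min hq hl⟩
    rw [Finset.mem_Ioo] at hkm
    have hmin : ∀ l, i < l → l < j → x k ≤ x l := by
      intro l h1 h2; rw [hkx]; exact hmin0 l (Finset.mem_Ioo.mpr ⟨h1, h2⟩)
    have h1 : FAdj x i k := by
      refine ih i k (by omega) hkm.1 (by omega) fun l hl1 hl2 => ?_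
      refine ⟨(hex l hl1 (by omega)).1, lt_of_le_of_ne (hmin l hl1 (by omega)) fun he => ?_⟩
      exact hkmin l hl2 ⟨Finset.mem_Ioo.mpr ⟨hl1, by omega⟩, by rw [← he, hkx]⟩
    have huniq : ∀ l, k < l → l < j → x k < x l := by
      by_contra hcon
      push Not at hcon
      let r : ℕ → Prop := fun l => k < l ∧ l < j ∧ x l ≤ x k
      have hr : ∃ l, r l := hcon
      obtain ⟨l, ⟨hl1, hl2, hl3⟩, hlmin⟩ : ∃ l, r l ∧ ∀ l' < l, ¬ r l' :=
        ⟨Nat.find hr, Nat.find_spec hr, fun l hl => Nat.find_min hr hl⟩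
      have h2 : FAdj x k l := by
        refine ih k l (by omega) hl1 (by omega) fun t ht1 ht2 => ?_
        have : x k < x t := by
          by_contra hc
          exact hlmin t ht2 ⟨ht1, by omega, not_lt.mp hc⟩
        exact ⟨this, lt_of_le_of_lt hl3 this⟩
      have e := key k l hkm.1 hl1 hl2.le h1 h2 hl3
      have := hmin l (by omega) hl2
      have := H.pos i (by omega)
      linarith
    have h2 : FAdj x k j :=
      ih k j (by omega) hkm.2 hj fun l hl1 hl2 =>
        ⟨huniq l hl1 hl2, (hex l (by omega) hl2).2⟩
    exact FAdj.step i k j h1 h2 (key k j hkm.1 hkm.2 le_rfl h1 h2 (hex k hkm.1 hkm.2).2.le)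

theorem FSeq.main {x : ℕ → ℝ} {K P : ℕ → ℤ} {s : ℕ} (H : FSeq x K P s)
    (hex : ∀ k, 0 < k → k < s → x 0 < x k ∧ x s < x k) (m : ℕ) (hm : 2 ≤ m) (hms : m < s) :
    2 * (P m - P 1) + K m < K 1 := by
  have h := FAdj.exists H s 0 s (by omega) (by omega) le_rfl hex
  have h1 := (h.bound H m le_rfl (by omega) hms).2 (by omega)
  have e := H.recur 0 (by omega)
  have p0 := H.pos 0 (by omega)
  have p1 := H.pos 1 (by omega)
  have p2 := H.pos 2 (by omega)
  have : 0 < K 1 := by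
    by_contra hc
    have : (K 1 : ℝ) ≤ 0 := by exact_mod_cast (not_lt.mp hc)
    simp only [zero_add] at e
    nlinarith
  simp only [zero_add] at h1
  omega

theorem FSeq.rev {x : ℕ → ℝ} {K P : ℕ → ℤ} {s : ℕ} (H : FSeq x K P s) :
    FSeq (fun i => x (s - i)) (fun i => K (s - i)) (fun n => - P (s + 1 - n)) s where
  pos i _ := H.pos _ (by omega)
  le1 i _ := H.le1 _ (by omega)
  sum i hi := by
    have := H.sum (s - (i + 1)) (by omega)
    rw [show s - (i + 1) + 1 = s - i by omega] at this
    show 1 < x (s - i) + x (s - (i + 1))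
    linarith
  recur i hi := by
    have := H.recur (s - (i + 2)) (by omega)
    rw [show s - (i + 2) + 1 = s - (i + 1) by omega,
      show s - (i + 2) + 2 = s - i by omega] at this
    show (K (s - (i + 1)) : ℝ) * x (s - (i + 1)) = x (s - i) + x (s - (i + 2))
    linarith
  pref i h0 hi := by
    have := H.pref (s - i) (by omega) (by omega)
    show - P (s + 1 - (i + 1)) = - P (s + 1 - i) + K (s - i) - 3
    rw [show s + 1 - (i + 1) = s - i by omega, show s + 1 - i = s - i + 1 by omega]
    omega

theorem overall_monotonicity (p : ℕ → ℝ × ℝ) (s : ℕ) (h : IsExcursion p s) (hs : 4 ≤ s)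
    (m : ℕ) (hm1 : 2 ≤ m) (hm2 : m ≤ s - 2) :
    ∑ i ∈ Finset.range (s - 1), (khat (p i) - 3) < ∑ i ∈ Finset.range m, (khat (p i) - 3) ∧
      ∑ i ∈ Finset.range m, (khat (p i) - 3) < ∑ i ∈ Finset.range 1, (khat (p i) - 3) := by
  obtain ⟨_, hΩ, hT, hex⟩ := h
  let x : ℕ → ℝ := fun i => (p i).1
  let K : ℕ → ℤ := fun i => ⌊(1 + (p i).2) / (p i).1⌋
  let P : ℕ → ℤ := fun n => ∑ i ∈ Finset.range n, (K i - 3)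
  have hb : ∀ i < s, (p i).2 = x (i + 1) := by
    intro i hi; simp only [x]; rw [hT i hi]; rfl
  have hfl : ∀ i < s, ⌊(1 + (p i).1) / (p i).2⌋ = K (i + 1) := by
    intro i hi
    obtain ⟨h1, h2, h3, h4, h5⟩ := hΩ i hi.le
    simp only [K]
    rw [hT i hi]
    simp only [bczT]
    generalize ⌊(1 + (p i).1) / (p i).2⌋ = c
    symm
    rw [Int.floor_eq_iff]
    constructor
    · rw [le_div_iff₀ h3]; linarith
    · rw [div_lt_iff₀ h3]; linarith
  have H : FSeq x K P s :=
    { pos := fun i hi => (hΩ i hi).1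
      le1 := fun i hi => (hΩ i hi).2.1
      sum := fun i hi => by rw [← hb i hi]; exact (hΩ i hi.le).2.2.2.2
      recur := fun i hi => by
        rw [← hb (i + 1) (by omega), ← hfl i (by omega), hT i (by omega), ← hb i (by omega)]
        simp only [bczT, x]; ring
      pref := fun i _ _ => by simp only [P]; rw [Finset.sum_range_succ]; ring }
  have hz : ∀ n, n < s → 2 * ∑ i ∈ Finset.range n, (khat (p i) - 3) =
      ((2 * P n + K n - K 0 : ℤ) : ℝ) := by
    intro n
    induction n with
    | zero => intro _; simp [P]
    | succ n ih =>
      intro hn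
      rw [Finset.sum_range_succ, mul_add, ih (by omega)]
      have e : khat (p n) = ((K (n + 1) : ℝ) + (K n : ℝ)) / 2 := by
        rw [← hfl n (by omega)]; rfl
      have e2 : P (n + 1) = P n + (K n - 3) := by
        simp only [P]; rw [Finset.sum_range_succ]
      rw [e, e2]; push_cast; ring
  have m1 := H.main hex m hm1 (by omega)
  have m2 := H.rev.main (fun k h0 h1 => by
    have := hex (s - k) (by omega) (by omega)
    simpa [x] using this.symm) (s - m) (by omega) (by omega)
  simp only [show s + 1 - (s - m) = m + 1 by omega, show s + 1 - 1 = s by omega,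
    show s - (s - m) = m by omega] at m2
  have z1 := hz 1 (by omega)
  have z2 := hz m (by omega)
  have z3 := hz (s - 1) (by omega)
  have q1 := H.pref m (by omega) (by omega)
  have q2 := H.pref (s - 1) (by omega) (by omega)
  rw [show s - 1 + 1 = s by omega] at q2
  have r1 : 2 * P (s - 1) + K (s - 1) - K 0 < 2 * P m + K m - K 0 := by omega
  have r2 : 2 * P m + K m - K 0 < 2 * P 1 + K 1 - K 0 := by omega
  have r1' := (Int.cast_lt (R := ℝ)).mpr r1
  have r2' := (Int.cast_lt (R := ℝ)).mpr r2
  constructor <;> linarith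
end
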